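/- arXiv:2411.00271 — 4 statements merged into one kernel-verified Lean document; each statement's English description precedes it below -/
import Mathlib

section
/- Under the standing assumptions (R Dedekind with torsion class group, O an order with conductor f, R/f finite, every class of Cl(R) containing a prime ideal coprime to f, O transfer Krull), assume |Cl(R)| ≠ 2. If P₁, P₂ are prime ideals of R coprime to f with [P₁] = −[P₂] in Cl(R), then the principal ideal P₁P₂ is generated by an element of O (up to R-units). -/
open scoped nonZeroDivisors

section MonoidDefs
variable {H B : Type*} [CommMonoid H] [CommMonoid B]

/-- The set of lengths of `a`: `{0}` for units, otherwise the set of `k` such that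
`a` is a product of `k` atoms (irreducible elements). -/
def lengthsSet (a : H) : Set ℕ :=
  {k | (IsUnit a ∧ k = 0) ∨
    (¬ IsUnit a ∧ ∃ l : Multiset H, Multiset.card l = k ∧ (∀ x ∈ l, Irreducible x) ∧ l.prod = a)}

/-- A transfer homomorphism: (T1) `B = θ(H)·B^×` and `θ⁻¹(B^×) = H^×`;
(T2) factorizations of `θ u` lift to factorizations of `u` up to associates. -/
def IsTransferHom (θ : H →* B) : Prop :=
  (∀ b : B, ∃ u : H, ∃ ε : Bˣ, b = θ u * ε) ∧
  (∀ u : H, IsUnit (θ u) → IsUnit u) ∧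
  (∀ u : H, ∀ b c : B, θ u = b * c →
    ∃ v w : H, u = v * w ∧ Associated (θ v) b ∧ Associated (θ w) c)

/-- A Krull monoid: a monoid admitting a divisor homomorphism into a
free abelian monoid. -/
def IsKrullMonoid (H : Type*) [CommMonoid H] : Prop :=
  ∃ (ι : Type) (d : H →* Multiplicative (ι →₀ ℕ)), ∀ a b : H, d a ∣ d b → a ∣ b

/-- Half-factorial: all factorizations of an element into atoms have the same length. -/
def IsHalfFactorial (A : Type*) [CommMonoid A] : Prop :=
  ∀ (a : A) (l m : Multiset A), (∀ x ∈ l, Irreducible x) → (∀ x ∈ m, Irreducible x) →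
    l.prod = a → m.prod = a → Multiset.card l = Multiset.card m

/-- An absolutely irreducible element: an atom all of whose powers factor uniquely
into atoms, up to associates. -/
def AbsolutelyIrreducible (a : H) : Prop :=
  Irreducible a ∧ ∀ n : ℕ, 0 < n → ∀ l m : Multiset H,
    (∀ x ∈ l, Irreducible x) → (∀ x ∈ m, Irreducible x) →
    l.prod = a ^ n → m.prod = a ^ n → Multiset.Rel Associated l m

end MonoidDefs

section RingDefs
variable {R : Type*} [CommRing R]

/-- The conductor of a subring `O ⊆ R`: the largest ideal of `R` contained in `O`. -/
def Subring.conductor (O : Subring R) : Ideal R where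
  carrier := {x | ∀ r : R, x * r ∈ O}
  add_mem' := by
    intro a b ha hb r
    have h : (a + b) * r = a * r + b * r := by ring
    rw [h]; exact O.add_mem (ha r) (hb r)
  zero_mem' := by intro r; simpa using O.zero_mem
  smul_mem' := by
    intro c x hx r
    have h : c • x * r = x * (c * r) := by simp [smul_eq_mul]; ring
    rw [h]; exact hx (c * r)

/-- `a` is a regular element modulo the ideal `f`. -/
def RegF (f : Ideal R) (a : R) : Prop := IsUnit (Ideal.Quotient.mk f a)

end RingDefs

section TK
variable {K : Type*} [CommRing K]

/-- `x` and `y` are associated within the submonoid `H` of `K`. -/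
def AssocIn (H : Submonoid K) (x y : K) : Prop :=
  ∃ ε ∈ H, (∃ ε' ∈ H, ε * ε' = 1) ∧ x = y * ε

end TK

variable {R₀ : Type*}

/-- `H` is a Krull overmonoid of `O^∙` inside the quotient field of `O` (which is the
quotient field of `R`), with `O^∙ ⊆ H ⊆ q(O^∙)`, such that the inclusion `O^∙ ↪ H`
is a transfer homomorphism; this witnesses that `O` is transfer Krull. -/
structure IsTKOvermonoid {R : Type*} [CommRing R] [IsDomain R] [IsDedekindDomain R]
    (O : Subring R) (H : Submonoid (FractionRing R)) : Prop where
  nonzero : ∀ x ∈ H, x ≠ 0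
  incl : ∀ a : R, a ∈ O → a ≠ 0 → algebraMap R (FractionRing R) a ∈ H
  inQuot : ∀ x ∈ H, ∃ a b : R, a ∈ O ∧ b ∈ O ∧ a ≠ 0 ∧ b ≠ 0 ∧
    x * algebraMap R (FractionRing R) b = algebraMap R (FractionRing R) a
  krull : IsKrullMonoid ↥H
  t1 : ∀ x ∈ H, ∃ a : R, a ∈ O ∧ a ≠ 0 ∧ ∃ ε ∈ H, (∃ ε' ∈ H, ε * ε' = 1) ∧
    x = algebraMap R (FractionRing R) a * ε
  t1' : ∀ a : R, a ∈ O → a ≠ 0 →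
    (∃ y ∈ H, algebraMap R (FractionRing R) a * y = 1) → ∃ b ∈ O, a * b = 1
  t2 : ∀ a : R, a ∈ O → a ≠ 0 → ∀ x ∈ H, ∀ y ∈ H,
    algebraMap R (FractionRing R) a = x * y →
    ∃ v w : R, v ∈ O ∧ w ∈ O ∧ a = v * w ∧
      AssocIn H (algebraMap R (FractionRing R) v) x ∧
      AssocIn H (algebraMap R (FractionRing R) w) y


section TKproof

open UniqueFactorizationMonoid

variable {R : Type*} [CommRing R] [IsDomain R] [IsDedekindDomain R]
  {O : Subring R} {H : Submonoid (FractionRing R)}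

theorem tk_conductor_mem {x : R} (hx : x ∈ O.conductor) : x ∈ O := by
  have := hx 1
  simpa using this

theorem tk_conductor_ne (hfg : Module.Finite ↥O R)
    (hfrac : ∀ r : R, ∃ a b : ↥O, (b : R) ≠ 0 ∧ (b : R) * r = (a : R)) :
    ∃ c ∈ O.conductor, c ≠ 0 := by
  classical
  obtain ⟨S, hS⟩ := hfg.fg_top
  choose a b hb hab using hfrac
  refine ⟨∏ s ∈ S, (b s : R), ?_, ?_⟩
  · intro r
    have hr : r ∈ Submodule.span ↥O (S : Set R) := by rw [hS]; trivial
    induction hr using Submodule.span_induction with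
    | mem x hx =>
      have hx' : x ∈ S := hx
      rw [← Finset.prod_erase_mul _ _ hx', mul_assoc, hab]
      exact O.mul_mem (O.prod_mem fun s _ => (b s).2) (a x).2
    | zero => simpa using O.zero_mem
    | add x y _ _ hx hy => rw [mul_add]; exact O.add_mem hx hy
    | smul t x _ hx =>
      have : (∏ s ∈ S, (b s : R)) * t • x = (t : R) * ((∏ s ∈ S, (b s : R)) * x) := by
        rw [Subring.smul_def, smul_eq_mul]; ring
      rw [this]; exact O.mul_mem t.2 hx
  · exact Finset.prod_ne_zero_iff.mpr fun s _ => hb s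

theorem tk_mem (hfg : Module.Finite ↥O R)
    (hfrac : ∀ r : R, ∃ a b : ↥O, (b : R) ≠ 0 ∧ (b : R) * r = (a : R))
    (hH : IsTKOvermonoid O H) (r : R) (hr : r ≠ 0) :
    algebraMap R (FractionRing R) r ∈ H := by
  obtain ⟨c, hc, hc0⟩ := tk_conductor_ne hfg hfrac
  obtain ⟨a, b, hb, hab⟩ := hfrac r
  have ha : (a : R) ≠ 0 := by rw [← hab]; exact mul_ne_zero hb hr
  obtain ⟨ι, d, hd⟩ := hH.krull
  let x : H := ⟨_, hH.incl a a.2 ha⟩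
  let y : H := ⟨_, hH.incl b b.2 hb⟩
  let z : H := ⟨_, hH.incl c (tk_conductor_mem hc) hc0⟩
  let t : ℕ → H := fun n => ⟨_, hH.incl (c * r ^ n) (hc _) (mul_ne_zero hc0 (pow_ne_zero _ hr))⟩
  have key : ∀ n, z * x ^ n = y ^ n * t n := by
    intro n
    apply Subtype.ext
    change algebraMap R (FractionRing R) c * (algebraMap R (FractionRing R) a) ^ n =
      (algebraMap R (FractionRing R) b) ^ n * algebraMap R (FractionRing R) (c * r ^ n)
    rw [← hab, map_mul, map_mul, map_pow]
    ring
  have key2 : ∀ i, (Multiplicative.toAdd (d y)) i ≤ (Multiplicative.toAdd (d x)) i := by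
    intro i
    have h1 := congrArg (fun u => (Multiplicative.toAdd (d u)) i)
      (key ((Multiplicative.toAdd (d z)) i + 1))
    simp only [map_mul, map_pow, toAdd_mul, toAdd_pow, Finsupp.add_apply, Finsupp.smul_apply,
      smul_eq_mul] at h1
    by_contra hlt
    push Not at hlt
    nlinarith
  have hdvd : d y ∣ d x := by
    refine ⟨Multiplicative.ofAdd (Multiplicative.toAdd (d x) - Multiplicative.toAdd (d y)), ?_⟩
    apply Multiplicative.toAdd.injective
    rw [toAdd_mul, toAdd_ofAdd]
    exact (add_tsub_cancel_of_le (Finsupp.le_def.mpr key2)).symm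
  obtain ⟨w, hw⟩ := hd _ _ hdvd
  have h2 := congrArg Subtype.val hw
  simp only [x, y, Submonoid.coe_mul] at h2
  rw [← hab, map_mul] at h2
  have h3 := mul_left_cancel₀ (by simpa using hb) h2
  rw [h3]; exact w.2

/-- Ideals generated by an element of `O`. -/
def TKo (O : Subring R) (I : Ideal R) : Prop := ∃ b ∈ O, Ideal.span {b} = I

/-- Ideals generated by elements associated in `H`. -/
def TKSim (H : Submonoid (FractionRing R)) (I J : Ideal R) : Prop :=
  ∃ a b : R, a ≠ 0 ∧ b ≠ 0 ∧ Ideal.span {a} = I ∧ Ideal.span {b} = J ∧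
    ∃ y ∈ H, ∃ z ∈ H, y * z = 1 ∧ algebraMap R (FractionRing R) a = algebraMap R _ b * y

/-- Nonzero principal ideals coprime to the conductor. -/
def TKGood (O : Subring R) (I : Ideal R) : Prop :=
  I ≠ ⊥ ∧ (∃ a, Ideal.span {a} = I) ∧ IsCoprime I O.conductor

theorem tk_pow_mem (hfin : Finite (R ⧸ O.conductor)) {a : R}
    (ha : IsCoprime (Ideal.span {a}) O.conductor) :
    ∃ n, 0 < n ∧ a ^ n - 1 ∈ O.conductor := by
  have hu : IsUnit (Ideal.Quotient.mk O.conductor a) := by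
    rw [Ideal.isCoprime_iff_exists] at ha
    obtain ⟨i, hi, j, hj, hij⟩ := ha
    obtain ⟨r, rfl⟩ := Ideal.mem_span_singleton'.mp hi
    apply IsUnit.of_mul_eq_one (Ideal.Quotient.mk O.conductor r)
    rw [← map_mul, ← map_one (Ideal.Quotient.mk O.conductor), Ideal.Quotient.eq]
    have : a * r - 1 = -j := by rw [← hij]; ring
    rw [this]; exact neg_mem hj
  obtain ⟨u, hu⟩ := hu
  obtain ⟨n, hn, h⟩ := (isOfFinOrder_of_finite u).exists_pow_eq_one
  refine ⟨n, hn, ?_⟩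
  rw [← Ideal.Quotient.eq, map_pow, ← hu, ← Units.val_pow_eq_pow_val, h]
  simp

theorem tk_mem_of {x : R} (hx : x - 1 ∈ O.conductor) : x ∈ O := by
  have := O.add_mem (tk_conductor_mem hx) O.one_mem
  simpa using this

theorem TKGood.mul {I J : Ideal R} (hI : TKGood O I) (hJ : TKGood O J) : TKGood O (I * J) := by
  obtain ⟨h1, ⟨a, rfl⟩, h2⟩ := hI
  obtain ⟨h3, ⟨b, rfl⟩, h4⟩ := hJ
  exact ⟨mul_ne_zero h1 h3, ⟨a * b, by rw [Ideal.span_singleton_mul_span_singleton]⟩,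
    h2.mul_left h4⟩

theorem TKo.mul {I J : Ideal R} (hI : TKo O I) (hJ : TKo O J) : TKo O (I * J) := by
  obtain ⟨a, ha, rfl⟩ := hI
  obtain ⟨b, hb, rfl⟩ := hJ
  exact ⟨a * b, O.mul_mem ha hb, by rw [Ideal.span_singleton_mul_span_singleton]⟩

theorem TKGood.pow {I : Ideal R} (hI : TKGood O I) (n : ℕ) : TKGood O (I ^ n) := by
  obtain ⟨h1, ⟨a, rfl⟩, h2⟩ := hI
  exact ⟨pow_ne_zero _ h1, ⟨a ^ n, by rw [Ideal.span_singleton_pow]⟩, h2.pow_left⟩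

theorem TKGood.exists_pow (hfin : Finite (R ⧸ O.conductor)) {I : Ideal R} (hI : TKGood O I) :
    ∃ n, 0 < n ∧ TKo O (I ^ n) := by
  obtain ⟨h1, ⟨a, rfl⟩, h2⟩ := hI
  obtain ⟨n, hn, h⟩ := tk_pow_mem hfin h2
  exact ⟨n, hn, a ^ n, tk_mem_of h, by rw [Ideal.span_singleton_pow]⟩

theorem TKGood.cancel {I J : Ideal R} (hI : TKGood O I) (h : TKGood O (I * J)) : TKGood O J := by
  obtain ⟨h1, ⟨a, rfl⟩, h2⟩ := hI
  obtain ⟨h3, ⟨b, hb⟩, h4⟩ := h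
  refine ⟨right_ne_zero_of_mul h3, ?_, h4.of_mul_left_right⟩
  have : b ∈ Ideal.span {a} * J := by rw [← hb]; exact Ideal.mem_span_singleton_self b
  obtain ⟨c, hc, rfl⟩ := Ideal.mem_span_singleton_mul.mp this
  refine ⟨c, ?_⟩
  rw [← Ideal.span_singleton_mul_span_singleton] at hb
  exact mul_left_cancel₀ h1 hb

theorem TKo.cancel (hfin : Finite (R ⧸ O.conductor)) {I J : Ideal R} (hg : TKGood O I)
    (hI : TKo O I) (h : TKo O (I * J)) : TKo O J := by
  obtain ⟨a, ha, rfl⟩ := hI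
  obtain ⟨b, hbO, hb⟩ := h
  have : b ∈ Ideal.span {a} * J := by rw [← hb]; exact Ideal.mem_span_singleton_self b
  obtain ⟨c, hc, rfl⟩ := Ideal.mem_span_singleton_mul.mp this
  rw [← Ideal.span_singleton_mul_span_singleton] at hb
  refine ⟨c, ?_, mul_left_cancel₀ hg.1 hb⟩
  obtain ⟨n, hn, h⟩ := tk_pow_mem hfin hg.2.2
  obtain ⟨k, rfl⟩ : ∃ k, n = k + 1 := ⟨n - 1, by omega⟩
  have e : c = a ^ k * (a * c) - (a ^ (k + 1) - 1) * c := by ring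
  rw [e]
  exact O.sub_mem (O.mul_mem (O.pow_mem ha k) hbO) (h c)

theorem tk_unit_of (hfin : Finite (R ⧸ O.conductor)) (hH : IsTKOvermonoid O H) {b : R}
    (hb0 : b ≠ 0) (hb : IsCoprime (Ideal.span {b}) O.conductor) {y : FractionRing R} (hy : y ∈ H)
    (h : algebraMap R _ b * y = 1) : IsUnit b := by
  obtain ⟨n, hn, hn'⟩ := tk_pow_mem hfin hb
  obtain ⟨c, _, hc⟩ := hH.t1' (b ^ n) (tk_mem_of hn') (pow_ne_zero _ hb0)
    ⟨y ^ n, H.pow_mem hy n, by rw [map_pow, ← mul_pow, h, one_pow]⟩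
  exact (isUnit_pow_iff hn.ne').mp (IsUnit.of_mul_eq_one _ hc)

theorem tk_unit_mem (hR : ∀ r : R, r ≠ 0 → algebraMap R (FractionRing R) r ∈ H) {b : R}
    (hb : IsUnit b) : ∃ y ∈ H, algebraMap R (FractionRing R) b * y = 1 := by
  obtain ⟨u, rfl⟩ := hb
  refine ⟨algebraMap R _ (↑u⁻¹ : R), hR _ u⁻¹.ne_zero, ?_⟩
  rw [← map_mul]; simp

theorem TKSim.symm {I J : Ideal R} (h : TKSim H I J) : TKSim H J I := by
  obtain ⟨a, b, ha, hb, rfl, rfl, y, hy, z, hz, hyz, e⟩ := h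
  refine ⟨b, a, hb, ha, rfl, rfl, z, hz, y, hy, by rw [mul_comm, hyz], ?_⟩
  rw [e, mul_assoc, hyz, mul_one]

theorem TKSim.refl (I : Ideal R) (h : TKGood O I) : TKSim H I I := by
  obtain ⟨h1, ⟨a, rfl⟩, h2⟩ := h
  have ha : a ≠ 0 := by rintro rfl; simp at h1
  exact ⟨a, a, ha, ha, rfl, rfl, 1, H.one_mem, 1, H.one_mem, by simp, by simp⟩

theorem TKSim.mul {I J I' J' : Ideal R} (h : TKSim H I J) (h' : TKSim H I' J') :
    TKSim H (I * I') (J * J') := by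
  obtain ⟨a, b, ha, hb, rfl, rfl, y, hy, z, hz, hyz, e⟩ := h
  obtain ⟨a', b', ha', hb', rfl, rfl, y', hy', z', hz', hyz', e'⟩ := h'
  refine ⟨a * a', b * b', mul_ne_zero ha ha', mul_ne_zero hb hb',
    by rw [Ideal.span_singleton_mul_span_singleton],
    by rw [Ideal.span_singleton_mul_span_singleton], y * y', H.mul_mem hy hy', z * z',
    H.mul_mem hz hz', ?_, ?_⟩
  · calc y * y' * (z * z') = (y * z) * (y' * z') := by ring
      _ = 1 := by rw [hyz, hyz', one_mul]
  · rw [map_mul, map_mul, e, e']; ring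

theorem TKSim.pow {I J : Ideal R} (h : TKSim H I J) (n : ℕ) : TKSim H (I ^ n) (J ^ n) := by
  obtain ⟨a, b, ha, hb, rfl, rfl, y, hy, z, hz, hyz, e⟩ := h
  refine ⟨a ^ n, b ^ n, pow_ne_zero _ ha, pow_ne_zero _ hb, by rw [Ideal.span_singleton_pow],
    by rw [Ideal.span_singleton_pow], y ^ n, H.pow_mem hy _, z ^ n, H.pow_mem hz _, ?_, ?_⟩
  · rw [← mul_pow, hyz, one_pow]
  · rw [map_pow, map_pow, e, mul_pow]

/-- change of generators -/
theorem TKSim.gen (hR : ∀ r : R, r ≠ 0 → algebraMap R (FractionRing R) r ∈ H) {a b : R}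
    (h : TKSim H (Ideal.span {a}) (Ideal.span {b})) : a ≠ 0 ∧ b ≠ 0 ∧
    ∃ y ∈ H, ∃ z ∈ H, y * z = 1 ∧ algebraMap R (FractionRing R) a = algebraMap R _ b * y := by
  obtain ⟨a', b', ha, hb, e1, e2, y, hy, z, hz, hyz, e⟩ := h
  obtain ⟨u, rfl⟩ := Ideal.span_singleton_eq_span_singleton.mp e1
  obtain ⟨v, rfl⟩ := Ideal.span_singleton_eq_span_singleton.mp e2
  refine ⟨mul_ne_zero ha u.ne_zero, mul_ne_zero hb v.ne_zero,
    y * algebraMap R _ (u : R) * algebraMap R _ (↑v⁻¹ : R),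
    H.mul_mem (H.mul_mem hy (hR _ u.ne_zero)) (hR _ v⁻¹.ne_zero),
    z * algebraMap R _ (↑u⁻¹ : R) * algebraMap R _ (v : R),
    H.mul_mem (H.mul_mem hz (hR _ u⁻¹.ne_zero)) (hR _ v.ne_zero), ?_, ?_⟩
  · have hu : algebraMap R (FractionRing R) (u : R) * algebraMap R _ (↑u⁻¹ : R) = 1 := by
      rw [← map_mul]; simp
    have hv : algebraMap R (FractionRing R) (v : R) * algebraMap R _ (↑v⁻¹ : R) = 1 := by
      rw [← map_mul]; simp
    linear_combination (algebraMap R (FractionRing R) (u : R) * algebraMap R _ (↑u⁻¹ : R)) *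
      (algebraMap R (FractionRing R) (v : R) * algebraMap R _ (↑v⁻¹ : R)) * hyz +
      (algebraMap R (FractionRing R) (v : R) * algebraMap R _ (↑v⁻¹ : R)) * hu + hv
  · have hv : algebraMap R (FractionRing R) (v : R) * algebraMap R _ (↑v⁻¹ : R) = 1 := by
      rw [← map_mul]; simp
    rw [map_mul, map_mul]
    linear_combination algebraMap R _ (u : R) * e -
      algebraMap R _ b' * y * algebraMap R _ (u : R) * hv

theorem TKSim.cancel (hR : ∀ r : R, r ≠ 0 → algebraMap R (FractionRing R) r ∈ H)
    {I J K : Ideal R} (hI : TKGood O I) (hJ : TKGood O J) (hK : TKGood O K)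
    (h : TKSim H (I * J) (I * K)) : TKSim H J K := by
  obtain ⟨-, ⟨a, rfl⟩, -⟩ := hI
  obtain ⟨-, ⟨b, rfl⟩, -⟩ := hJ
  obtain ⟨-, ⟨c, rfl⟩, -⟩ := hK
  rw [Ideal.span_singleton_mul_span_singleton, Ideal.span_singleton_mul_span_singleton] at h
  obtain ⟨h1, h2, y, hy, z, hz, hyz, e⟩ := h.gen hR
  refine ⟨b, c, right_ne_zero_of_mul h1, right_ne_zero_of_mul h2, rfl, rfl, y, hy, z, hz, hyz, ?_⟩
  have h0 : algebraMap R (FractionRing R) a ≠ 0 := by simpa using left_ne_zero_of_mul h1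
  apply mul_left_cancel₀ h0
  rw [← map_mul, e, map_mul, mul_assoc]

theorem TKSim.eq_top (hfin : Finite (R ⧸ O.conductor)) (hH : IsTKOvermonoid O H)
    (hR : ∀ r : R, r ≠ 0 → algebraMap R (FractionRing R) r ∈ H)
    {I J : Ideal R} (hI : TKGood O I) (hIJ : TKGood O (I * J))
    (h : TKSim H (I * J) I) : J = 1 := by
  obtain ⟨hJ0, ⟨b, rfl⟩, hJ⟩ := hI.cancel hIJ
  obtain ⟨-, ⟨a, rfl⟩, -⟩ := hI
  rw [Ideal.span_singleton_mul_span_singleton] at h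
  obtain ⟨h1, h2, y, hy, z, hz, hyz, e⟩ := h.gen hR
  have h0 : algebraMap R (FractionRing R) a ≠ 0 := by simpa using h2
  rw [map_mul] at e
  have e' := mul_left_cancel₀ h0 e
  have := tk_unit_of hfin hH (right_ne_zero_of_mul h1) hJ hz (by rw [e', hyz])
  rw [Ideal.one_eq_top]
  exact Ideal.span_singleton_eq_top.mpr this

theorem tk_transfer (hH : IsTKOvermonoid O H)
    (hR : ∀ r : R, r ≠ 0 → algebraMap R (FractionRing R) r ∈ H)
    {A A' : Ideal R} (hA : TKGood O A) (hA' : TKGood O A') (h : TKo O (A * A')) :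
    ∃ V W, TKo O V ∧ TKo O W ∧ V * W = A * A' ∧ TKSim H V A ∧ TKSim H W A' := by
  obtain ⟨h0, ⟨a, rfl⟩, -⟩ := hA
  obtain ⟨h0', ⟨a', rfl⟩, -⟩ := hA'
  have ha : a ≠ 0 := by rintro rfl; simp at h0
  have ha' : a' ≠ 0 := by rintro rfl; simp at h0'
  obtain ⟨b, hb, e⟩ := h
  rw [Ideal.span_singleton_mul_span_singleton] at e
  obtain ⟨u, hu⟩ := (Ideal.span_singleton_eq_span_singleton.mp e).symm
  have hb0 : b ≠ 0 := by rw [← hu]; exact mul_ne_zero (mul_ne_zero ha ha') u.ne_zero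
  have hau : a' * u ≠ 0 := mul_ne_zero ha' u.ne_zero
  obtain ⟨v, w, hv, hw, hvw, ⟨ε, hε, ⟨ε', hε', hh⟩, e1⟩, ⟨δ, hδ, ⟨δ', hδ', hh'⟩, e2⟩⟩ :=
    hH.t2 b hb hb0 _ (hR a ha) _ (hR (a' * u) hau) (by rw [← hu, ← map_mul, mul_assoc])
  have hv0 : v ≠ 0 := by rintro rfl; simp [hb0] at hvw
  have hw0 : w ≠ 0 := by rintro rfl; simp [hb0] at hvw
  refine ⟨_, _, ⟨v, hv, rfl⟩, ⟨w, hw, rfl⟩, ?_, ⟨v, a, hv0, ha, rfl, rfl, ε, hε, ε', hε', hh, e1⟩,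
    ⟨w, a' * u, hw0, hau, rfl, ?_, δ, hδ, δ', hδ', hh', e2⟩⟩
  · rw [Ideal.span_singleton_mul_span_singleton, Ideal.span_singleton_mul_span_singleton,
      ← hvw, e]
  · exact Ideal.span_singleton_mul_right_unit u.isUnit a'

/-- number of prime factors -/
noncomputable def tkCard (I : Ideal R) : ℕ := Multiset.card (normalizedFactors I)

theorem tkCard_mul {I J : Ideal R} (hI : I ≠ 0) (hJ : J ≠ 0) :
    tkCard (I * J) = tkCard I + tkCard J := by
  rw [tkCard, normalizedFactors_mul hI hJ, Multiset.card_add, tkCard, tkCard]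

theorem tkCard_pow {I : Ideal R} (n : ℕ) :
    tkCard (I ^ n) = n * tkCard I := by
  rw [tkCard, normalizedFactors_pow, Multiset.card_nsmul, tkCard]

theorem tkCard_prime {P : Ideal R} (hP : Prime P) : tkCard P = 1 := by
  rw [tkCard, normalizedFactors_irreducible hP.irreducible, Multiset.card_singleton]

theorem tkCard_two {v : R} (hv0 : v ≠ 0) (hv : ¬ IsUnit v)
    (hP : ∀ P : Ideal R, Prime P → P ∣ Ideal.span {v} → ∀ a, Ideal.span {a} ≠ P) :
    2 ≤ tkCard (Ideal.span {v}) := by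
  have h0 : Ideal.span {v} ≠ 0 := by simpa using hv0
  by_contra hlt
  have hnf := prod_normalizedFactors_eq h0
  have : tkCard (Ideal.span {v}) = 0 ∨ tkCard (Ideal.span {v}) = 1 := by omega
  rcases this with h | h
  · rw [tkCard, Multiset.card_eq_zero] at h
    rw [h] at hnf
    simp at hnf
    exact hv (Ideal.span_singleton_eq_top.mp hnf.symm)
  · rw [tkCard, Multiset.card_eq_one] at h
    obtain ⟨P, hPe⟩ := h
    have hpr : Prime P := prime_of_normalized_factor P (by rw [hPe]; simp)
    rw [hPe] at hnf
    simp at hnf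
    exact hP P hpr (by rw [hnf]) v hnf.symm

theorem tk_len_aux (hH : IsTKOvermonoid O H)
    (hR : ∀ r : R, r ≠ 0 → algebraMap R (FractionRing R) r ∈ H) (l : Multiset R)
    (hl : ∀ b ∈ l, b ≠ 0 ∧ ∀ y ∈ H, algebraMap R _ b * y ≠ 1) :
    ∀ a ∈ O, a ≠ 0 → (∀ P : Ideal R, Prime P → P ∣ Ideal.span {a} → ∀ c, Ideal.span {c} ≠ P) →
    ∀ y ∈ H, algebraMap R (FractionRing R) a = algebraMap R _ l.prod * y →
    2 * Multiset.card l ≤ tkCard (Ideal.span {a}) := by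
  induction l using Multiset.induction with
  | empty => intros; simp
  | cons b l ih =>
    intro a ha ha0 hP y hy e
    have hb := hl b (by simp)
    have hl' : ∀ b ∈ l, b ≠ 0 ∧ ∀ y ∈ H, algebraMap R _ b * y ≠ 1 :=
      fun b hb => hl b (by simp [hb])
    have hl0 : l.prod ≠ 0 := by
      intro h
      rw [Multiset.prod_eq_zero_iff] at h
      exact (hl' 0 h).1 rfl
    obtain ⟨v, w, hv, hw, hvw, ⟨ε, hε, ⟨ε', hε', hh⟩, e1⟩, ⟨δ, hδ, -, e2⟩⟩ :=
      hH.t2 a ha ha0 _ (hR b hb.1) _ (H.mul_mem (hR _ hl0) hy)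
        (by rw [e, Multiset.prod_cons, map_mul, mul_assoc])
    have hv0 : v ≠ 0 := by rintro rfl; simp [ha0] at hvw
    have hw0 : w ≠ 0 := by rintro rfl; simp [ha0] at hvw
    have es : Ideal.span {a} = Ideal.span {v} * Ideal.span {w} := by
      rw [Ideal.span_singleton_mul_span_singleton, hvw]
    have h1 := ih hl' w hw hw0 (fun P hp hd => hP P hp (by rw [es]; exact hd.mul_left _))
      (y * δ) (H.mul_mem hy hδ) (by rw [e2, mul_assoc])
    have h2 : 2 ≤ tkCard (Ideal.span {v}) := by
      refine tkCard_two hv0 ?_ (fun P hp hd => hP P hp (by rw [es]; exact hd.mul_right _))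
      intro hu
      obtain ⟨z, hz, hz1⟩ := tk_unit_mem hR hu
      refine hb.2 (ε * z) (H.mul_mem hε hz) ?_
      rw [← mul_assoc, ← e1, hz1]
    rw [es, tkCard_mul (by simpa using hv0) (by simpa using hw0), Multiset.card_cons]
    omega

theorem tk_len (hfin : Finite (R ⧸ O.conductor)) (hH : IsTKOvermonoid O H)
    (hR : ∀ r : R, r ≠ 0 → algebraMap R (FractionRing R) r ∈ H)
    {A : Ideal R} (hA : TKGood O A)
    (hP : ∀ P : Ideal R, Prime P → P ∣ A → ∀ c, Ideal.span {c} ≠ P)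
    (l : Multiset (Ideal R)) (hl : ∀ B ∈ l, TKGood O B ∧ B ≠ 1) (h : TKSim H A l.prod) :
    2 * Multiset.card l ≤ tkCard A := by
  classical
  obtain ⟨n, hn, b, hbO, hb⟩ := hA.exists_pow hfin
  have hgen : ∀ B : Ideal R, ∃ c, B ∈ l → Ideal.span {c} = B := by
    intro B
    by_cases hB : B ∈ l
    · obtain ⟨c, hc⟩ := (hl B hB).1.2.1
      exact ⟨c, fun _ => hc⟩
    · exact ⟨0, fun h => absurd h hB⟩
  choose g hg using hgen
  have hsp : Ideal.span {(l.map g).prod} = l.prod := by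
    rw [← Ideal.multiset_prod_span_singleton, Multiset.map_map]
    simp only [Function.comp_def]
    rw [Multiset.map_congr rfl hg, Multiset.map_id']
  have hsim : TKSim H (Ideal.span {b}) (Ideal.span {(n • (l.map g)).prod}) := by
    rw [hb, Multiset.prod_nsmul, ← Ideal.span_singleton_pow, hsp]
    exact h.pow n
  obtain ⟨hb0, -, y, hy, z, hz, hyz, e⟩ := hsim.gen hR
  have := tk_len_aux hH hR (n • (l.map g)) ?_ b hbO hb0 ?_ y hy e
  · rw [hb, tkCard_pow, Multiset.card_nsmul, Multiset.card_map] at this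
    nlinarith
  · intro c hc
    have hc := Multiset.mem_of_mem_nsmul hc
    obtain ⟨B, hB, rfl⟩ := Multiset.mem_map.mp hc
    have h1 := hl B hB
    have h2 := hg B hB
    have h3 : g B ≠ 0 := by
      intro h0
      rw [h0] at h2
      exact h1.1.1 (by rw [← h2]; simp)
    refine ⟨h3, fun y hy hy1 => h1.2 ?_⟩
    rw [← h2, Ideal.one_eq_top]
    exact Ideal.span_singleton_eq_top.mpr
      (tk_unit_of hfin hH h3 (by rw [h2]; exact h1.1.2.2) hy hy1)
  · intro P hp hd
    rw [hb] at hd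
    exact hP P hp (hp.dvd_of_dvd_pow hd)


theorem TKGood.of_mul {V W B : Ideal R} (hV : TKo O V) (hB : TKGood O B) (h : V * W = B) :
    TKGood O V := by
  obtain ⟨v, hv, hv'⟩ := hV
  subst h
  exact ⟨left_ne_zero_of_mul hB.1, ⟨v, hv'⟩, hB.2.2.of_mul_left_left⟩

theorem tk_pow_prime (hfin : Finite (R ⧸ O.conductor)) (hH : IsTKOvermonoid O H)
    (hR : ∀ r : R, r ≠ 0 → algebraMap R (FractionRing R) r ∈ H)
    {P : Ideal R} (hP : Prime P) (m : ℕ) (hA : TKGood O (P ^ m)) : TKo O (P ^ m) := by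
  obtain ⟨n, hn, h⟩ := hA.exists_pow hfin
  obtain ⟨k, rfl⟩ : ∃ k, n = k + 1 := ⟨n - 1, by omega⟩
  rw [pow_succ'] at h
  obtain ⟨V, W, hV, hW, hVW, s1, s2⟩ := tk_transfer hH hR hA (hA.pow k) h
  have hgV : TKGood O V := TKGood.of_mul hV (hA.mul (hA.pow k)) hVW
  have hdvd : V ∣ P ^ (m + m * k) := by
    rw [pow_add, pow_mul, ← hVW]; exact dvd_mul_right _ _
  obtain ⟨i, -, hi⟩ := (dvd_prime_pow hP _).mp hdvd
  rw [associated_iff_eq] at hi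
  subst hi
  rcases le_total i m with hle | hle
  · have e : P ^ m = P ^ i * P ^ (m - i) := by rw [← pow_add]; congr 1; omega
    have := TKSim.eq_top hfin hH hR hgV (J := P ^ (m - i)) (by rw [← e]; exact hA)
      (by rw [← e]; exact s1.symm)
    rw [e, this, mul_one]; exact hV
  · have e : P ^ i = P ^ m * P ^ (i - m) := by rw [← pow_add]; congr 1; omega
    have := TKSim.eq_top hfin hH hR hA (J := P ^ (i - m)) (by rw [← e]; exact hgV)
      (by rw [← e]; exact s1)
    rw [this, mul_one] at e
    rw [← e]; exact hV

theorem tk_pair_aux (hfin : Finite (R ⧸ O.conductor)) (hH : IsTKOvermonoid O H)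
    (hR : ∀ r : R, r ≠ 0 → algebraMap R (FractionRing R) r ∈ H)
    {P Q : Ideal R} (hP : Prime P) (hQ : Prime Q) (hA : TKGood O (P * Q))
    (hnP : ∀ a, Ideal.span {a} ≠ P) (hQ2 : ∀ a, Ideal.span {a} ≠ Q ^ 2)
    (j : ℕ) (hj : TKGood O (Q ^ j)) (hs : TKSim H (Q ^ j) (P * Q)) : False := by
  have hPQ1 : P * Q ≠ 1 := fun h => hP.not_isUnit (IsUnit.of_mul_eq_one _ h)
  rcases Nat.lt_or_ge j 2 with hj2 | hj2
  · interval_cases j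
    · have := TKSim.eq_top hfin hH hR hj (J := P * Q) (by simpa using hA)
        (by simpa using hs.symm)
      exact hPQ1 this
    · have := TKSim.eq_top hfin hH hR hj (J := P) (by simpa [mul_comm] using hA)
        (by simpa [mul_comm] using hs.symm)
      exact hP.not_isUnit (by rw [this]; exact isUnit_one)
  · obtain ⟨k, rfl⟩ : ∃ k, j = k + 1 := ⟨j - 1, by omega⟩
    have hPj : TKGood O (P ^ (k + 1)) := by
      refine TKGood.cancel hj ?_
      rw [← mul_pow, mul_comm Q P]; exact hA.pow _
    have h1 := hs.symm.pow (k + 1)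
    rw [mul_pow, mul_comm, pow_succ' (Q ^ (k + 1))] at h1
    have h2 := TKSim.cancel hR hj hPj (hj.pow k) h1
    have h3 := tk_len hfin hH hR hPj ?_ (Multiset.replicate k (Q ^ (k + 1))) ?_
      (by rw [Multiset.prod_replicate]; exact h2)
    · rw [Multiset.card_replicate, tkCard_pow, tkCard_prime hP] at h3
      have : k = 1 := by omega
      subst this
      obtain ⟨-, ⟨a, ha⟩, -⟩ := hj
      exact hQ2 a ha
    · intro P' hP' hd c hc
      have := hP'.dvd_of_dvd_pow hd
      rw [Prime.dvd_prime_iff_associated hP' hP, associated_iff_eq] at this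
      subst this
      exact hnP c hc
    · intro B hB
      rw [Multiset.eq_of_mem_replicate hB]
      refine ⟨hj, fun h => hQ.not_isUnit ?_⟩
      exact (isUnit_pow_iff (Nat.succ_ne_zero k)).mp (by rw [h]; exact isUnit_one)

theorem tk_pair (hfin : Finite (R ⧸ O.conductor)) (hH : IsTKOvermonoid O H)
    (hR : ∀ r : R, r ≠ 0 → algebraMap R (FractionRing R) r ∈ H)
    {P Q : Ideal R} (hP : Prime P) (hQ : Prime Q) (hA : TKGood O (P * Q))
    (hnP : ∀ a, Ideal.span {a} ≠ P) (hnQ : ∀ a, Ideal.span {a} ≠ Q)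
    (hP2 : ∀ a, Ideal.span {a} ≠ P ^ 2) (hQ2 : ∀ a, Ideal.span {a} ≠ Q ^ 2) :
    TKo O (P * Q) := by
  obtain ⟨n, hn, h⟩ := hA.exists_pow hfin
  obtain ⟨k, rfl⟩ : ∃ k, n = k + 1 := ⟨n - 1, by omega⟩
  rw [pow_succ'] at h
  obtain ⟨V, W, hV, hW, hVW, s1, s2⟩ := tk_transfer hH hR hA (hA.pow k) h
  have hgV : TKGood O V := TKGood.of_mul hV (hA.mul (hA.pow k)) hVW
  have hdvd : V ∣ P ^ (k + 1) * Q ^ (k + 1) := by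
    rw [← mul_pow, pow_succ', ← hVW]; exact dvd_mul_right _ _
  obtain ⟨V1, V2, hd1, hd2, rfl⟩ := exists_dvd_and_dvd_of_dvd_mul hdvd
  obtain ⟨i, -, hi⟩ := (dvd_prime_pow hP _).mp hd1
  obtain ⟨j, -, hj⟩ := (dvd_prime_pow hQ _).mp hd2
  rw [associated_iff_eq] at hi hj
  subst hi hj
  rcases Nat.eq_zero_or_pos i with rfl | hi
  · rw [pow_zero, one_mul] at hgV s1
    exact (tk_pair_aux hfin hH hR hP hQ hA hnP hQ2 j hgV s1).elim
  rcases Nat.eq_zero_or_pos j with rfl | hj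
  · rw [pow_zero, mul_one] at hgV s1
    rw [mul_comm] at hA s1
    exact (tk_pair_aux hfin hH hR hQ hP hA hnQ hP2 i hgV s1).elim
  obtain ⟨i, rfl⟩ : ∃ k, i = k + 1 := ⟨i - 1, by omega⟩
  obtain ⟨j, rfl⟩ : ∃ k, j = k + 1 := ⟨j - 1, by omega⟩
  have e : P ^ (i + 1) * Q ^ (j + 1) = P * Q * (P ^ i * Q ^ j) := by ring
  have := TKSim.eq_top hfin hH hR hA (J := P ^ i * Q ^ j) (by rw [← e]; exact hgV)
      (by rw [← e]; exact s1)
  rw [this, mul_one] at e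
  rw [← e]; exact hV

theorem tk_split {p V W B : Ideal R} (hp : Prime p) (h : V * W = p * B) :
    ∃ b : Bool, ∃ V' W', V = cond b p 1 * V' ∧ W = cond b 1 p * W' ∧ V' * W' = B := by
  rcases hp.dvd_or_dvd (show p ∣ V * W by rw [h]; exact dvd_mul_right _ _) with h1 | h1
  · obtain ⟨V', rfl⟩ := h1
    refine ⟨true, V', W, rfl, by simp, ?_⟩
    rw [mul_assoc] at h
    exact mul_left_cancel₀ hp.ne_zero h
  · obtain ⟨W', rfl⟩ := h1
    refine ⟨false, V, W', by simp, rfl, ?_⟩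
    rw [mul_left_comm] at h
    exact mul_left_cancel₀ hp.ne_zero h

theorem tk_group {G : Type*} [AddCommGroup G] (g h h' : G) (h2 : g + g = 0) (hg : g ≠ 0)
    (hh : h ≠ 0) (hhg : h ≠ g) (e : g + h + h' = 0) (b0 b1 b2 b3 b4 b5 : Bool)
    (hc : b0.toNat + (b1.toNat + (b2.toNat + (b3.toNat + (b4.toNat + b5.toNat)))) = 3)
    (hs : cond b0 g 0 + (cond b1 g 0 + (cond b2 h 0 + (cond b3 (-h) 0 + (cond b4 h' 0 +
      cond b5 (-h') 0)))) = 0) :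
    b0 ≠ b1 ∧ b2 ≠ b3 ∧ b4 ≠ b5 ∧ (b2 = b4 ∨ h + h = 0) := by
  obtain rfl : h' = -g - h := by rw [← sub_eq_zero, ← e]; abel
  have key0 : ∀ c b : ℤ, Even c → c • g + b • h = 0 → b • h = 0 := by
    intro c b hc hx
    obtain ⟨a, rfl⟩ := hc
    have h3 : (a + a) • g = 0 := by
      rw [add_smul, ← smul_add, h2, smul_zero]
    rwa [h3, zero_add] at hx
  have key1 : ∀ c b : ℤ, Odd c → c • g + b • h = 0 → b • h = g := by
    intro c b hc hx
    obtain ⟨a, rfl⟩ := hc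
    have h3 : (2 * a) • g = 0 := by
      rw [mul_comm, mul_smul, two_smul, h2, smul_zero]
    rw [add_smul, h3, zero_add, one_smul] at hx
    have : b • h = -g := by rw [eq_neg_iff_add_eq_zero, add_comm]; exact hx
    rw [this, neg_eq_iff_add_eq_zero]; exact h2
  have hng : -g = g := by rw [neg_eq_iff_add_eq_zero]; exact h2
  have hnh : -h ≠ g := by
    intro hx
    apply hhg
    rw [← hng, ← hx, neg_neg]
  have hnh0 : -h ≠ 0 := by simpa using hh
  have hnn : ∀ x : G, -x = 0 → x = 0 := fun x hx => by simpa using hx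
  cases b0 <;> cases b1 <;> cases b2 <;> cases b3 <;> cases b4 <;> cases b5 <;>
    simp only [Bool.toNat_true, Bool.toNat_false, cond_true, cond_false] at hc hs ⊢ <;>
    first
    | omega
    | (refine ⟨Bool.noConfusion, Bool.noConfusion, Bool.noConfusion, ?_⟩
       first
       | exact Or.inl rfl
       | exact Or.inl trivial
       | (right; rw [← two_smul ℤ h]; refine key0 (0) 2 (by decide) ?_; refine Eq.trans ?_ hs; module)
       | (right; rw [← two_smul ℤ h]; refine key0 (2) 2 (by decide) ?_; refine Eq.trans ?_ hs; module)
       | (right; rw [← two_smul ℤ h]; refine key0 (-2) 2 (by decide) ?_; refine Eq.trans ?_ hs; module)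
       | (right; apply hnn; rw [← two_smul ℤ h, ← neg_smul]; refine key0 (0) (-2) (by decide) ?_; refine Eq.trans ?_ hs; module)
       | (right; apply hnn; rw [← two_smul ℤ h, ← neg_smul]; refine key0 (2) (-2) (by decide) ?_; refine Eq.trans ?_ hs; module)
       | (right; apply hnn; rw [← two_smul ℤ h, ← neg_smul]; refine key0 (-2) (-2) (by decide) ?_; refine Eq.trans ?_ hs; module))
    | (exfalso
       first
       | (refine hh ?_; rw [← one_smul ℤ h]; refine key0 (0) 1 (by decide) ?_; refine Eq.trans ?_ hs; module)
       | (refine hnh0 ?_; rw [← neg_one_smul ℤ h]; refine key0 (0) (-1) (by decide) ?_; refine Eq.trans ?_ hs; module)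
       | (refine hh ?_; rw [← one_smul ℤ h]; refine key0 (2) 1 (by decide) ?_; refine Eq.trans ?_ hs; module)
       | (refine hnh0 ?_; rw [← neg_one_smul ℤ h]; refine key0 (2) (-1) (by decide) ?_; refine Eq.trans ?_ hs; module)
       | (refine hh ?_; rw [← one_smul ℤ h]; refine key0 (-2) 1 (by decide) ?_; refine Eq.trans ?_ hs; module)
       | (refine hnh0 ?_; rw [← neg_one_smul ℤ h]; refine key0 (-2) (-1) (by decide) ?_; refine Eq.trans ?_ hs; module)
       | (refine hhg ?_; rw [← one_smul ℤ h]; refine key1 (1) 1 (by decide) ?_; refine Eq.trans ?_ hs; module)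
       | (refine hnh ?_; rw [← neg_one_smul ℤ h]; refine key1 (1) (-1) (by decide) ?_; refine Eq.trans ?_ hs; module)
       | (refine hg ?_; rw [← zero_smul ℤ h]; symm; refine key1 (1) 0 (by decide) ?_; refine Eq.trans ?_ hs; module)
       | (refine hhg ?_; rw [← one_smul ℤ h]; refine key1 (-1) 1 (by decide) ?_; refine Eq.trans ?_ hs; module)
       | (refine hnh ?_; rw [← neg_one_smul ℤ h]; refine key1 (-1) (-1) (by decide) ?_; refine Eq.trans ?_ hs; module)
       | (refine hg ?_; rw [← zero_smul ℤ h]; symm; refine key1 (-1) 0 (by decide) ?_; refine Eq.trans ?_ hs; module)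
       | (refine hhg ?_; rw [← one_smul ℤ h]; refine key1 (3) 1 (by decide) ?_; refine Eq.trans ?_ hs; module)
       | (refine hnh ?_; rw [← neg_one_smul ℤ h]; refine key1 (3) (-1) (by decide) ?_; refine Eq.trans ?_ hs; module)
       | (refine hg ?_; rw [← zero_smul ℤ h]; symm; refine key1 (3) 0 (by decide) ?_; refine Eq.trans ?_ hs; module))


open Classical in
/-- class of an ideal (junk value for the zero ideal) -/
noncomputable def tkcl (I : Ideal R) : ClassGroup R :=
  if h : I ∈ nonZeroDivisors (Ideal R) then ClassGroup.mk0 ⟨I, h⟩ else 1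

theorem tkcl_eq {I : Ideal R} (h : I ∈ nonZeroDivisors (Ideal R)) :
    tkcl I = ClassGroup.mk0 ⟨I, h⟩ := by rw [tkcl, dif_pos h]

theorem tkcl_mul {I J : Ideal R} (hI : I ≠ 0) (hJ : J ≠ 0) :
    tkcl (I * J) = tkcl I * tkcl J := by
  have h1 := mem_nonZeroDivisors_of_ne_zero hI
  have h2 := mem_nonZeroDivisors_of_ne_zero hJ
  rw [tkcl_eq h1, tkcl_eq h2, tkcl_eq (mul_mem h1 h2), ← map_mul]
  rfl

theorem tkcl_one : tkcl (1 : Ideal R) = 1 := by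
  rw [tkcl_eq (one_mem _)]
  exact map_one _

theorem tkcl_iff {I : Ideal R} (hI : I ≠ 0) : tkcl I = 1 ↔ ∃ a, Ideal.span {a} = I := by
  rw [tkcl_eq (mem_nonZeroDivisors_of_ne_zero hI), ClassGroup.mk0_eq_one_iff]
  constructor
  · rintro ⟨a, ha⟩
    exact ⟨a, ha.symm⟩
  · rintro ⟨a, ha⟩
    exact ⟨a, ha.symm⟩

theorem tkcl_cond {p : Ideal R} (b : Bool) : tkcl (cond b p 1) = cond b (tkcl p) 1 := by
  cases b
  · exact tkcl_one
  · rfl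

theorem tk_cond_ne {p : Ideal R} (hp : Prime p) (b : Bool) : cond b p 1 ≠ 0 := by
  cases b
  · exact one_ne_zero
  · exact hp.ne_zero

theorem tkCard_one : tkCard (1 : Ideal R) = 0 := by
  rw [tkCard, normalizedFactors_one, Multiset.card_zero]

theorem tkCard_cond {p : Ideal R} (hp : Prime p) (b : Bool) :
    tkCard (cond b p 1) = b.toNat := by
  cases b
  · exact tkCard_one
  · exact tkCard_prime hp

theorem tk_eq_of_dvd {P Q : Ideal R} (hP : Prime P) (hQ : Prime Q) (h : P ∣ Q) : P = Q := by
  rwa [Prime.dvd_prime_iff_associated hP hQ, associated_iff_eq] at h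

theorem tk_six (hfin : Finite (R ⧸ O.conductor)) (hH : IsTKOvermonoid O H)
    (hR : ∀ r : R, r ≠ 0 → algebraMap R (FractionRing R) r ∈ H)
    {P Q Q' S S' : Ideal R} (hP : Prime P) (hQ : Prime Q) (hQ' : Prime Q') (hS : Prime S)
    (hS' : Prime S') (hA : TKGood O (P * Q * Q')) (hA' : TKGood O (P * S * S'))
    (gP : TKGood O (P * P)) (gQ : TKGood O (Q * S)) (gQ' : TKGood O (Q' * S'))
    (oP : TKo O (P * P)) (oQ : TKo O (Q * S)) (oQ' : TKo O (Q' * S'))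
    (hg : tkcl P ≠ 1) (hh : tkcl Q ≠ 1) (hhg : tkcl Q ≠ tkcl P) (hh' : tkcl Q' ≠ 1)
    (h2 : tkcl P * tkcl P = 1) (hsum : tkcl P * tkcl Q * tkcl Q' = 1)
    (cS : tkcl S = (tkcl Q)⁻¹) (cS' : tkcl S' = (tkcl Q')⁻¹)
    (hQS : tkcl Q * tkcl Q = 1 → S = Q ∧ S' = Q') : TKo O (P * Q * Q') := by
  by_contra hno
  have eAA : (P * Q * Q') * (P * S * S') = (P * P) * (Q * S) * (Q' * S') := by ring
  have oAA : TKo O ((P * Q * Q') * (P * S * S')) := by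
    rw [eAA]; exact (oP.mul oQ).mul oQ'
  have hno' : ¬ TKo O (P * S * S') := fun h => hno (TKo.cancel hfin hA' h (by
    rw [mul_comm]; exact oAA))
  have gAA := hA.mul hA'
  obtain ⟨V, W, hV, hW, hVW, s1, s2⟩ := tk_transfer hH hR hA hA' oAA
  have hgV : TKGood O V := TKGood.of_mul hV gAA hVW
  have hgW : TKGood O W := TKGood.of_mul hW gAA (by rw [mul_comm, hVW])
  have hcS : tkcl S ≠ 1 := by rw [cS]; simpa using hh
  have hcS' : tkcl S' ≠ 1 := by rw [cS']; simpa using hh'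
  have hnp : ∀ T : Ideal R, Prime T → T ∣ (P * Q * Q') * (P * S * S') →
      ∀ c, Ideal.span {c} ≠ T := by
    intro T hT hd c hc
    have hT1 : tkcl T = 1 := (tkcl_iff hT.ne_zero).mpr ⟨c, hc⟩
    rcases hT.dvd_or_dvd hd with hd | hd <;> rcases hT.dvd_or_dvd hd with hd | hd
    · rcases hT.dvd_or_dvd hd with hd | hd
      · exact hg (by rw [← tk_eq_of_dvd hT hP hd]; exact hT1)
      · exact hh (by rw [← tk_eq_of_dvd hT hQ hd]; exact hT1)
    · exact hh' (by rw [← tk_eq_of_dvd hT hQ' hd]; exact hT1)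
    · rcases hT.dvd_or_dvd hd with hd | hd
      · exact hg (by rw [← tk_eq_of_dvd hT hP hd]; exact hT1)
      · exact hcS (by rw [← tk_eq_of_dvd hT hS hd]; exact hT1)
    · exact hcS' (by rw [← tk_eq_of_dvd hT hS' hd]; exact hT1)
  have hne1 : ∀ {X Y : Ideal R}, Prime X → X * Y ≠ 1 := fun hX h =>
    hX.not_isUnit (IsUnit.of_mul_eq_one _ h)
  have hlen : ∀ X : Ideal R, TKGood O X → X ∣ (P * Q * Q') * (P * S * S') →
      TKSim H X ((P * Q * Q') * (P * S * S')) → 6 ≤ tkCard X ∨ True := fun _ _ _ _ => Or.inr trivial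
  have hlen : ∀ X : Ideal R, TKGood O X →
      (∀ T : Ideal R, Prime T → T ∣ X → T ∣ (P * Q * Q') * (P * S * S')) →
      TKSim H X ((P * Q * Q') * (P * S * S')) → 6 ≤ tkCard X := by
    intro X hX hT hs
    have := tk_len hfin hH hR hX (fun T hT' hd => hnp T hT' (hT T hT' hd))
      {P * P, Q * S, Q' * S'} ?_ (by simpa [← mul_assoc, eAA] using hs)
    · simpa using this
    · intro B hB
      simp only [Multiset.insert_eq_cons, Multiset.mem_cons, Multiset.mem_singleton] at hB
      rcases hB with rfl | rfl | rfl
      · exact ⟨gP, hne1 hP⟩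
      · exact ⟨gQ, hne1 hQ⟩
      · exact ⟨gQ', hne1 hQ'⟩
  have c3 : ∀ {X Y Z : Ideal R}, Prime X → Prime Y → Prime Z → tkCard (X * Y * Z) = 3 := by
    intro X Y Z hX hY hZ
    rw [tkCard_mul (mul_ne_zero hX.ne_zero hY.ne_zero) hZ.ne_zero,
      tkCard_mul hX.ne_zero hY.ne_zero, tkCard_prime hX, tkCard_prime hY, tkCard_prime hZ]
  have l1 := hlen (V * (P * S * S')) (hgV.mul hA') (fun T hT hd => by
      rcases hT.dvd_or_dvd hd with hd | hd
      · rw [← hVW]; exact hd.mul_right _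
      · exact hd.mul_left _) (s1.mul (TKSim.refl _ hA'))
  have l2 := hlen ((P * Q * Q') * W) (hA.mul hgW) (fun T hT hd => by
      rcases hT.dvd_or_dvd hd with hd | hd
      · exact hd.mul_right _
      · rw [← hVW]; exact hd.mul_left _) ((TKSim.refl _ hA).mul s2)
  rw [tkCard_mul hgV.1 hA'.1, c3 hP hS hS'] at l1
  rw [tkCard_mul hA.1 hgW.1, c3 hP hQ hQ'] at l2
  have l3 := congrArg tkCard hVW
  rw [tkCard_mul hgV.1 hgW.1, tkCard_mul hA.1 hA'.1, c3 hP hS hS', c3 hP hQ hQ'] at l3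
  have hcard : tkCard V = 3 := by omega
  have hVW' : V * W = P * (P * (Q * (S * (Q' * (S' * 1))))) := by rw [hVW]; ring
  obtain ⟨b0, V0, W0, eV0, -, h0⟩ := tk_split hP hVW'
  obtain ⟨b1, V1, W1, eV1, -, h1⟩ := tk_split hP h0
  obtain ⟨b2, V2, W2, eV2, -, h2'⟩ := tk_split hQ h1
  obtain ⟨b3, V3, W3, eV3, -, h3⟩ := tk_split hS h2'
  obtain ⟨b4, V4, W4, eV4, -, h4⟩ := tk_split hQ' h3
  obtain ⟨b5, V5, W5, eV5, -, h5⟩ := tk_split hS' h4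
  have hV5 : V5 = 1 := by
    have := IsUnit.of_mul_eq_one _ h5
    rwa [isUnit_iff_eq_one] at this
  rw [hV5, mul_one] at eV5
  subst eV5 eV4 eV3 eV2 eV1
  have n0 := tk_cond_ne hP b0
  have n1 := tk_cond_ne hP b1
  have n2 := tk_cond_ne hQ b2
  have n3 := tk_cond_ne hS b3
  have n4 := tk_cond_ne hQ' b4
  have n5 := tk_cond_ne hS' b5
  have hcl : tkcl V = 1 := (tkcl_iff hgV.1).mpr hgV.2.1
  have m4 := mul_ne_zero n4 n5
  have m3 := mul_ne_zero n3 m4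
  have m2 := mul_ne_zero n2 m3
  have m1 := mul_ne_zero n1 m2
  rw [eV0, tkcl_mul n0 m1, tkcl_mul n1 m2, tkcl_mul n2 m3, tkcl_mul n3 m4, tkcl_mul n4 n5] at hcl
  simp only [tkcl_cond, cS, cS'] at hcl
  rw [eV0, tkCard_mul n0 m1, tkCard_mul n1 m2, tkCard_mul n2 m3, tkCard_mul n3 m4,
    tkCard_mul n4 n5] at hcard
  rw [tkCard_cond hP, tkCard_cond hP, tkCard_cond hQ, tkCard_cond hS, tkCard_cond hQ',
    tkCard_cond hS'] at hcard
  obtain ⟨k1, k2, k3, k4⟩ := tk_group (G := Additive (ClassGroup R)) (Additive.ofMul (tkcl P))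
    (Additive.ofMul (tkcl Q)) (Additive.ofMul (tkcl Q')) h2 hg hh hhg hsum b0 b1 b2 b3 b4 b5
    hcard hcl
  have hPV : ∀ X, V = P * X → X = Q * Q' ∨ X = S * S' → False := by
    rintro X rfl (rfl | rfl)
    · exact hno (by rw [mul_assoc]; exact hV)
    · exact hno' (by rw [mul_assoc]; exact hV)
  have e1 : cond b0 P 1 * cond b1 P 1 = P := by
    revert k1; cases b0 <;> cases b1 <;> simp
  rw [← mul_assoc, e1] at eV0
  refine hPV _ eV0 ?_
  rcases k4 with rfl | k4
  · revert k2 k3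
    cases b2 <;> cases b3 <;> cases b5 <;> simp
  · obtain ⟨rfl, rfl⟩ := hQS k4
    left
    revert k2 k3
    cases b2 <;> cases b3 <;> cases b4 <;> cases b5 <;> simp


theorem tk_coprime {P : Ideal R} (hP : Prime P) (hc : ¬ O.conductor ≤ P) :
    IsCoprime P O.conductor := by
  have hpr : P.IsPrime := Ideal.isPrime_of_prime hP
  have hmax : P.IsMaximal := hpr.isMaximal hP.ne_zero
  rw [Ideal.isCoprime_iff_sup_eq]
  by_contra hne
  exact hc (le_sup_right.trans_eq (hmax.eq_of_le hne le_sup_left).symm)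

theorem tk_good {I : Ideal R} (hI : I ≠ 0) (h1 : tkcl I = 1) (hc : IsCoprime I O.conductor) :
    TKGood O I := ⟨hI, (tkcl_iff hI).mp h1, hc⟩

theorem tk_bar (hfin : Finite (R ⧸ O.conductor)) (hH : IsTKOvermonoid O H)
    (hR : ∀ r : R, r ≠ 0 → algebraMap R (FractionRing R) r ∈ H)
    (hex : ∀ c : ClassGroup R, ∃ P : Ideal R, Prime P ∧ IsCoprime P O.conductor ∧ tkcl P = c)
    {Q : Ideal R} (hQ : Prime Q) (hc : IsCoprime Q O.conductor) (h1 : tkcl Q ≠ 1) :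
    ∃ S : Ideal R, Prime S ∧ IsCoprime S O.conductor ∧ tkcl S = (tkcl Q)⁻¹ ∧ TKo O (Q * S) ∧
      (tkcl Q * tkcl Q = 1 → S = Q) := by
  by_cases h2 : tkcl Q * tkcl Q = 1
  · refine ⟨Q, hQ, hc, eq_inv_of_mul_eq_one_left h2, ?_, fun _ => rfl⟩
    have := tk_pow_prime hfin hH hR hQ 2 (tk_good (pow_ne_zero 2 hQ.ne_zero)
      (by rw [pow_two, tkcl_mul hQ.ne_zero hQ.ne_zero, h2]) hc.pow_left)
    rwa [pow_two] at this
  · obtain ⟨S, hS, hcS, e⟩ := hex (tkcl Q)⁻¹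
    refine ⟨S, hS, hcS, e, ?_, fun h => absurd h h2⟩
    refine tk_pair hfin hH hR hQ hS (tk_good (mul_ne_zero hQ.ne_zero hS.ne_zero)
      (by rw [tkcl_mul hQ.ne_zero hS.ne_zero, e, mul_inv_cancel]) (hc.mul_left hcS)) ?_ ?_ ?_ ?_
    · intro a ha
      exact h1 ((tkcl_iff hQ.ne_zero).mpr ⟨a, ha⟩)
    · intro a ha
      have := (tkcl_iff hS.ne_zero).mpr ⟨a, ha⟩
      rw [e, inv_eq_one] at this
      exact h1 this
    · intro a ha
      have := (tkcl_iff (pow_ne_zero 2 hQ.ne_zero)).mpr ⟨a, ha⟩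
      rw [pow_two, tkcl_mul hQ.ne_zero hQ.ne_zero] at this
      exact h2 this
    · intro a ha
      have := (tkcl_iff (pow_ne_zero 2 hS.ne_zero)).mpr ⟨a, ha⟩
      rw [pow_two, tkcl_mul hS.ne_zero hS.ne_zero, e, ← mul_inv, inv_eq_one] at this
      exact h2 this

theorem tk_main (hfin : Finite (R ⧸ O.conductor)) (hH : IsTKOvermonoid O H)
    (hR : ∀ r : R, r ≠ 0 → algebraMap R (FractionRing R) r ∈ H)
    (hex : ∀ c : ClassGroup R, ∃ P : Ideal R, Prime P ∧ IsCoprime P O.conductor ∧ tkcl P = c)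
    (hcard : Nat.card (ClassGroup R) ≠ 2)
    {P₁ P₂ : Ideal R} (h₁ : Prime P₁) (h₂ : Prime P₂) (c₁ : IsCoprime P₁ O.conductor)
    (c₂ : IsCoprime P₂ O.conductor) (e : tkcl P₁ = (tkcl P₂)⁻¹) : TKo O (P₁ * P₂) := by
  have e' : tkcl P₂ = (tkcl P₁)⁻¹ := by rw [e, inv_inv]
  have n₁ := h₁.ne_zero
  have n₂ := h₂.ne_zero
  have hA : TKGood O (P₁ * P₂) := tk_good (mul_ne_zero n₁ n₂)
    (by rw [tkcl_mul n₁ n₂, e, inv_mul_cancel]) (c₁.mul_left c₂)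
  by_cases hg : tkcl P₁ = 1
  · have hg' : tkcl P₂ = 1 := by rw [e', hg, inv_one]
    have o1 := tk_pow_prime hfin hH hR h₁ 1 (by rw [pow_one]; exact tk_good n₁ hg c₁)
    have o2 := tk_pow_prime hfin hH hR h₂ 1 (by rw [pow_one]; exact tk_good n₂ hg' c₂)
    rw [pow_one] at o1 o2
    exact o1.mul o2
  have hg' : tkcl P₂ ≠ 1 := by rw [e']; simpa using hg
  by_cases h2 : tkcl P₁ * tkcl P₁ = 1
  swap
  · refine tk_pair hfin hH hR h₁ h₂ hA ?_ ?_ ?_ ?_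
    · intro a ha
      exact hg ((tkcl_iff n₁).mpr ⟨a, ha⟩)
    · intro a ha
      exact hg' ((tkcl_iff n₂).mpr ⟨a, ha⟩)
    · intro a ha
      have := (tkcl_iff (pow_ne_zero 2 n₁)).mpr ⟨a, ha⟩
      rw [pow_two, tkcl_mul n₁ n₁] at this
      exact h2 this
    · intro a ha
      have := (tkcl_iff (pow_ne_zero 2 n₂)).mpr ⟨a, ha⟩
      rw [pow_two, tkcl_mul n₂ n₂, e', ← mul_inv, inv_eq_one] at this
      exact h2 this
  have e12 : tkcl P₂ = tkcl P₁ := by rw [e']; exact inv_eq_of_mul_eq_one_left h2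
  obtain ⟨h, hh1, hhg⟩ : ∃ h : ClassGroup R, h ≠ 1 ∧ h ≠ tkcl P₁ := by
    by_contra hcon
    push Not at hcon
    refine hcard (Nat.card_eq_two_iff.mpr ⟨1, tkcl P₁, Ne.symm hg, ?_⟩)
    ext x
    simp only [Set.mem_insert_iff, Set.mem_singleton_iff, Set.mem_univ, iff_true]
    by_cases hx : x = 1
    · exact Or.inl hx
    · exact Or.inr (hcon x hx)
  obtain ⟨Q, hQ, cQ, eQ⟩ := hex h
  obtain ⟨Q', hQ', cQ', eQ'⟩ := hex (tkcl P₁ * h)⁻¹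
  have hQ1 : tkcl Q ≠ 1 := by rw [eQ]; exact hh1
  have hQ1' : tkcl Q' ≠ 1 := by
    rw [eQ', Ne, inv_eq_one]
    intro hx
    apply hhg
    rw [← mul_right_inj (tkcl P₁), hx, h2]
  obtain ⟨S, hS, cS, eS, oS, iS⟩ := tk_bar hfin hH hR hex hQ cQ hQ1
  obtain ⟨S', hS', cS', eS', oS', iS'⟩ := tk_bar hfin hH hR hex hQ' cQ' hQ1'
  have key : ∀ P : Ideal R, Prime P → IsCoprime P O.conductor → tkcl P = tkcl P₁ →
      TKGood O (P * Q * Q') ∧ TKo O (P * P) ∧ TKo O (P * Q * Q') := by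
    intro P hP cP eP
    have nP := hP.ne_zero
    have gP : TKGood O (P * P) := tk_good (mul_ne_zero nP nP)
      (by rw [tkcl_mul nP nP, eP, h2]) (cP.mul_left cP)
    have oP : TKo O (P * P) := by
      have := tk_pow_prime hfin hH hR hP 2 (by rw [pow_two]; exact gP)
      rwa [pow_two] at this
    have hsum : tkcl P * tkcl Q * tkcl Q' = 1 := by
      rw [eP, eQ, eQ', mul_inv_cancel]
    have gA : TKGood O (P * Q * Q') := tk_good
      (mul_ne_zero (mul_ne_zero nP hQ.ne_zero) hQ'.ne_zero)
      (by rw [tkcl_mul (mul_ne_zero nP hQ.ne_zero) hQ'.ne_zero, tkcl_mul nP hQ.ne_zero, hsum])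
      ((cP.mul_left cQ).mul_left cQ')
    have hPi : tkcl P = (tkcl P)⁻¹ := by
      rw [eP]; exact eq_inv_of_mul_eq_one_left h2
    have gA' : TKGood O (P * S * S') := tk_good
      (mul_ne_zero (mul_ne_zero nP hS.ne_zero) hS'.ne_zero)
      (by
        rw [tkcl_mul (mul_ne_zero nP hS.ne_zero) hS'.ne_zero, tkcl_mul nP hS.ne_zero, eS, eS', hPi,
          ← mul_inv, ← mul_inv, hsum, inv_one])
      ((cP.mul_left cS).mul_left cS')
    have gQ : TKGood O (Q * S) := tk_good (mul_ne_zero hQ.ne_zero hS.ne_zero)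
      (by rw [tkcl_mul hQ.ne_zero hS.ne_zero, eS, mul_inv_cancel]) (cQ.mul_left cS)
    have gQ' : TKGood O (Q' * S') := tk_good (mul_ne_zero hQ'.ne_zero hS'.ne_zero)
      (by rw [tkcl_mul hQ'.ne_zero hS'.ne_zero, eS', mul_inv_cancel]) (cQ'.mul_left cS')
    refine ⟨gA, oP, tk_six hfin hH hR hP hQ hQ' hS hS' gA gA' gP gQ gQ' oP oS oS'
      (by rw [eP]; exact hg) hQ1 (by rw [eQ, eP]; exact hhg) hQ1' (by rw [eP]; exact h2) hsum
      eS eS' ?_⟩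
    intro hq
    refine ⟨iS hq, iS' ?_⟩
    rw [eQ] at hq
    rw [eQ', ← mul_inv, mul_mul_mul_comm, h2, hq, one_mul, inv_one]
  obtain ⟨-, -, oA⟩ := key P₁ h₁ c₁ rfl
  obtain ⟨gB, oP, -⟩ := key P₂ h₂ c₂ e12
  obtain ⟨-, -, oB⟩ := key P₂ h₂ c₂ e12
  refine TKo.cancel hfin gB oB ?_
  have : P₂ * Q * Q' * (P₁ * P₂) = P₁ * Q * Q' * (P₂ * P₂) := by ring
  rw [this]
  exact oA.mul oP

end TKproof

theorem inverse_classes_product_in_order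
    {R : Type*} [CommRing R] [IsDomain R] [IsDedekindDomain R]
    (O : Subring R) (hne : O ≠ ⊤) (hfg : Module.Finite ↥O R)
    (hfrac : ∀ r : R, ∃ a b : ↥O, (b : R) ≠ 0 ∧ (b : R) * r = (a : R))
    (htor : ∀ c : ClassGroup R, ∃ n : ℕ, 0 < n ∧ c ^ n = 1)
    (hfin : Finite (R ⧸ O.conductor))
    (hcls : ∀ c : ClassGroup R, ∃ (P : Ideal R) (hP : P ∈ (Ideal R)⁰),
      P.IsPrime ∧ ¬ O.conductor ≤ P ∧ ClassGroup.mk0 ⟨P, hP⟩ = c)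
    (H : Submonoid (FractionRing R)) (hH : IsTKOvermonoid O H)
    (hcard : Nat.card (ClassGroup R) ≠ 2)
    (P₁ P₂ : Ideal R) (h₁ : P₁ ∈ (Ideal R)⁰) (h₂ : P₂ ∈ (Ideal R)⁰)
    (hp₁ : P₁.IsPrime) (hp₂ : P₂.IsPrime)
    (hc₁ : ¬ O.conductor ≤ P₁) (hc₂ : ¬ O.conductor ≤ P₂)
    (hcl : ClassGroup.mk0 ⟨P₁, h₁⟩ = (ClassGroup.mk0 ⟨P₂, h₂⟩)⁻¹) :
    ∃ b ∈ O, Ideal.span {b} = P₁ * P₂ := by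
  have hex : ∀ c : ClassGroup R, ∃ P : Ideal R, Prime P ∧ IsCoprime P O.conductor ∧ tkcl P = c := by
    intro c
    obtain ⟨P, hP, hpr, hc, e⟩ := hcls c
    have hp : Prime P := Ideal.prime_of_isPrime (nonZeroDivisors.ne_zero hP) hpr
    exact ⟨P, hp, tk_coprime hp hc, by rw [tkcl_eq hP, e]⟩
  have q₁ : Prime P₁ := Ideal.prime_of_isPrime (nonZeroDivisors.ne_zero h₁) hp₁
  have q₂ : Prime P₂ := Ideal.prime_of_isPrime (nonZeroDivisors.ne_zero h₂) hp₂
  exact tk_main hfin hH (tk_mem hfg hfrac hH) hex hcard q₁ q₂ (tk_coprime q₁ hc₁)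
    (tk_coprime q₂ hc₂) (by rw [tkcl_eq h₁, tkcl_eq h₂, hcl])
end

section
/- Under the standing assumptions with |Cl(R)| ≠ 2 and O transfer Krull: if P₁, P₂ are prime ideals of R coprime to f with ord([P₁]) = 2 and ord([P₂]) = 2k for some k ≥ 2 with k[P₂] = [P₁], then the principal ideal P₁P₂^k is generated by an element of O up to R-units. -/
open scoped nonZeroDivisors

variable {R₀ : Type*}

section Helpers

/-- `x` is a unit of the submonoid `H` of a field. -/
def UIn {K : Type*} [Field K] (H : Submonoid K) (x : K) : Prop := x ∈ H ∧ x⁻¹ ∈ H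

lemma UIn.mul {K : Type*} [Field K] {H : Submonoid K} {x y : K} (hx : UIn H x) (hy : UIn H y) :
    UIn H (x * y) :=
  ⟨H.mul_mem hx.1 hy.1, by rw [mul_inv]; exact H.mul_mem hx.2 hy.2⟩

lemma UIn.inv {K : Type*} [Field K] {H : Submonoid K} {x : K} (hx : UIn H x) :
    UIn H x⁻¹ := ⟨hx.2, by rw [inv_inv]; exact hx.1⟩

lemma UIn.one {K : Type*} [Field K] {H : Submonoid K} : UIn H (1 : K) :=
  ⟨H.one_mem, by rw [inv_one]; exact H.one_mem⟩

lemma UIn.pow {K : Type*} [Field K] {H : Submonoid K} {x : K} (hx : UIn H x) (n : ℕ) :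
    UIn H (x ^ n) := ⟨H.pow_mem hx.1 n, by rw [← inv_pow]; exact H.pow_mem hx.2 n⟩

lemma AssocIn.uin {K : Type*} [Field K] {H : Submonoid K} {x y : K} (h : AssocIn H x y) :
    ∃ ε, UIn H ε ∧ x = y * ε := by
  obtain ⟨ε, hε, ⟨ε', hε', h1⟩, h2⟩ := h
  refine ⟨ε, ⟨hε, ?_⟩, h2⟩
  rw [inv_eq_of_mul_eq_one_right h1]; exact hε'

lemma dvd_split {R : Type*} [CommRing R] [IsDomain R] [IsDedekindDomain R]
    {P₁ P I J : Ideal R} (h₁ : P₁ ∈ (Ideal R)⁰) (h : P ∈ (Ideal R)⁰)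
    (hp₁ : P₁.IsPrime) (hp : P.IsPrime) {i j : ℕ} (hIJ : I * J = P₁ ^ i * P ^ j) :
    ∃ a b c d : ℕ, I = P₁ ^ a * P ^ b ∧ J = P₁ ^ c * P ^ d ∧ a + c = i ∧ b + d = j := by
  have n₁ : P₁ ≠ 0 := nonZeroDivisors.ne_zero h₁
  have n : P ≠ 0 := nonZeroDivisors.ne_zero h
  have pr₁ : Prime P₁ := Ideal.prime_of_isPrime n₁ hp₁
  have pr : Prime P := Ideal.prime_of_isPrime n hp
  have hd : I ∣ P₁ ^ i * P ^ j := ⟨J, hIJ.symm⟩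
  obtain ⟨I1, I2, e1, e2, rfl⟩ := exists_dvd_and_dvd_of_dvd_mul hd
  obtain ⟨a, ha, ha'⟩ := (dvd_prime_pow pr₁ i).1 e1
  obtain ⟨b, hb, hb'⟩ := (dvd_prime_pow pr j).1 e2
  rw [associated_iff_eq] at ha' hb'
  subst ha' hb'
  obtain ⟨c, rfl⟩ := Nat.exists_eq_add_of_le ha
  obtain ⟨d, rfl⟩ := Nat.exists_eq_add_of_le hb
  refine ⟨a, b, c, d, rfl, ?_, rfl, rfl⟩
  have hne : P₁ ^ a * P ^ b ≠ 0 := mul_ne_zero (pow_ne_zero _ n₁) (pow_ne_zero _ n)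
  apply mul_left_cancel₀ hne
  rw [hIJ, pow_add, pow_add]; ring

lemma weight_dvd {R : Type*} [CommRing R] [IsDomain R] [IsDedekindDomain R]
    {P₁ P : Ideal R} (h₁ : P₁ ∈ (Ideal R)⁰) (h : P ∈ (Ideal R)⁰) {k : ℕ}
    (ho : orderOf (ClassGroup.mk0 ⟨P, h⟩) = 2 * k)
    (hcl : (ClassGroup.mk0 ⟨P, h⟩) ^ k = ClassGroup.mk0 ⟨P₁, h₁⟩)
    {v : R} {i j : ℕ} (hv : Ideal.span {v} = P₁ ^ i * P ^ j) : 2 * k ∣ k * i + j := by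
  rw [← ho]
  apply orderOf_dvd_of_pow_eq_one
  rw [pow_add, pow_mul, hcl, ← map_pow, ← map_pow, ← map_mul, ClassGroup.mk0_eq_one_iff]
  refine ⟨⟨v, ?_⟩⟩
  change P₁ ^ i * P ^ j = _
  rw [← hv]

lemma exists_gen {R : Type*} [CommRing R] [IsDomain R] [IsDedekindDomain R]
    (I : (Ideal R)⁰) (h : ClassGroup.mk0 I = 1) :
    ∃ v : R, v ≠ 0 ∧ Ideal.span {v} = (I : Ideal R) := by
  rw [ClassGroup.mk0_eq_one_iff] at h
  obtain ⟨⟨v, hv⟩⟩ := h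
  refine ⟨v, ?_, hv.symm⟩
  rintro rfl
  apply nonZeroDivisors.ne_zero I.2
  rw [hv]; simp

lemma R_sub_H {R : Type*} [CommRing R] [IsDomain R] [IsDedekindDomain R]
    (O : Subring R)
    (hfrac : ∀ r : R, ∃ a b : ↥O, (b : R) ≠ 0 ∧ (b : R) * r = (a : R))
    (H : Submonoid (FractionRing R)) (hH : IsTKOvermonoid O H)
    {c : R} (hc : c ∈ O.conductor) (hc0 : c ≠ 0) (x : R) (hx : x ≠ 0) :
    algebraMap R (FractionRing R) x ∈ H := by
  obtain ⟨⟨a, ha⟩, ⟨b, hb⟩, hb0, hab⟩ := hfrac x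
  simp only at hb0 hab
  have ha0 : a ≠ 0 := by rw [← hab]; exact mul_ne_zero hb0 hx
  obtain ⟨ι, d, hd⟩ := hH.krull
  have cO : c ∈ O := by have := hc 1; rwa [mul_one] at this
  let A : H := ⟨_, hH.incl a ha ha0⟩
  let B : H := ⟨_, hH.incl b hb hb0⟩
  let C : H := ⟨_, hH.incl c cO hc0⟩
  have key : ∀ n : ℕ, ∃ X : H, C * A ^ n = X * B ^ n := by
    intro n
    refine ⟨⟨_, hH.incl (c * x ^ n) (hc _) (mul_ne_zero hc0 (pow_ne_zero _ hx))⟩, ?_⟩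
    apply Subtype.ext
    simp only [A, B, C, Submonoid.coe_mul, SubmonoidClass.coe_pow]
    rw [← map_pow, ← map_pow, ← map_mul, ← map_mul, ← hab]
    congr 1; ring
  have hdvd : d B ∣ d A := by
    have hle : ∀ s, (d B).toAdd s ≤ (d A).toAdd s := by
      intro s
      by_contra hlt
      push Not at hlt
      obtain ⟨X, hX⟩ := key ((d C).toAdd s + 1)
      have := congrArg (fun z => (d z).toAdd s) hX
      simp only [map_mul, map_pow, toAdd_mul, toAdd_pow, Finsupp.add_apply,
        Finsupp.smul_apply, smul_eq_mul] at this
      nlinarith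
    have h2 : (d B).toAdd ≤ (d A).toAdd := hle
    obtain ⟨y, hy⟩ := exists_add_of_le h2
    refine ⟨Multiplicative.ofAdd y, ?_⟩
    apply Multiplicative.toAdd.injective
    simpa using hy
  obtain ⟨Y, hY⟩ := hd _ _ hdvd
  have hY' := congrArg Subtype.val hY
  simp only [A, B, Submonoid.coe_mul, ← hab, map_mul] at hY'
  have hbK : algebraMap R (FractionRing R) b ≠ 0 := by
    simpa using hb0
  rw [mul_left_cancel₀ hbK hY']
  exact Y.2

lemma length_bound {R : Type*} [CommRing R] [IsDomain R] [IsDedekindDomain R]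
    (O : Subring R) (H : Submonoid (FractionRing R)) (hH : IsTKOvermonoid O H)
    (hR : ∀ x : R, x ≠ 0 → algebraMap R (FractionRing R) x ∈ H)
    {P₁ P : Ideal R} (h₁ : P₁ ∈ (Ideal R)⁰) (h : P ∈ (Ideal R)⁰)
    (hp₁ : P₁.IsPrime) (hp : P.IsPrime) {k : ℕ} (hk : 2 ≤ k)
    (ho : orderOf (ClassGroup.mk0 ⟨P, h⟩) = 2 * k)
    (hcl : (ClassGroup.mk0 ⟨P, h⟩) ^ k = ClassGroup.mk0 ⟨P₁, h₁⟩)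
    (l : List (FractionRing R)) (hl : ∀ x ∈ l, x ∈ H ∧ ¬ UIn H x) :
    ∀ (a : R) (i j : ℕ) (ε : FractionRing R), a ∈ O → a ≠ 0 →
      Ideal.span {a} = P₁ ^ i * P ^ j → UIn H ε →
      algebraMap R (FractionRing R) a = ε * l.prod → 2 * k * l.length ≤ k * i + j := by
  induction l with
  | nil => intros; simp
  | cons x l ih =>
    intro a i j ε ha ha0 hs hε hprod
    have hxH := hl x (by simp)
    have hlH : l.prod ∈ H := H.list_prod_mem (fun y hy => (hl y (by simp [hy])).1)
    rw [List.prod_cons] at hprod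
    obtain ⟨v, w, hv, hw, rfl, hvx, hwy⟩ := hH.t2 a ha ha0 x hxH.1 (ε * l.prod)
      (H.mul_mem hε.1 hlH) (by rw [hprod]; ring)
    obtain ⟨η, hη, hvx⟩ := hvx.uin
    obtain ⟨ζ, hζ, hwy⟩ := hwy.uin
    have hv0 : v ≠ 0 := left_ne_zero_of_mul ha0
    have hw0 : w ≠ 0 := right_ne_zero_of_mul ha0
    rw [← Ideal.span_singleton_mul_span_singleton] at hs
    obtain ⟨a1, b1, a2, b2, e1, e2, rfl, rfl⟩ := dvd_split h₁ h hp₁ hp hs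
    have hw' := ih (fun y hy => hl y (by simp [hy])) w a2 b2 (ε * ζ) hw hw0 e2 (hε.mul hζ)
      (by rw [hwy]; ring)
    have hvd := weight_dvd h₁ h ho hcl e1
    have hvpos : 0 < k * a1 + b1 := by
      by_contra hcon
      have h0 : k * a1 = 0 ∧ b1 = 0 := by omega
      have ha1 : a1 = 0 := by
        rcases Nat.mul_eq_zero.1 h0.1 with h | h
        · omega
        · exact h
      rw [ha1, h0.2] at e1
      rw [pow_zero, pow_zero, mul_one, Ideal.one_eq_top, Ideal.span_singleton_eq_top] at e1
      obtain ⟨v', hv'⟩ := e1.exists_right_inv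
      have hv'0 : v' ≠ 0 := by rintro rfl; simp at hv'
      apply hxH.2
      have hvU : UIn H (algebraMap R (FractionRing R) v) := by
        refine ⟨hR v hv0, ?_⟩
        rw [inv_eq_of_mul_eq_one_right (b := algebraMap R (FractionRing R) v')
          (by rw [← map_mul, hv', map_one])]
        exact hR v' hv'0
      have hη0 : η ≠ 0 := hH.nonzero _ hη.1
      have : x = algebraMap R (FractionRing R) v * η⁻¹ := by
        rw [hvx, mul_assoc, mul_inv_cancel₀ hη0, mul_one]
      rw [this]; exact hvU.mul hη.inv
    have := Nat.le_of_dvd hvpos hvd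
    simp only [List.length_cons]
    nlinarith

lemma regF_of_sup {R : Type*} [CommRing R] {f : Ideal R} {c : R}
    (h : IsCoprime (Ideal.span {c}) f) : RegF f c := by
  rw [Ideal.isCoprime_iff_exists] at h
  obtain ⟨i, hi, j, hj, hij⟩ := h
  obtain ⟨r, rfl⟩ := Ideal.mem_span_singleton'.1 hi
  have : Ideal.Quotient.mk f c * Ideal.Quotient.mk f r = 1 := by
    rw [← map_mul, ← map_one (Ideal.Quotient.mk f), ← hij, map_add,
      Ideal.Quotient.eq_zero_iff_mem.2 hj, add_zero, mul_comm]
  exact IsUnit.of_mul_eq_one _ this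

lemma pow_mem_of_regF {R : Type*} [CommRing R] (O : Subring R)
    {c : R} (h : RegF O.conductor c) :
    c ^ Nat.card (R ⧸ O.conductor)ˣ ∈ O := by
  obtain ⟨u, hu⟩ := h
  have h1 : u ^ Nat.card (R ⧸ O.conductor)ˣ = 1 := pow_card_eq_one'
  have h2 : Ideal.Quotient.mk O.conductor (c ^ Nat.card (R ⧸ O.conductor)ˣ - 1) = 0 := by
    rw [map_sub, map_pow, ← hu, map_one, ← Units.val_pow_eq_pow_val, h1]; simp
  have h3 := (Ideal.Quotient.eq_zero_iff_mem.1 h2 : _) 1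
  have := O.add_mem h3 O.one_mem
  simpa using this

lemma nonunit_of_regF {R : Type*} [CommRing R] [IsDomain R] [IsDedekindDomain R]
    (O : Subring R) (hfin : Finite (R ⧸ O.conductor))
    (H : Submonoid (FractionRing R)) (hH : IsTKOvermonoid O H)
    {c : R} (hc0 : c ≠ 0) (h : RegF O.conductor c) (hu : ¬ IsUnit c) :
    ¬ UIn H (algebraMap R (FractionRing R) c) := by
  intro hU
  have hpos : 0 < Nat.card (R ⧸ O.conductor)ˣ := Nat.card_pos
  obtain ⟨b, _, hb⟩ := hH.t1' _ (pow_mem_of_regF O h) (pow_ne_zero _ hc0)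
    ⟨_, (hU.pow _).2, by
      rw [map_pow]
      exact mul_inv_cancel₀ (pow_ne_zero _ (by simpa using hc0))⟩
  exact hu ((isUnit_pow_iff hpos.ne').1 (IsUnit.of_mul_eq_one _ hb))

lemma uin_of_span_eq {R : Type*} [CommRing R] [IsDomain R] [IsDedekindDomain R]
    (H : Submonoid (FractionRing R))
    (hR : ∀ x : R, x ≠ 0 → algebraMap R (FractionRing R) x ∈ H)
    {a b : R} (h : Ideal.span {a} = Ideal.span {b}) :
    ∃ ε, UIn H ε ∧ algebraMap R (FractionRing R) a = algebraMap R (FractionRing R) b * ε := by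
  rw [Ideal.span_singleton_eq_span_singleton] at h
  obtain ⟨u, hu⟩ := h.symm
  refine ⟨algebraMap R _ (u : R), ⟨hR _ u.ne_zero, ?_⟩, by rw [← map_mul, hu]⟩
  rw [inv_eq_of_mul_eq_one_right (b := algebraMap R (FractionRing R) ((u⁻¹ : Rˣ) : R))
    (by rw [← map_mul, Units.mul_inv, map_one])]
  exact hR _ (u⁻¹).ne_zero

end Helpers

theorem mixed_order_classes_product_in_order
    {R : Type*} [CommRing R] [IsDomain R] [IsDedekindDomain R]
    (O : Subring R) (hne : O ≠ ⊤) (hfg : Module.Finite ↥O R)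
    (hfrac : ∀ r : R, ∃ a b : ↥O, (b : R) ≠ 0 ∧ (b : R) * r = (a : R))
    (htor : ∀ c : ClassGroup R, ∃ n : ℕ, 0 < n ∧ c ^ n = 1)
    (hfin : Finite (R ⧸ O.conductor))
    (hcls : ∀ c : ClassGroup R, ∃ (P : Ideal R) (hP : P ∈ (Ideal R)⁰),
      P.IsPrime ∧ ¬ O.conductor ≤ P ∧ ClassGroup.mk0 ⟨P, hP⟩ = c)
    (H : Submonoid (FractionRing R)) (hH : IsTKOvermonoid O H)
    (hcard : Nat.card (ClassGroup R) ≠ 2)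
    (P₁ P₂ : Ideal R) (h₁ : P₁ ∈ (Ideal R)⁰) (h₂ : P₂ ∈ (Ideal R)⁰)
    (hp₁ : P₁.IsPrime) (hp₂ : P₂.IsPrime)
    (hc₁ : ¬ O.conductor ≤ P₁) (hc₂ : ¬ O.conductor ≤ P₂)
    (k : ℕ) (hk : 2 ≤ k)
    (ho₁ : orderOf (ClassGroup.mk0 ⟨P₁, h₁⟩) = 2)
    (ho₂ : orderOf (ClassGroup.mk0 ⟨P₂, h₂⟩) = 2 * k)
    (hcl : (ClassGroup.mk0 ⟨P₂, h₂⟩) ^ k = ClassGroup.mk0 ⟨P₁, h₁⟩) :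
    ∃ b ∈ O, Ideal.span {b} = P₁ * P₂ ^ k := by
  have ⟨f0, hf0, hf0'⟩ : ∃ c ∈ O.conductor, c ≠ 0 := by
    obtain ⟨x, hx, hx'⟩ := SetLike.not_le_iff_exists.1 hc₁
    exact ⟨x, hx, by rintro rfl; exact hx' P₁.zero_mem⟩
  have hR := R_sub_H O hfrac H hH hf0 hf0'
  have cop : ∀ (P : Ideal R), P ∈ (Ideal R)⁰ → P.IsPrime → ¬ O.conductor ≤ P →
      IsCoprime P O.conductor := by
    intro P h hp hc
    have : P.IsMaximal := hp.isMaximal (nonZeroDivisors.ne_zero h)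
    rw [Ideal.isCoprime_iff_sup_eq]
    exact this.out.2 _ (left_lt_sup.2 hc)
  have nonunit : ∀ (c : R) (I J : Ideal R), Ideal.span {c} = I * J → I.IsPrime → ¬ IsUnit c := by
    intro c I J hs hI hu
    rw [← Ideal.span_singleton_eq_top, hs] at hu
    exact hI.ne_top (top_le_iff.1 (hu ▸ Ideal.mul_le_left))
  obtain ⟨Q, hQ, hpQ, hcQ, hQc⟩ := hcls (ClassGroup.mk0 ⟨P₂, h₂⟩)⁻¹
  have sq1 : (ClassGroup.mk0 ⟨P₁, h₁⟩) ^ 2 = 1 := by rw [← ho₁]; exact pow_orderOf_eq_one _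
  have hoQ : orderOf (ClassGroup.mk0 ⟨Q, hQ⟩) = 2 * k := by rw [hQc, orderOf_inv, ho₂]
  have hclQ : (ClassGroup.mk0 ⟨Q, hQ⟩) ^ k = ClassGroup.mk0 ⟨P₁, h₁⟩ := by
    rw [hQc, inv_pow, hcl, inv_eq_iff_mul_eq_one, ← pow_two, sq1]
  have cop1 := cop P₁ h₁ hp₁ hc₁
  have cop2 := cop P₂ h₂ hp₂ hc₂
  have copQ := cop Q hQ hpQ hcQ
  -- generators
  obtain ⟨b, hb0, hb⟩ := exists_gen (⟨P₁, h₁⟩ * ⟨P₂, h₂⟩ ^ k)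
    (by rw [map_mul, map_pow, hcl, ← pow_two, sq1])
  obtain ⟨p, hp0, hp⟩ := exists_gen (⟨P₁, h₁⟩ ^ 2) (by rw [map_pow, sq1])
  obtain ⟨q, hq0, hq⟩ := exists_gen (⟨P₂, h₂⟩ ^ (2 * k))
    (by rw [map_pow, ← ho₂, pow_orderOf_eq_one])
  obtain ⟨c, hc0, hc⟩ := exists_gen (⟨P₂, h₂⟩ * ⟨Q, hQ⟩)
    (by rw [map_mul, hQc, mul_inv_cancel])
  obtain ⟨e, he0, he⟩ := exists_gen (⟨P₁, h₁⟩ * ⟨Q, hQ⟩ ^ k)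
    (by rw [map_mul, map_pow, hclQ, ← pow_two, sq1])
  simp only [Submonoid.coe_mul, SubmonoidClass.coe_pow] at hb hp hq hc he
  have rb : RegF O.conductor b := regF_of_sup (by
    rw [hb]; exact IsCoprime.mul_left cop1 (IsCoprime.pow_left cop2))
  have rp : RegF O.conductor p := regF_of_sup (by rw [hp]; exact IsCoprime.pow_left cop1)
  have rq : RegF O.conductor q := regF_of_sup (by rw [hq]; exact IsCoprime.pow_left cop2)
  have rc : RegF O.conductor c := regF_of_sup (by rw [hc]; exact IsCoprime.mul_left cop2 copQ)
  have re : RegF O.conductor e := regF_of_sup (by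
    rw [he]; exact IsCoprime.mul_left cop1 (IsCoprime.pow_left copQ))
  have ub := nonunit_of_regF O hfin H hH hb0 rb (nonunit b _ _ hb hp₁)
  have up := nonunit_of_regF O hfin H hH hp0 rp (nonunit p _ _ (hp.trans (pow_two _)) hp₁)
  have uq := nonunit_of_regF O hfin H hH hq0 rq (nonunit q P₂ (P₂ ^ (2 * k - 1)) (by
    rw [hq, ← pow_succ']; congr 1; omega) hp₂)
  have uc := nonunit_of_regF O hfin H hH hc0 rc (nonunit c _ _ hc hp₂)
  set m := Nat.card (R ⧸ O.conductor)ˣ with hm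
  have hmpos : 0 < m := Nat.card_pos
  have bO : b ^ m ∈ O := pow_mem_of_regF O rb
  have eO : e ^ m ∈ O := pow_mem_of_regF O re
  have inj : ∀ x : R, x ≠ 0 → algebraMap R (FractionRing R) x ≠ 0 := by
    intro x hx; simpa using hx
  -- `e` is not associated to `c ^ k` in `H`
  have noassoc : ∀ ε, UIn H ε →
      algebraMap R (FractionRing R) e ≠ ε * algebraMap R (FractionRing R) c ^ k := by
    intro ε hε h
    have := length_bound O H hH hR h₁ hQ hp₁ hpQ hk hoQ hclQ
      (List.replicate (k * m) (algebraMap R (FractionRing R) c))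
      (by intro x hx; rw [List.eq_of_mem_replicate hx]; exact ⟨hR c hc0, uc⟩)
      (e ^ m) m (k * m) (ε ^ m) eO (pow_ne_zero _ he0)
      (by rw [← Ideal.span_singleton_pow, he, mul_pow, pow_mul]) (hε.pow m)
      (by rw [map_pow, h, List.prod_replicate, mul_pow, pow_mul])
    simp only [List.length_replicate] at this
    have hkm : 0 < k * m := by positivity
    nlinarith
  -- lift `b ^ m = b * b ^ (m - 1)`
  obtain ⟨v, w, hv, hw, hvw, hvb, -⟩ := hH.t2 (b ^ m) bO (pow_ne_zero _ hb0)
    (algebraMap R _ b) (hR b hb0) (algebraMap R _ (b ^ (m - 1))) (hR _ (pow_ne_zero _ hb0))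
    (by rw [← map_mul, ← pow_succ']; congr 2; omega)
  obtain ⟨η, hη, hvb⟩ := hvb.uin
  have hη0 : η ≠ 0 := hH.nonzero _ hη.1
  have hv0 : v ≠ 0 := by
    rintro rfl
    exact pow_ne_zero m hb0 (by rw [hvw, zero_mul])
  have hsp : Ideal.span {v} * Ideal.span {w} = P₁ ^ m * P₂ ^ (k * m) := by
    rw [Ideal.span_singleton_mul_span_singleton, ← hvw, ← Ideal.span_singleton_pow, hb, mul_pow,
      pow_mul]
  obtain ⟨i, j, -, -, hvs, -, -, -⟩ := dvd_split h₁ h₂ hp₁ hp₂ hsp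
  have hvd := weight_dvd h₁ h₂ ho₂ hcl hvs
  have hbv : algebraMap R (FractionRing R) b = algebraMap R (FractionRing R) v * η⁻¹ := by
    rw [hvb, mul_assoc, mul_inv_cancel₀ hη0, mul_one]
  have hle : k * i + j ≤ 2 * k := by
    obtain ⟨ζ, hζ, hvz⟩ := uin_of_span_eq H hR (a := v ^ (2 * k)) (b := p ^ (k * i) * q ^ j) (by
      rw [← Ideal.span_singleton_mul_span_singleton, ← Ideal.span_singleton_pow,
        ← Ideal.span_singleton_pow, ← Ideal.span_singleton_pow, hvs, hp, hq]
      rw [mul_pow, ← pow_mul, ← pow_mul, ← pow_mul, ← pow_mul]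
      ring_nf)
    have := length_bound O H hH hR h₁ h₂ hp₁ hp₂ hk ho₂ hcl
      (List.replicate (k * i * m) (algebraMap R (FractionRing R) p) ++
        List.replicate (j * m) (algebraMap R (FractionRing R) q))
      (by
        intro x hx
        rcases List.mem_append.1 hx with hx | hx
        · rw [List.eq_of_mem_replicate hx]; exact ⟨hR p hp0, up⟩
        · rw [List.eq_of_mem_replicate hx]; exact ⟨hR q hq0, uq⟩)
      ((b ^ m) ^ (2 * k)) (m * (2 * k)) (k * (m * (2 * k))) (ζ ^ m * η⁻¹ ^ (2 * k * m))
      (O.pow_mem bO _) (pow_ne_zero _ (pow_ne_zero _ hb0))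
      (by rw [← pow_mul, ← Ideal.span_singleton_pow, hb, mul_pow, pow_mul P₂])
      ((hζ.pow _).mul (hη.inv.pow _))
      (by
        rw [List.prod_append, List.prod_replicate, List.prod_replicate]
        calc algebraMap R (FractionRing R) ((b ^ m) ^ (2 * k))
            = (algebraMap R (FractionRing R) (v ^ (2 * k))) ^ m * η⁻¹ ^ (2 * k * m) := by
              rw [map_pow, map_pow, hbv, map_pow]; ring
          _ = _ := by rw [hvz, map_mul, map_pow, map_pow]; ring)
    simp only [List.length_append, List.length_replicate] at this
    have h4 : (2 * k * m) * (k * i + j) ≤ (2 * k * m) * (2 * k) := by nlinarith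
    exact Nat.le_of_mul_le_mul_left h4 (by positivity)
  have hpos : 0 < k * i + j := by
    by_contra hcon
    have h0 : k * i = 0 ∧ j = 0 := by omega
    have hi : i = 0 := by
      rcases Nat.mul_eq_zero.1 h0.1 with h | h
      · omega
      · exact h
    rw [hi, h0.2] at hvs
    obtain ⟨ζ, hζ, hvz⟩ := uin_of_span_eq H hR (a := v) (b := 1) (by rw [hvs]; simp)
    apply ub
    rw [hbv, hvz, map_one, one_mul]
    exact hζ.mul hη.inv
  have heq : k * i + j = 2 * k := le_antisymm hle (Nat.le_of_dvd hpos hvd)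
  have hi2 : i ≤ 2 := by
    by_contra hcon
    have : 3 ≤ i := by omega
    nlinarith
  have hbK := inj b hb0
  have hvK := inj v hv0
  interval_cases i
  · exfalso
    have hj : j = 2 * k := by omega
    subst hj
    obtain ⟨ζ, hζ, hz⟩ := uin_of_span_eq H hR (a := v * e) (b := b * c ^ k) (by
      rw [← Ideal.span_singleton_mul_span_singleton, ← Ideal.span_singleton_mul_span_singleton,
        ← Ideal.span_singleton_pow, hvs, hb, hc, he]; ring)
    apply noassoc (ζ * η⁻¹) (hζ.mul hη.inv)
    apply mul_left_cancel₀ hvK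
    rw [← map_mul, hz, map_mul, map_pow, hbv]; ring
  · have hj : j = k := by omega
    subst hj
    exact ⟨v, hv, by rw [hvs, pow_one]⟩
  · exfalso
    have hj : j = 0 := by omega
    subst hj
    obtain ⟨ζ, hζ, hz⟩ := uin_of_span_eq H hR (a := b * e) (b := v * c ^ k) (by
      rw [← Ideal.span_singleton_mul_span_singleton, ← Ideal.span_singleton_mul_span_singleton,
        ← Ideal.span_singleton_pow, hvs, hb, hc, he]; ring)
    apply noassoc (ζ * η) (hζ.mul hη)
    apply mul_left_cancel₀ hbK
    rw [← map_mul, hz, map_mul, map_pow, hvb]; ring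
end

section
/- Under the standing assumptions with |Cl(R)| ≠ 2 and O transfer Krull via a Krull overmonoid H: if a, b ∈ Reg_f(R) are associated in H and a is absolutely irreducible in R, then β(a) = β(b), where β : R^• → B(Cl(R)) is the block homomorphism. -/
open scoped nonZeroDivisors

variable {R₀ : Type*}

open Classical in
/-- The block homomorphism `β`: sends `a` to the multiset of ideal classes of the primes
dividing `aR`, with multiplicity. -/
noncomputable def blockOf {R : Type*} [CommRing R] [IsDomain R] [IsDedekindDomain R]
    (a : R) : Multiset (ClassGroup R) :=
  (UniqueFactorizationMonoid.normalizedFactors (Ideal.span {a})).map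
    (fun I => if h : I ∈ (Ideal R)⁰ then ClassGroup.mk0 ⟨I, h⟩ else 1)

/-- Abstract properties of the relation `associated in H` on the regular elements. -/
structure SimCtx {R : Type*} [CommRing R] (S : Submonoid R) (Sim : R → R → Prop) : Prop where
  sat : ∀ x y, x * y ∈ S → x ∈ S
  unit : ∀ x, IsUnit x → x ∈ S
  ne : ∀ x ∈ S, x ≠ 0
  rfl' : ∀ x, Sim x x
  symm' : ∀ x y, Sim x y → Sim y x
  trans' : ∀ x y z, Sim x y → Sim y z → Sim x z
  mul' : ∀ x y z w, Sim x y → Sim z w → Sim (x * z) (y * w)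
  cancel : ∀ x y z, z ∈ S → Sim (z * x) (z * y) → Sim x y
  root : ∀ x y n, x ∈ S → y ∈ S → 0 < n → Sim (x ^ n) (y ^ n) → Sim x y
  assoc : ∀ x y, Associated x y → Sim x y
  one : ∀ x ∈ S, Sim x 1 → IsUnit x
  lift : ∀ x y c, x ∈ S → y ∈ S → c ∈ S → Sim (x * y) c → ∃ v ∈ S, ∃ N, v ∣ c ^ N ∧ Sim v x

theorem krull_root {H : Type*} [CommMonoid H] (hK : IsKrullMonoid H) (x y : H) (n : ℕ)
    (hn : 0 < n) (h : x ^ n ∣ y ^ n) : x ∣ y := by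
  obtain ⟨ι, d, hd⟩ := hK
  apply hd
  have h1 : d x ^ n ∣ d y ^ n := by
    rw [← map_pow, ← map_pow]; exact map_dvd d h
  obtain ⟨z, hz⟩ := h1
  have h2 : ∀ i, (Multiplicative.toAdd (d x)) i ≤ (Multiplicative.toAdd (d y)) i := by
    intro i
    have h3 := congrArg (fun t => (Multiplicative.toAdd t) i) hz
    simp only [toAdd_pow, toAdd_mul, Finsupp.add_apply, Finsupp.smul_apply, smul_eq_mul] at h3
    have : n * (Multiplicative.toAdd (d x)) i ≤ n * (Multiplicative.toAdd (d y)) i := by omega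
    exact Nat.le_of_mul_le_mul_left this hn
  refine ⟨Multiplicative.ofAdd (Multiplicative.toAdd (d y) - Multiplicative.toAdd (d x)), ?_⟩
  apply Multiplicative.toAdd.injective
  rw [toAdd_mul, toAdd_ofAdd]
  ext i
  have := h2 i
  simp only [Finsupp.add_apply, Finsupp.tsub_apply]
  omega

/-- The submonoid of elements regular modulo `f`. -/
def regSub {R : Type*} [CommRing R] (f : Ideal R) : Submonoid R where
  carrier := {x | RegF f x}
  mul_mem' := by
    intro a b ha hb
    show IsUnit _
    rw [map_mul]; exact IsUnit.mul ha hb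
  one_mem' := by show IsUnit _; rw [map_one]; exact isUnit_one

theorem simCtx_of
    {R : Type*} [CommRing R] [IsDomain R] [IsDedekindDomain R]
    (O : Subring R) (hne : O ≠ ⊤)
    (hfrac : ∀ r : R, ∃ a b : ↥O, (b : R) ≠ 0 ∧ (b : R) * r = (a : R))
    (hfin : Finite (R ⧸ O.conductor))
    (H : Submonoid (FractionRing R)) (hH : IsTKOvermonoid O H) :
    SimCtx (regSub O.conductor)
      (fun x y => AssocIn H (algebraMap R (FractionRing R) x) (algebraMap R (FractionRing R) y)) := by
  have hinj : Function.Injective (algebraMap R (FractionRing R)) := IsFractionRing.injective _ _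
  have hsat : ∀ x y, x * y ∈ regSub O.conductor → x ∈ regSub O.conductor := by
    intro x y h
    change IsUnit _ at h
    rw [map_mul] at h
    exact isUnit_of_mul_isUnit_left h
  have hunit : ∀ x, IsUnit x → x ∈ regSub O.conductor := fun x hx => hx.map _
  have hnz : ∀ x ∈ regSub O.conductor, x ≠ 0 := by
    rintro x hx rfl
    change IsUnit _ at hx
    rw [map_zero, isUnit_zero_iff] at hx
    have h1 : (1 : R) ∈ O.conductor := by
      rw [← Ideal.Quotient.eq_zero_iff_mem, map_one]; exact hx.symm
    apply hne
    rw [eq_top_iff]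
    intro r _
    have := h1 r
    rwa [one_mul] at this
  have hpow : ∀ x ∈ regSub O.conductor, ∃ N, 0 < N ∧ x ^ N ∈ O := by
    intro x hx
    obtain ⟨u, hu⟩ : IsUnit _ := hx
    obtain ⟨N, hN, h⟩ := (isOfFinOrder_of_finite u).exists_pow_eq_one
    refine ⟨N, hN, ?_⟩
    have h2 : x ^ N - 1 ∈ O.conductor := by
      rw [← Ideal.Quotient.eq_zero_iff_mem, map_sub, map_pow, ← hu, ← Units.val_pow_eq_pow_val, h]
      simp
    have h3 := h2 1
    rw [mul_one] at h3
    have := O.add_mem h3 O.one_mem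
    simpa using this
  have hSH : ∀ x ∈ regSub O.conductor, algebraMap R (FractionRing R) x ∈ H := by
    intro x hx
    obtain ⟨N, hN, hxN⟩ := hpow x hx
    obtain ⟨a, b, hb, hab⟩ := hfrac x
    have ha : (a : R) ≠ 0 := by rw [← hab]; exact mul_ne_zero hb (hnz x hx)
    have hbH := hH.incl b b.2 hb
    have haH := hH.incl a a.2 ha
    have hxH := hH.incl _ hxN (pow_ne_zero _ (hnz x hx))
    have := krull_root hH.krull (⟨_, hbH⟩ : H) ⟨_, haH⟩ N hN ⟨⟨_, hxH⟩, by
      apply Subtype.ext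
      simp only [Submonoid.coe_mul, SubmonoidClass.coe_pow]
      rw [← map_pow, ← map_pow, ← map_mul, ← mul_pow, hab]⟩
    obtain ⟨⟨z, hz⟩, hz'⟩ := this
    have hz2 := congrArg Subtype.val hz'
    simp only [Submonoid.coe_mul] at hz2
    rw [← hab, map_mul] at hz2
    have hb0 : algebraMap R (FractionRing R) b ≠ 0 := by
      simpa using hb
    rw [mul_left_cancel₀ hb0 hz2]; exact hz
  have htrans : ∀ x y z : FractionRing R, AssocIn H x y → AssocIn H y z → AssocIn H x z := by
    rintro x y z ⟨e, he, ⟨e', he', h1⟩, rfl⟩ ⟨g, hg, ⟨g', hg', h2⟩, rfl⟩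
    refine ⟨g * e, H.mul_mem hg he, ⟨g' * e', H.mul_mem hg' he', ?_⟩, by ring⟩
    calc g * e * (g' * e') = (g * g') * (e * e') := by ring
      _ = 1 := by rw [h1, h2, one_mul]
  refine ⟨hsat, hunit, hnz, ?_, ?_, ?_, ?_, ?_, ?_, ?_, ?_, ?_⟩
  · exact fun x => ⟨1, H.one_mem, ⟨1, H.one_mem, one_mul _⟩, (mul_one _).symm⟩
  · rintro x y ⟨e, he, ⟨e', he', h1⟩, h⟩
    refine ⟨e', he', ⟨e, he, by rw [mul_comm, h1]⟩, ?_⟩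
    rw [h, mul_assoc, h1, mul_one]
  · intro x y z
    exact htrans _ _ _
  · rintro x y z w ⟨e, he, ⟨e', he', h1⟩, h⟩ ⟨g, hg, ⟨g', hg', h2⟩, h'⟩
    refine ⟨g * e, H.mul_mem hg he, ⟨g' * e', H.mul_mem hg' he', ?_⟩, ?_⟩
    · calc g * e * (g' * e') = (g * g') * (e * e') := by ring
        _ = 1 := by rw [h1, h2, one_mul]
    · rw [map_mul, map_mul, h, h']; ring
  · rintro x y z hz ⟨e, he, he', h⟩
    refine ⟨e, he, he', ?_⟩
    have hz0 : algebraMap R (FractionRing R) z ≠ 0 := by simpa using hnz z hz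
    apply mul_left_cancel₀ hz0
    rw [← map_mul, h, map_mul, mul_assoc]
  · rintro x y n hx hy hn ⟨e, he, ⟨e', he', h1⟩, h⟩
    rw [map_pow, map_pow] at h
    have hxH := hSH x hx
    have hyH := hSH y hy
    have d1 := krull_root hH.krull (⟨_, hyH⟩ : H) ⟨_, hxH⟩ n hn ⟨⟨e, he⟩, by
      apply Subtype.ext
      simpa only [Submonoid.coe_mul, SubmonoidClass.coe_pow] using h⟩
    have d2 := krull_root hH.krull (⟨_, hxH⟩ : H) ⟨_, hyH⟩ n hn ⟨⟨e', he'⟩, by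
      apply Subtype.ext
      simp only [Submonoid.coe_mul, SubmonoidClass.coe_pow]
      rw [h, mul_assoc, h1, mul_one]⟩
    obtain ⟨⟨z, hz⟩, hz'⟩ := d1
    obtain ⟨⟨w, hw⟩, hw'⟩ := d2
    have hz2 := congrArg Subtype.val hz'
    have hw2 := congrArg Subtype.val hw'
    simp only [Submonoid.coe_mul] at hz2 hw2
    have hx0 : algebraMap R (FractionRing R) x ≠ 0 := by simpa using hnz x hx
    refine ⟨z, hz, ⟨w, hw, ?_⟩, hz2⟩
    apply mul_left_cancel₀ hx0
    rw [mul_one]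
    nth_rewrite 2 [hz2]
    rw [hw2]; ring
  · rintro x y hxy
    obtain ⟨u, hu⟩ := hxy.symm
    refine ⟨algebraMap R _ u, hSH _ (hunit _ u.isUnit), ⟨algebraMap R _ (u⁻¹ : Rˣ), hSH _ (hunit _ (u⁻¹).isUnit), ?_⟩, ?_⟩
    · rw [← map_mul]; simp
    · rw [← map_mul, hu]
  · rintro x hx ⟨e, he, ⟨e', he', h1⟩, h⟩
    rw [map_one, one_mul] at h
    obtain ⟨N, hN, hxN⟩ := hpow x hx
    obtain ⟨b, hb, hb'⟩ := hH.t1' _ hxN (pow_ne_zero _ (hnz x hx)) ⟨e' ^ N, H.pow_mem he' N, by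
      rw [map_pow, ← mul_pow, h, h1, one_pow]⟩
    exact (isUnit_pow_iff hN.ne').1 (IsUnit.of_mul_eq_one _ hb')
  · rintro x y c hx hy hc hs
    obtain ⟨e, he, ⟨e', he', h1⟩, h⟩ := hs
    obtain ⟨N, hN, hcN⟩ := hpow c hc
    have hxy : algebraMap R (FractionRing R) c =
        algebraMap R (FractionRing R) x * (algebraMap R (FractionRing R) y * e') := by
      rw [← mul_assoc, ← map_mul, h, mul_assoc, h1, mul_one]
    obtain ⟨v, w, hv, hw, hvw, hvx, -⟩ := hH.t2 _ hcN (pow_ne_zero _ (hnz c hc)) _ (hSH x hx)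
      (algebraMap R (FractionRing R) y * e' * algebraMap R (FractionRing R) c ^ (N - 1))
      (H.mul_mem (H.mul_mem (hSH y hy) he') (H.pow_mem (hSH c hc) _)) (by
        obtain ⟨M, rfl⟩ := Nat.exists_eq_succ_of_ne_zero hN.ne'
        simp only [Nat.succ_eq_add_one, Nat.add_sub_cancel]
        rw [map_pow, pow_succ]
        nth_rewrite 2 [hxy]
        ring)
    refine ⟨v, hsat v w (hvw ▸ pow_mem hc N), N, ⟨w, hvw⟩, hvx⟩

/-- Same as `SimCtx`, with the relation given as the kernel of a monoid homomorphism. -/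
structure PhiCtx {R Q : Type*} [CommRing R] [CommMonoid Q] (S : Submonoid R) (φ : R →* Q) : Prop where
  sat : ∀ x y, x * y ∈ S → x ∈ S
  ne : ∀ x ∈ S, x ≠ 0
  cancel : ∀ x y z, z ∈ S → φ (z * x) = φ (z * y) → φ x = φ y
  root : ∀ x y n, x ∈ S → y ∈ S → 0 < n → φ (x ^ n) = φ (y ^ n) → φ x = φ y
  assoc : ∀ x y, Associated x y → φ x = φ y
  one : ∀ x ∈ S, φ x = 1 → IsUnit x
  lift : ∀ x y c, x ∈ S → y ∈ S → c ∈ S → φ (x * y) = φ c → ∃ v ∈ S, ∃ N, v ∣ c ^ N ∧ φ v = φ x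

/-- A regular prime together with a generator of its smallest principal power. -/
structure RP {R : Type*} [CommRing R] [IsDedekindDomain R] (S : Submonoid R) where
  P : Ideal R
  prime : P.IsPrime
  mem : P ∈ (Ideal R)⁰
  p : R
  pS : p ∈ S
  gen : Ideal.span {p} = P ^ orderOf (ClassGroup.mk0 ⟨P, mem⟩)

namespace RP
variable {R Q : Type*} [CommRing R] [IsDedekindDomain R] [CommMonoid Q] {S : Submonoid R}
  {φ : R →* Q}

/-- The class of the prime. -/
noncomputable def cls (A : RP S) : ClassGroup R := ClassGroup.mk0 ⟨A.P, A.mem⟩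

/-- The order of the class of the prime. -/
noncomputable def m (A : RP S) : ℕ := orderOf A.cls

theorem gen' (A : RP S) : Ideal.span {A.p} = A.P ^ A.m := A.gen

theorem clsPow (A : RP S) : A.cls ^ A.m = 1 := pow_orderOf_eq_one _

theorem isPrime (A : RP S) : Prime A.P :=
  Ideal.prime_of_isPrime (nonZeroDivisors.ne_zero A.mem) A.prime

theorem mpos (htor : ∀ c : ClassGroup R, ∃ n : ℕ, 0 < n ∧ c ^ n = 1) (A : RP S) : 0 < A.m := by
  obtain ⟨n, hn, h⟩ := htor A.cls
  exact orderOf_pos_iff.2 (isOfFinOrder_iff_pow_eq_one.2 ⟨n, hn, h⟩)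

theorem not_unit (htor : ∀ c : ClassGroup R, ∃ n : ℕ, 0 < n ∧ c ^ n = 1) (A : RP S) :
    ¬ IsUnit A.p := by
  intro h
  rw [← Ideal.span_singleton_eq_top, A.gen', ← Ideal.one_eq_top] at h
  exact A.isPrime.not_unit ((isUnit_pow_iff (A.mpos htor).ne').1 (h ▸ isUnit_one))

theorem prin3 (A B C : RP S) (i j l : ℕ) :
    A.cls ^ i * B.cls ^ j * C.cls ^ l = 1 ↔ ∃ v, Ideal.span {v} = A.P ^ i * B.P ^ j * C.P ^ l := by
  unfold cls
  rw [← map_pow, ← map_pow, ← map_pow, ← map_mul, ← map_mul, ClassGroup.mk0_eq_one_iff]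
  simp only [Submonoid.coe_mul, SubmonoidClass.coe_pow]
  constructor
  · rintro ⟨v, hv⟩
    exact ⟨v, hv.symm⟩
  · rintro ⟨v, hv⟩
    exact ⟨v, hv.symm⟩

theorem prin2 (A B : RP S) (i j : ℕ) :
    A.cls ^ i * B.cls ^ j = 1 ↔ ∃ v, Ideal.span {v} = A.P ^ i * B.P ^ j := by
  simpa using prin3 A B A i j 0

theorem prin1 (A : RP S) (i : ℕ) : A.cls ^ i = 1 ↔ ∃ v, Ideal.span {v} = A.P ^ i := by
  simpa using prin3 A A A i 0 0

theorem div1 (A : RP S) (v : R) (N : ℕ) (h : v ∣ A.p ^ N) : ∃ i, Associated v (A.p ^ i) := by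
  rw [← Ideal.span_singleton_le_span_singleton, ← Ideal.dvd_iff_le, ← Ideal.span_singleton_pow,
    A.gen', ← pow_mul] at h
  obtain ⟨k, -, hk⟩ := (dvd_prime_pow A.isPrime _).1 h
  rw [associated_iff_eq] at hk
  have h1 := (prin1 A k).2 ⟨v, hk⟩
  obtain ⟨i, rfl⟩ := orderOf_dvd_of_pow_eq_one h1
  refine ⟨i, ?_⟩
  rw [← Ideal.span_singleton_eq_span_singleton, hk, ← Ideal.span_singleton_pow, A.gen', ← pow_mul]
  rfl

theorem div3 (A B C : RP S) (v : R) (a b c N : ℕ) (h : v ∣ (A.p ^ a * B.p ^ b * C.p ^ c) ^ N) :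
    ∃ i j l, Ideal.span {v} = A.P ^ i * B.P ^ j * C.P ^ l := by
  rw [← Ideal.span_singleton_le_span_singleton, ← Ideal.dvd_iff_le, ← Ideal.span_singleton_pow,
    ← Ideal.span_singleton_mul_span_singleton, ← Ideal.span_singleton_mul_span_singleton,
    ← Ideal.span_singleton_pow, ← Ideal.span_singleton_pow, ← Ideal.span_singleton_pow,
    A.gen', B.gen', C.gen', mul_pow, mul_pow, ← pow_mul, ← pow_mul, ← pow_mul, ← pow_mul,
    ← pow_mul, ← pow_mul] at h
  obtain ⟨x, z, hx, hz, hv⟩ := exists_dvd_and_dvd_of_dvd_mul h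
  obtain ⟨x', y, hx', hy, rfl⟩ := exists_dvd_and_dvd_of_dvd_mul hx
  obtain ⟨i, -, hi⟩ := (dvd_prime_pow A.isPrime _).1 hx'
  obtain ⟨j, -, hj⟩ := (dvd_prime_pow B.isPrime _).1 hy
  obtain ⟨l, -, hl⟩ := (dvd_prime_pow C.isPrime _).1 hz
  rw [associated_iff_eq] at hi hj hl
  exact ⟨i, j, l, by rw [hv, hi, hj, hl]⟩

theorem div2 (A B : RP S) (v : R) (a b N : ℕ) (h : v ∣ (A.p ^ a * B.p ^ b) ^ N) :
    ∃ i j, Ideal.span {v} = A.P ^ i * B.P ^ j := by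
  obtain ⟨i, j, l, h⟩ := div3 A B B v a b 0 N (by simpa using h)
  exact ⟨i, j + l, by rw [h]; ring⟩

theorem lemF (hc : PhiCtx S φ) (A : RP S) (x y : R) (N : ℕ) (hx : x ∈ S) (hy : y ∈ S)
    (h : φ (x * y) = φ (A.p ^ N)) : ∃ i, φ x = φ (A.p ^ i) := by
  obtain ⟨v, -, M, hv, hvx⟩ := hc.lift x y _ hx hy (pow_mem A.pS N) h
  rw [← pow_mul] at hv
  obtain ⟨i, hi⟩ := A.div1 v _ hv
  exact ⟨i, by rw [← hvx, hc.assoc _ _ hi]⟩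

theorem lemOne (htor : ∀ c : ClassGroup R, ∃ n : ℕ, 0 < n ∧ c ^ n = 1) (hc : PhiCtx S φ)
    (A : RP S) (x : R) (hx : x ∈ S) : φ (A.p * x) ≠ 1 := by
  intro h
  exact A.not_unit htor (isUnit_of_mul_isUnit_left (hc.one _ (mul_mem A.pS hx) h))

theorem powInj (htor : ∀ c : ClassGroup R, ∃ n : ℕ, 0 < n ∧ c ^ n = 1) (hc : PhiCtx S φ)
    (A : RP S) (i j : ℕ) (h : φ (A.p ^ i) = φ (A.p ^ j)) : i = j := by
  wlog hij : i ≤ j generalizing i j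
  · exact (this j i h.symm (by omega)).symm
  obtain ⟨d, rfl⟩ := Nat.exists_eq_add_of_le hij
  rcases d with _ | d
  · rfl
  exfalso
  have := hc.cancel 1 (A.p ^ (d + 1)) (A.p ^ i) (pow_mem A.pS i) (by rw [mul_one, h, pow_add])
  rw [pow_succ', map_one] at this
  exact A.lemOne htor hc _ (pow_mem A.pS d) this.symm

theorem dvdEq (htor : ∀ c : ClassGroup R, ∃ n : ℕ, 0 < n ∧ c ^ n = 1) (hc : PhiCtx S φ)
    (A B : RP S) (y : R) (N : ℕ) (hy : y ∈ S) (h : φ (A.p * y) = φ (B.p ^ N)) :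
    φ A.p = φ B.p := by
  obtain ⟨s, hs⟩ := B.lemF hc _ _ _ A.pS hy h
  rcases s with _ | s
  · exfalso
    refine A.lemOne htor hc 1 S.one_mem ?_
    rw [mul_one, hs, pow_zero, map_one]
  obtain ⟨t, ht⟩ := A.lemF hc B.p (B.p ^ s) 1 B.pS (pow_mem B.pS s) (by rw [← pow_succ', ← hs, pow_one])
  have h1 : φ (A.p ^ 1) = φ (A.p ^ (t * (s + 1))) := by
    rw [pow_one, hs, map_pow, ht, ← map_pow, ← pow_mul]
  have h2 := A.powInj htor hc _ _ h1
  have h3 : s + 1 = 1 := Nat.eq_one_of_mul_eq_one_left h2.symm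
  rw [hs, h3, pow_one]

theorem indep2 (htor : ∀ c : ClassGroup R, ∃ n : ℕ, 0 < n ∧ c ^ n = 1) (hc : PhiCtx S φ)
    (A B : RP S) (hAB : φ A.p ≠ φ B.p) (x y x' y' : ℕ)
    (h : φ (A.p ^ x * B.p ^ y) = φ (A.p ^ x' * B.p ^ y')) : x = x' ∧ y = y' := by
  wlog hx : x ≤ x' generalizing x y x' y'
  · have := this x' y' x y h.symm (by omega)
    omega
  obtain ⟨d, rfl⟩ := Nat.exists_eq_add_of_le hx
  rw [pow_add, mul_assoc] at h
  have h1 := hc.cancel _ _ _ (pow_mem A.pS x) h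
  rcases d with _ | d
  · rw [pow_zero, one_mul] at h1
    exact ⟨rfl, B.powInj htor hc _ _ h1⟩
  · exfalso
    apply hAB
    rw [pow_succ', mul_assoc] at h1
    exact dvdEq htor hc A B _ y (mul_mem (pow_mem A.pS _) (pow_mem B.pS _)) h1.symm

theorem indep3 (htor : ∀ c : ClassGroup R, ∃ n : ℕ, 0 < n ∧ c ^ n = 1) (hc : PhiCtx S φ)
    (A B C : RP S) (hAB : φ A.p ≠ φ B.p) (hAC : φ A.p ≠ φ C.p) (x y z x' y' z' : ℕ)
    (h : φ (A.p ^ x * B.p ^ y * C.p ^ z) = φ (A.p ^ x' * B.p ^ y' * C.p ^ z')) : x = x' := by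
  wlog hx : x ≤ x' generalizing x y z x' y' z'
  · exact (this x' y' z' x y z h.symm (by omega)).symm
  obtain ⟨d, rfl⟩ := Nat.exists_eq_add_of_le hx
  rw [pow_add, mul_assoc, mul_assoc, mul_assoc] at h
  have h1 := hc.cancel _ _ _ (pow_mem A.pS x) h
  rcases d with _ | d
  · rfl
  exfalso
  have mB : ∀ n, B.p ^ n ∈ S := fun n => pow_mem B.pS n
  have mC : ∀ n, C.p ^ n ∈ S := fun n => pow_mem C.pS n
  have mA : ∀ n, A.p ^ n ∈ S := fun n => pow_mem A.pS n
  rcases le_or_gt y y' with hy | hy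
  · obtain ⟨e, rfl⟩ := Nat.exists_eq_add_of_le hy
    have h2 : φ (C.p ^ z) = φ (A.p ^ (d + 1) * B.p ^ e * C.p ^ z') :=
      hc.cancel _ _ _ (mB y) (by rw [h1]; congr 1; ring)
    rcases le_or_gt z z' with hz | hz
    · obtain ⟨f, rfl⟩ := Nat.exists_eq_add_of_le hz
      have h3 : φ 1 = φ (A.p * (A.p ^ d * B.p ^ e * C.p ^ f)) :=
        hc.cancel _ _ _ (mC z) (by rw [mul_one, h2]; congr 1; ring)
      rw [map_one] at h3
      exact A.lemOne htor hc _ (mul_mem (mul_mem (mA _) (mB _)) (mC _)) h3.symm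
    · exact hAC (dvdEq htor hc A C (A.p ^ d * B.p ^ e * C.p ^ z') z
        (mul_mem (mul_mem (mA _) (mB _)) (mC _)) (by rw [h2]; congr 1; ring))
  · obtain ⟨e, rfl⟩ := Nat.exists_eq_add_of_lt hy
    have h2 : φ (B.p ^ (e + 1) * C.p ^ z) = φ (A.p ^ (d + 1) * C.p ^ z') :=
      hc.cancel _ _ _ (mB y') (by
        trans φ (B.p ^ (y' + e + 1) * C.p ^ z)
        · congr 1; ring
        · rw [h1]; congr 1; ring)
    rcases le_or_gt z z' with hz | hz
    · obtain ⟨f, rfl⟩ := Nat.exists_eq_add_of_le hz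
      have h3 : φ (B.p ^ (e + 1)) = φ (A.p * (A.p ^ d * C.p ^ f)) :=
        hc.cancel _ _ _ (mC z) (by
          trans φ (B.p ^ (e + 1) * C.p ^ z)
          · congr 1; ring
          · rw [h2]; congr 1; ring)
      exact hAB (dvdEq htor hc A B _ _ (mul_mem (mA _) (mC _)) h3.symm)
    · obtain ⟨f, rfl⟩ := Nat.exists_eq_add_of_lt hz
      have h3 : φ (B.p * (B.p ^ e * C.p ^ (f + 1))) = φ (A.p ^ (d + 1)) :=
        hc.cancel _ _ _ (mC z') (by
          trans φ (B.p ^ (e + 1) * C.p ^ (z' + f + 1))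
          · congr 1; ring
          · rw [h2]; congr 1; ring)
      exact hAB (dvdEq htor hc B A _ _ (mul_mem (mB _) (mC _)) h3).symm

/-- Powers of an element whose ideal is supported on three primes. -/
theorem pow3 (hc : PhiCtx S φ) (A B C : RP S) (v : R) (i j l M a b c : ℕ)
    (hv : Ideal.span {v} = A.P ^ i * B.P ^ j * C.P ^ l)
    (ha : i * M = A.m * a) (hb : j * M = B.m * b) (hcc : l * M = C.m * c) :
    φ (v ^ M) = φ (A.p ^ a * B.p ^ b * C.p ^ c) := by
  apply hc.assoc
  rw [← Ideal.span_singleton_eq_span_singleton, ← Ideal.span_singleton_pow,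
    ← Ideal.span_singleton_mul_span_singleton, ← Ideal.span_singleton_mul_span_singleton,
    ← Ideal.span_singleton_pow, ← Ideal.span_singleton_pow, ← Ideal.span_singleton_pow,
    A.gen', B.gen', C.gen', hv, mul_pow, mul_pow, ← pow_mul, ← pow_mul, ← pow_mul, ← pow_mul,
    ← pow_mul, ← pow_mul, ha, hb, hcc]

theorem pow2 (hc : PhiCtx S φ) (A B : RP S) (v : R) (i j M a b : ℕ)
    (hv : Ideal.span {v} = A.P ^ i * B.P ^ j)
    (ha : i * M = A.m * a) (hb : j * M = B.m * b) :
    φ (v ^ M) = φ (A.p ^ a * B.p ^ b) := by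
  have := pow3 hc A B B v i j 0 M a b 0 (by simpa using hv) ha hb (by simp)
  simpa using this

theorem mem3 (htor : ∀ c : ClassGroup R, ∃ n : ℕ, 0 < n ∧ c ^ n = 1) (hc : PhiCtx S φ)
    (A B C : RP S) (v : R) (i j l : ℕ)
    (hv : Ideal.span {v} = A.P ^ i * B.P ^ j * C.P ^ l) : v ∈ S := by
  have h : Associated (v ^ (A.m * B.m * C.m))
      (A.p ^ (i * B.m * C.m) * B.p ^ (j * A.m * C.m) * C.p ^ (l * A.m * B.m)) := by
    rw [← Ideal.span_singleton_eq_span_singleton, ← Ideal.span_singleton_pow,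
      ← Ideal.span_singleton_mul_span_singleton, ← Ideal.span_singleton_mul_span_singleton,
      ← Ideal.span_singleton_pow, ← Ideal.span_singleton_pow, ← Ideal.span_singleton_pow,
      A.gen', B.gen', C.gen', hv]
    ring
  have hpos : 0 < A.m * B.m * C.m := Nat.mul_pos (Nat.mul_pos (A.mpos htor) (B.mpos htor)) (C.mpos htor)
  have hd : v ∣ A.p ^ (i * B.m * C.m) * B.p ^ (j * A.m * C.m) * C.p ^ (l * A.m * B.m) :=
    (dvd_pow_self v hpos.ne').trans h.dvd
  obtain ⟨w, hw⟩ := hd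
  apply hc.sat v w
  rw [← hw]
  exact mul_mem (mul_mem (pow_mem A.pS _) (pow_mem B.pS _)) (pow_mem C.pS _)

theorem m_eq_of_inv (A B : RP S) (h : B.cls = A.cls⁻¹) : B.m = A.m := by
  unfold m; rw [h, orderOf_inv]

theorem M1 (htor : ∀ c : ClassGroup R, ∃ n : ℕ, 0 < n ∧ c ^ n = 1) (hc : PhiCtx S φ)
    (hex : ∀ c : ClassGroup R, ∃ A : RP S, A.cls = c)
    (A B : RP S) (hAB : φ A.p = φ B.p) :
    A.m ∣ 2 ∨ ∃ i, A.cls = B.cls ^ i ∧ i * A.m = B.m := by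
  obtain ⟨T, hT⟩ := hex A.cls⁻¹
  have hTm := m_eq_of_inv A T hT
  obtain ⟨c, hcs⟩ := (prin2 A T 1 1).1 (by rw [hT]; simp)
  have hcS : c ∈ S := mem3 htor hc A T T c 1 1 0 (by simpa using hcs)
  have hcm : φ (c ^ A.m) = φ (A.p ^ 1 * T.p ^ 1) :=
    pow2 hc A T c 1 1 A.m 1 1 hcs (by ring) (by rw [hTm]; ring)
  have hmp := A.mpos htor
  have hsplit : c * c ^ (A.m - 1) = c ^ A.m := by
    rw [← pow_succ']; congr 1; omega
  by_cases hAT : φ A.p = φ T.p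
  · left
    have h1 : φ (c ^ A.m) = φ (A.p ^ 2) := by
      rw [hcm, pow_one, pow_one, map_mul, ← hAT, map_pow, sq]
    obtain ⟨i, hi⟩ := A.lemF hc c (c ^ (A.m - 1)) 2 hcS (pow_mem hcS _) (by rw [hsplit, h1])
    have h2 : φ (A.p ^ (i * A.m)) = φ (A.p ^ 2) := by
      rw [← h1, map_pow, map_pow, hi, map_pow, pow_mul]
    exact ⟨i, by rw [← A.powInj htor hc _ _ h2]; ring⟩
  · right
    have h1 : φ (c ^ A.m) = φ (B.p ^ 1 * T.p ^ 1) := by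
      rw [hcm, pow_one, pow_one, pow_one, map_mul, map_mul, hAB]
    obtain ⟨v, hvS, N, hv, hvc⟩ := hc.lift c (c ^ (A.m - 1)) (B.p ^ 1 * T.p ^ 1) hcS (pow_mem hcS _)
      (mul_mem (pow_mem B.pS _) (pow_mem T.pS _)) (by rw [hsplit, h1])
    obtain ⟨i, l, hil⟩ := div2 B T v 1 1 N hv
    have h2 : φ (v ^ (A.m * B.m)) = φ (B.p ^ (i * A.m) * T.p ^ (l * B.m)) :=
      pow2 hc B T v i l _ _ _ hil (by ring) (by rw [hTm]; ring)
    have h3 : φ (v ^ (A.m * B.m)) = φ (B.p ^ B.m * T.p ^ B.m) := by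
      rw [map_pow, hvc, pow_mul, ← map_pow, h1, ← map_pow, pow_one, pow_one, mul_pow]
    obtain ⟨e1, e2⟩ := indep2 htor hc B T (by rw [← hAB]; exact hAT) _ _ _ _ (h2.symm.trans h3)
    have hl : l = 1 := by
      have := B.mpos htor
      exact Nat.eq_of_mul_eq_mul_right this (by rw [e2, one_mul])
    subst hl
    have h4 := (prin2 B T i 1).2 ⟨v, hil⟩
    rw [hT, pow_one] at h4
    exact ⟨i, (mul_inv_eq_one.1 h4).symm, e1⟩

theorem m_eq_two (A : RP S) (h : A.m ∣ 2) (h1 : A.cls ≠ 1) : A.m = 2 := by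
  rcases (Nat.dvd_prime Nat.prime_two).1 h with h | h
  · exact absurd (orderOf_eq_one_iff.1 h) h1
  · exact h

theorem M2 (htor : ∀ c : ClassGroup R, ∃ n : ℕ, 0 < n ∧ c ^ n = 1) (hc : PhiCtx S φ)
    (hex : ∀ c : ClassGroup R, ∃ A : RP S, A.cls = c)
    (A B : RP S) (hAB : φ A.p = φ B.p) (hA : A.m = 2) (hB : B.m = 2) : A.cls = B.cls := by
  by_contra hne
  have hA2 := A.clsPow
  have hB2 := B.clsPow
  rw [hA] at hA2
  rw [hB] at hB2
  obtain ⟨T, hT⟩ := hex (A.cls * B.cls)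
  have hT2 : T.cls ^ 2 = 1 := by rw [hT, mul_pow, hA2, hB2, one_mul]
  have hT1 : T.cls ≠ 1 := by
    intro h
    rw [hT] at h
    apply hne
    have : A.cls * B.cls = B.cls * B.cls := by rw [h, ← sq, hB2]
    exact mul_right_cancel this
  have hTm : T.m = 2 := T.m_eq_two (orderOf_dvd_of_pow_eq_one hT2) hT1
  obtain ⟨c, hcs⟩ := (prin3 A B T 1 1 1).1 (by
    rw [pow_one, pow_one, pow_one, ← hT, ← sq, hT2])
  have hcS := mem3 htor hc A B T c 1 1 1 hcs
  have hc2 : φ (c ^ 2) = φ (A.p ^ 1 * B.p ^ 1 * T.p ^ 1) :=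
    pow3 hc A B T c 1 1 1 2 1 1 1 hcs (by omega) (by omega) (by omega)
  have hc3 : φ (c ^ 2) = φ (A.p ^ 2 * T.p ^ 1) := by
    rw [hc2, map_mul, map_mul, map_mul, pow_one, pow_one, ← hAB, map_pow φ A.p 2, sq]
  by_cases hAT : φ A.p = φ T.p
  · have hc4 : φ (c ^ 2) = φ (A.p ^ 3) := by
      rw [hc3, map_mul, pow_one, ← hAT, ← map_mul, ← pow_succ]
    obtain ⟨i, hi⟩ := A.lemF hc c c 3 hcS hcS (by rw [← sq, hc4])
    have h2 : φ (A.p ^ (i * 2)) = φ (A.p ^ 3) := by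
      rw [← hc4, map_pow _ c, hi, map_pow, map_pow, pow_mul]
    have := A.powInj htor hc _ _ h2
    omega
  · obtain ⟨v, hvS, N, hv, hvc⟩ := hc.lift c c (A.p ^ 2 * T.p ^ 1) hcS hcS
      (mul_mem (pow_mem A.pS _) (pow_mem T.pS _)) (by rw [← sq, hc3])
    obtain ⟨i, l, hil⟩ := div2 A T v _ _ N hv
    have h2 : φ (v ^ 2) = φ (A.p ^ i * T.p ^ l) :=
      pow2 hc A T v i l _ _ _ hil (by rw [hA]; ring) (by rw [hTm]; ring)
    have h3 : φ (v ^ 2) = φ (A.p ^ 2 * T.p ^ 1) := by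
      rw [map_pow, hvc, ← map_pow, hc3]
    obtain ⟨rfl, rfl⟩ := indep2 htor hc A T hAT _ _ _ _ (h2.symm.trans h3)
    have h4 := (prin2 A T 2 1).2 ⟨v, hil⟩
    rw [hA2, one_mul, pow_one] at h4
    exact hT1 h4

theorem M3 (htor : ∀ c : ClassGroup R, ∃ n : ℕ, 0 < n ∧ c ^ n = 1) (hc : PhiCtx S φ)
    (hex : ∀ c : ClassGroup R, ∃ A : RP S, A.cls = c)
    (A B : RP S) (hAB : φ A.p = φ B.p) (hA : A.m = 1) (hB : B.m = 2)
    (k : ClassGroup R) (hk1 : k ≠ 1) (hkB : k ≠ B.cls) : False := by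
  have key : ∀ C : RP S, φ A.p = φ C.p → C.cls ≠ 1 → C.cls = B.cls := by
    intro C hAC hC1
    have hC : C.m = 2 := by
      apply C.m_eq_two _ hC1
      rcases M1 htor hc hex C A hAC.symm with h | ⟨i, -, h⟩
      · exact h
      · rw [hA] at h
        rw [Nat.eq_one_of_mul_eq_one_left h]
        exact one_dvd _
    exact M2 htor hc hex C B (hAC.symm.trans hAB) hC hB
  have hB2 := B.clsPow
  rw [hB] at hB2
  obtain ⟨K, hK⟩ := hex k
  obtain ⟨L, hL⟩ := hex (B.cls * k⁻¹)
  have hAK : φ A.p ≠ φ K.p := fun h => hkB (by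
    rw [← hK]; exact key K h (by rw [hK]; exact hk1))
  have hAL : φ A.p ≠ φ L.p := fun h => hk1 (by
    have := key L h (by rw [hL]; intro h; exact hkB (mul_inv_eq_one.1 h).symm)
    rw [hL] at this
    simpa using this)
  obtain ⟨c, hcs⟩ := (prin3 B K L 1 1 1).1 (by
    rw [pow_one, pow_one, pow_one, hK, hL]
    calc B.cls * k * (B.cls * k⁻¹) = B.cls ^ 2 * (k * k⁻¹) := by rw [sq]; ac_rfl
      _ = 1 := by rw [hB2]; simp)
  have hcS := mem3 htor hc B K L c 1 1 1 hcs
  have hNpos : 0 < K.m * L.m := Nat.mul_pos (K.mpos htor) (L.mpos htor)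
  have hc2 : φ (c ^ (2 * (K.m * L.m))) = φ (B.p ^ (K.m * L.m) * K.p ^ (2 * L.m) * L.p ^ (2 * K.m)) :=
    pow3 hc B K L c 1 1 1 _ _ _ _ hcs (by rw [hB]; ring) (by ring) (by ring)
  have hc3 : φ (c ^ (2 * (K.m * L.m))) = φ (A.p ^ (K.m * L.m) * K.p ^ (2 * L.m) * L.p ^ (2 * K.m)) := by
    rw [hc2, map_mul, map_mul, map_pow φ B.p, ← hAB, map_mul, map_mul, map_pow φ A.p]
  obtain ⟨v, hvS, N, hv, hvc⟩ := hc.lift c (c ^ (2 * (K.m * L.m) - 1)) _ hcS (pow_mem hcS _)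
      (mul_mem (mul_mem (pow_mem A.pS _) (pow_mem K.pS _)) (pow_mem L.pS _)) (by
        rw [← hc3, ← pow_succ']; congr 2; omega)
  obtain ⟨i, j, l, hil⟩ := div3 A K L v _ _ _ N hv
  have h2 : φ (v ^ (2 * (K.m * L.m))) =
      φ (A.p ^ (i * (2 * (K.m * L.m))) * K.p ^ (j * 2 * L.m) * L.p ^ (l * 2 * K.m)) :=
    pow3 hc A K L v i j l _ _ _ _ hil (by rw [hA]; ring) (by ring) (by ring)
  have h3 : φ (v ^ (2 * (K.m * L.m))) = φ (c ^ (2 * (K.m * L.m))) := by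
    rw [map_pow, hvc, ← map_pow]
  have h4 := indep3 htor hc A K L hAK hAL _ _ _ _ _ _ (h2.symm.trans (h3.trans hc3))
  have h5 : (i * 2) * (K.m * L.m) = 1 * (K.m * L.m) := 
    (by ring : (i * 2) * (K.m * L.m) = i * (2 * (K.m * L.m))).trans (h4.trans (one_mul _).symm)
  have := Nat.eq_of_mul_eq_mul_right hNpos h5
  omega

theorem M4 (htor : ∀ c : ClassGroup R, ∃ n : ℕ, 0 < n ∧ c ^ n = 1) (hc : PhiCtx S φ)
    (hex : ∀ c : ClassGroup R, ∃ A : RP S, A.cls = c) (hcard : Nat.card (ClassGroup R) ≠ 2)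
    (A B : RP S) (hAB : φ A.p = φ B.p) : A.cls = B.cls := by
  have key : ∀ A B : RP S, φ A.p = φ B.p → A.m = 1 → B.m = 2 → False := by
    intro A B hAB hA hB
    have hB1 : B.cls ≠ 1 := by
      intro h
      have := orderOf_eq_one_iff.2 h
      change B.m = 1 at this
      omega
    by_cases h : ∃ k, k ≠ 1 ∧ k ≠ B.cls
    · obtain ⟨k, h1, h2⟩ := h
      exact M3 htor hc hex A B hAB hA hB k h1 h2
    · push Not at h
      apply hcard
      rw [Nat.card_eq_two_iff]
      refine ⟨1, B.cls, hB1.symm, ?_⟩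
      ext k
      simp only [Set.mem_insert_iff, Set.mem_singleton_iff, Set.mem_univ, iff_true]
      by_cases hk : k = 1
      · exact Or.inl hk
      · exact Or.inr (h k hk)
  have key2 : A.m ∣ 2 → B.m ∣ 2 → A.cls = B.cls := by
    intro h1 h2
    rcases (Nat.dvd_prime Nat.prime_two).1 h1 with h1 | h1 <;>
    rcases (Nat.dvd_prime Nat.prime_two).1 h2 with h2 | h2
    · rw [orderOf_eq_one_iff.1 h1, orderOf_eq_one_iff.1 h2]
    · exact (key A B hAB h1 h2).elim
    · exact (key B A hAB.symm h2 h1).elim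
    · exact M2 htor hc hex A B hAB h1 h2
  rcases M1 htor hc hex A B hAB with h1 | ⟨i, hi, hi'⟩ <;>
  rcases M1 htor hc hex B A hAB.symm with h2 | ⟨j, hj, hj'⟩
  · exact key2 h1 h2
  · exact key2 h1 ((Dvd.intro_left _ hj').trans h1)
  · exact key2 ((Dvd.intro_left _ hi').trans h2) h2
  · have : i = 1 := by
      have hp := A.mpos htor
      have : (j * i) * A.m = 1 * A.m := by rw [mul_assoc, hi', hj', one_mul]
      have := Nat.eq_of_mul_eq_mul_right hp this
      exact Nat.eq_one_of_mul_eq_one_left this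
    rw [hi, this, pow_one]

end RP

section Final
variable {R Q : Type*} [CommRing R] [IsDedekindDomain R] [CommMonoid Q] {S : Submonoid R}
  {φ : R →* Q}

theorem mkRP (P : Ideal R) (hP : P.IsPrime) (hmem : P ∈ (Ideal R)⁰)
    (h : ∀ p n, Ideal.span {p} = P ^ n → p ∈ S) : ∃ A : RP S, A.P = P := by
  have h1 : (ClassGroup.mk0 ⟨P, hmem⟩) ^ orderOf (ClassGroup.mk0 ⟨P, hmem⟩) = 1 :=
    pow_orderOf_eq_one _
  rw [← map_pow, ClassGroup.mk0_eq_one_iff] at h1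
  obtain ⟨p, hp⟩ := h1
  have hp' : Ideal.span {p} = P ^ orderOf (ClassGroup.mk0 ⟨P, hmem⟩) := by
    simpa only [SubmonoidClass.coe_pow] using hp.symm
  exact ⟨⟨P, hP, hmem, p, h p _ hp', hp'⟩, rfl⟩

theorem mkRP_of_dvd (hc : PhiCtx S φ) (P : Ideal R) (hP : Prime P) (b : R) (hb : b ∈ S)
    (hd : P ∣ Ideal.span {b}) : ∃ A : RP S, A.P = P := by
  refine mkRP P (Ideal.isPrime_of_prime hP) (mem_nonZeroDivisors_of_ne_zero hP.ne_zero) ?_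
  intro p n hp
  have h1 := pow_dvd_pow_of_dvd hd n
  rw [← hp, Ideal.span_singleton_pow, Ideal.dvd_iff_le, Ideal.span_singleton_le_span_singleton] at h1
  obtain ⟨w, hw⟩ := h1
  exact hc.sat p w (hw ▸ pow_mem hb n)

theorem RP.p_dvd (A : RP S) (b : R) (hd : A.P ∣ Ideal.span {b}) : A.p ∣ b ^ A.m := by
  have h1 := pow_dvd_pow_of_dvd hd A.m
  rwa [← A.gen', Ideal.span_singleton_pow, Ideal.dvd_iff_le,
    Ideal.span_singleton_le_span_singleton] at h1

open Classical in
theorem prodLemma (A : RP S) (t : Multiset (Ideal R))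
    (ht : ∀ I ∈ t, ∃ B : RP S, B.P = I ∧ φ B.p = φ A.p ∧ B.m = A.m) :
    ∃ x, Ideal.span {x} = t.prod ^ A.m ∧ φ x = φ (A.p ^ Multiset.card t) := by
  induction t using Multiset.induction_on with
  | empty => exact ⟨1, by rw [Multiset.prod_zero, one_pow, Ideal.span_singleton_one, Ideal.one_eq_top], by simp⟩
  | cons I t ih =>
    obtain ⟨x, hx, hx'⟩ := ih (fun J hJ => ht J (Multiset.mem_cons_of_mem hJ))
    obtain ⟨B, rfl, hB, hBm⟩ := ht I (Multiset.mem_cons_self _ _)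
    refine ⟨B.p * x, ?_, ?_⟩
    · rw [← Ideal.span_singleton_mul_span_singleton, hx, B.gen', hBm, Multiset.prod_cons, mul_pow]
    · rw [map_mul, hx', hB, ← map_mul, ← pow_succ', Multiset.card_cons]

theorem blockLemma [IsDomain R] (htor : ∀ c : ClassGroup R, ∃ n : ℕ, 0 < n ∧ c ^ n = 1) (hc : PhiCtx S φ)
    (hex : ∀ c : ClassGroup R, ∃ A : RP S, A.cls = c) (hcard : Nat.card (ClassGroup R) ≠ 2)
    (A : RP S) (b : R) (hb : b ∈ S) (hAb : φ b = φ A.p) :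
    blockOf b = Multiset.replicate A.m A.cls := by
  have hb0 : Ideal.span {b} ≠ 0 := by
    simpa using hc.ne b hb
  have key : ∀ I ∈ UniqueFactorizationMonoid.normalizedFactors (Ideal.span {b}),
      ∃ B : RP S, B.P = I ∧ φ B.p = φ A.p ∧ B.cls = A.cls := by
    intro I hI
    have hd := UniqueFactorizationMonoid.dvd_of_mem_normalizedFactors hI
    obtain ⟨B, rfl⟩ := mkRP_of_dvd hc I (UniqueFactorizationMonoid.prime_of_normalized_factor _ hI)
      b hb hd
    obtain ⟨y, hy⟩ := B.p_dvd b hd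
    have hBA : φ B.p = φ A.p := by
      refine RP.dvdEq htor hc B A y B.m (hc.sat y B.p ?_) ?_
      · rw [mul_comm, ← hy]; exact pow_mem hb _
      · rw [← hy, map_pow, hAb, map_pow]
    exact ⟨B, rfl, hBA, RP.M4 htor hc hex hcard B A hBA⟩
  obtain ⟨x, hx, hx'⟩ := prodLemma A (UniqueFactorizationMonoid.normalizedFactors (Ideal.span {b}))
    (fun I hI => by
      obtain ⟨B, h1, h2, h3⟩ := key I hI
      exact ⟨B, h1, h2, by unfold RP.m; rw [h3]⟩)
  rw [associated_iff_eq.1 (UniqueFactorizationMonoid.prod_normalizedFactors hb0),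
    Ideal.span_singleton_pow, Ideal.span_singleton_eq_span_singleton] at hx
  have h1 : φ (A.p ^ Multiset.card (UniqueFactorizationMonoid.normalizedFactors (Ideal.span {b})))
      = φ (A.p ^ A.m) := by
    rw [← hx', hc.assoc _ _ hx, map_pow, hAb, map_pow]
  have h2 := A.powInj htor hc _ _ h1
  rw [Multiset.eq_replicate]
  constructor
  · unfold blockOf
    rw [Multiset.card_map, h2]
  · intro c hcm
    unfold blockOf at hcm
    rw [Multiset.mem_map] at hcm
    obtain ⟨I, hI, rfl⟩ := hcm
    obtain ⟨B, rfl, -, h3⟩ := key I hI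
    rw [dif_pos B.mem]
    exact h3

theorem absLemma [IsDomain R] (htor : ∀ c : ClassGroup R, ∃ n : ℕ, 0 < n ∧ c ^ n = 1) (hc : PhiCtx S φ)
    (a : R) (ha : a ∈ S) (habs : AbsolutelyIrreducible a) : ∃ A : RP S, φ a = φ A.p := by
  have ha0 := hc.ne a ha
  have hs0 : Ideal.span {a} ≠ 0 := by simpa using ha0
  have hsu : ¬ IsUnit (Ideal.span {a}) := by
    rw [Ideal.isUnit_iff, Ideal.span_singleton_eq_top]
    exact habs.1.not_isUnit
  obtain ⟨P, hPi, hP⟩ := WfDvdMonoid.exists_irreducible_factor hsu hs0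
  obtain ⟨A, rfl⟩ := mkRP_of_dvd hc P hPi.prime a ha hP
  refine ⟨A, ?_⟩
  obtain ⟨y, hy⟩ := A.p_dvd a hP
  have hirr : Irreducible A.p := by
    refine ⟨A.not_unit htor, ?_⟩
    intro u v huv
    obtain ⟨i, hi⟩ := A.div1 u 1 ⟨v, by rw [pow_one, huv]⟩
    rcases i with _ | i
    · left
      rw [pow_zero] at hi
      exact associated_one_iff_isUnit.1 hi
    · right
      have h1 : A.p ∣ u := (dvd_pow_self _ (Nat.succ_ne_zero i)).trans hi.symm.dvd
      obtain ⟨w, hw⟩ := h1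
      have hp0 := hc.ne _ A.pS
      have : A.p * 1 = A.p * (w * v) := by
        rw [mul_one, ← mul_assoc, ← hw]; exact huv
      have := mul_left_cancel₀ hp0 this
      exact IsUnit.of_mul_eq_one w (by rw [mul_comm]; exact this.symm)
  have hy0 : y ≠ 0 := by
    rintro rfl
    rw [mul_zero] at hy
    exact pow_ne_zero _ ha0 hy
  -- a suitable factorization of the power of `a`
  have hfac : ∃ l : Multiset R, (∀ x ∈ l, Irreducible x) ∧ l.prod = a ^ A.m ∧
      ∃ q ∈ l, Associated q A.p := by
    obtain ⟨l, hl, u, hu⟩ := WfDvdMonoid.exists_factors y hy0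
    refine ⟨(A.p * u) ::ₘ l, ?_, ?_, A.p * u, Multiset.mem_cons_self _ _, ?_⟩
    · intro x hx
      rcases Multiset.mem_cons.1 hx with rfl | hx
      · exact (irreducible_mul_units u).2 hirr
      · exact hl x hx
    · rw [Multiset.prod_cons, hy, ← hu]; ring
    · exact (associated_mul_unit_right A.p u u.isUnit).symm
  obtain ⟨l, hl, hlp, q, hq, hqA⟩ := hfac
  have hrel := habs.2 A.m (A.mpos htor) l (Multiset.replicate A.m a) hl
    (fun x hx => by rw [Multiset.eq_of_mem_replicate hx]; exact habs.1) hlp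
    (Multiset.prod_replicate _ _)
  obtain ⟨a', ha', hqa⟩ := Multiset.exists_mem_of_rel_of_mem hrel hq
  rw [Multiset.eq_of_mem_replicate ha'] at hqa
  exact hc.assoc _ _ (hqa.symm.trans hqA)

/-- The congruence attached to a `SimCtx`. -/
def SimCtx.con {Sim : R → R → Prop} (h : SimCtx S Sim) : Con R where
  r := Sim
  iseqv := ⟨h.rfl', fun {x y} => h.symm' x y, fun {x y z} => h.trans' x y z⟩
  mul' := fun {w x y z} => h.mul' w x y z

theorem SimCtx.phi {Sim : R → R → Prop} (h : SimCtx S Sim) : PhiCtx S h.con.mk' where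
  sat := h.sat
  ne := h.ne
  cancel := fun x y z hz e => (Con.eq h.con).2 (h.cancel x y z hz ((Con.eq h.con).1 e))
  root := fun x y n hx hy hn e => (Con.eq h.con).2 (h.root x y n hx hy hn ((Con.eq h.con).1 e))
  assoc := fun x y e => (Con.eq h.con).2 (h.assoc x y e)
  one := fun x hx e => h.one x hx ((Con.eq h.con).1 e)
  lift := fun x y c hx hy hcS e => by
    obtain ⟨v, hv, N, h1, h2⟩ := h.lift x y c hx hy hcS ((Con.eq h.con).1 e)
    exact ⟨v, hv, N, h1, (Con.eq h.con).2 h2⟩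

theorem existsRP (f : Ideal R) (c : ClassGroup R) (h : ∃ (P : Ideal R) (hP : P ∈ (Ideal R)⁰),
      P.IsPrime ∧ ¬ f ≤ P ∧ ClassGroup.mk0 ⟨P, hP⟩ = c) : ∃ A : RP (regSub f), A.cls = c := by
  obtain ⟨P, hP, hPp, hfP, rfl⟩ := h
  obtain ⟨A, rfl⟩ := mkRP (S := regSub f) P hPp hP (by
    intro p n hp
    have hmax : P.IsMaximal := hPp.isMaximal (nonZeroDivisors.ne_zero hP)
    have h1 : P ⊔ f = ⊤ := hmax.1.2 _ (lt_of_le_of_ne le_sup_left (fun h => hfP (by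
      rw [h]; exact le_sup_right)))
    have h2 : IsCoprime P f := Ideal.isCoprime_iff_sup_eq.2 h1
    have h3 : IsCoprime (P ^ n) f := h2.pow_left
    rw [← hp, Ideal.isCoprime_iff_exists] at h3
    obtain ⟨i, hi, j, hj, hij⟩ := h3
    obtain ⟨w, rfl⟩ := Ideal.mem_span_singleton'.1 hi
    show IsUnit _
    refine IsUnit.of_mul_eq_one (Ideal.Quotient.mk f w) ?_
    rw [← map_mul, ← map_one (Ideal.Quotient.mk f), Ideal.Quotient.eq]
    have : p * w - 1 = - j := by rw [← hij]; ring
    rw [this]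
    exact f.neg_mem hj)
  exact ⟨A, rfl⟩

end Final

theorem block_eq_of_assoc_abs_irreducible
    {R : Type*} [CommRing R] [IsDomain R] [IsDedekindDomain R]
    (O : Subring R) (hne : O ≠ ⊤) (hfg : Module.Finite ↥O R)
    (hfrac : ∀ r : R, ∃ a b : ↥O, (b : R) ≠ 0 ∧ (b : R) * r = (a : R))
    (htor : ∀ c : ClassGroup R, ∃ n : ℕ, 0 < n ∧ c ^ n = 1)
    (hfin : Finite (R ⧸ O.conductor))
    (hcls : ∀ c : ClassGroup R, ∃ (P : Ideal R) (hP : P ∈ (Ideal R)⁰),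
      P.IsPrime ∧ ¬ O.conductor ≤ P ∧ ClassGroup.mk0 ⟨P, hP⟩ = c)
    (H : Submonoid (FractionRing R)) (hH : IsTKOvermonoid O H)
    (hcard : Nat.card (ClassGroup R) ≠ 2)
    (a b : R) (hrega : RegF O.conductor a) (hregb : RegF O.conductor b)
    (hassoc : AssocIn H (algebraMap R (FractionRing R) a) (algebraMap R (FractionRing R) b))
    (habs : AbsolutelyIrreducible a) :
    blockOf a = blockOf b := by
  have hS := simCtx_of O hne hfrac hfin H hH
  have hc := hS.phi
  have hex : ∀ c : ClassGroup R, ∃ A : RP (regSub O.conductor), A.cls = c :=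
    fun c => existsRP O.conductor c (hcls c)
  obtain ⟨A, hA⟩ := absLemma htor hc a hrega habs
  have hab : hS.con.mk' a = hS.con.mk' b := (Con.eq hS.con).2 hassoc
  rw [blockLemma htor hc hex hcard A a hrega hA,
    blockLemma htor hc hex hcard A b hregb (hab.symm.trans hA)]
end

section
/- Under the standing assumptions with |Cl(R)| ≠ 2 and O transfer Krull via a Krull overmonoid H: for all a, b ∈ Reg_f(R) with a associated to b in H, one has β(a) = β(b). -/
open scoped nonZeroDivisors

variable {R₀ : Type*}

section Abs

/-- zero-class multisets -/
def BGood {X G : Type*} [CommGroup G] (cls : X → G) (s : Multiset X) : Prop :=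
  (s.map cls).prod = 1

/-- abstract transfer data over a block monoid -/
structure BData (X G Γ : Type*) [CommGroup G] [CommGroup Γ] (cls : X → G)
    (θ : Multiset X → Γ) : Prop where
  add : ∀ s t, BGood cls s → BGood cls t → θ (s + t) = θ s * θ t
  lift : ∀ s, BGood cls s → ∀ L : List Γ,
    (∀ x ∈ L, ∃ k : ℕ, 0 < k ∧ ∃ c, BGood cls c ∧ x ^ k = θ c) → θ s = L.prod →
    ∃ N : ℕ, 0 < N ∧ ∃ L' : List (Multiset X), (∀ v ∈ L', BGood cls v) ∧ N • s = L'.sum ∧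
      L'.map θ = (List.replicate N L).flatten
  surj : Function.Surjective cls
  tors : ∀ g : G, 0 < orderOf g
  card : Nat.card G ≠ 2

variable {X G Γ : Type*} [CommGroup G] [CommGroup Γ] {cls : X → G} {θ : Multiset X → Γ}

theorem BGood.add {s t : Multiset X} (hs : BGood cls s) (ht : BGood cls t) :
    BGood cls (s + t) := by
  unfold BGood at *; simp [hs, ht]

theorem b_countP_true (s : Multiset X) [DecidablePred (fun _ : X => True)] :
    s.countP (fun _ => True) = Multiset.card s := by
  rw [Multiset.countP_eq_card]; simp

theorem BGood.zero : BGood cls (0 : Multiset X) := by simp [BGood]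

theorem BGood.nsmul {s : Multiset X} (hs : BGood cls s) (n : ℕ) : BGood cls (n • s) := by
  unfold BGood at *; simp [Multiset.map_nsmul, Multiset.prod_nsmul, hs]

theorem BGood.of_add {s t : Multiset X} (h : BGood cls (s + t)) (hs : BGood cls s) :
    BGood cls t := by
  unfold BGood at *; simpa [hs] using h

/-- the absolutely irreducible block of a prime -/
noncomputable def bsig (cls : X → G) (P : X) : Multiset X := orderOf (cls P) • {P}

theorem bsig_good (P : X) : BGood cls (bsig cls P) := by
  simp [BGood, bsig, Multiset.map_nsmul, Multiset.prod_nsmul, pow_orderOf_eq_one]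

theorem card_bsig (P : X) : Multiset.card (bsig cls P) = orderOf (cls P) := by
  simp [bsig]

theorem mem_bsig {P Q : X} (h : Q ∈ bsig cls P) : Q = P := by
  simpa using Multiset.mem_of_mem_nsmul h

/-- a good multiset all of whose classes equal `g` has cardinality divisible by the order. -/
theorem BGood.dvd_card {v : Multiset X} (hv : BGood cls v) {g : G} (h : ∀ P ∈ v, cls P = g) :
    orderOf g ∣ Multiset.card v := by
  apply orderOf_dvd_of_pow_eq_one
  have : v.map cls = Multiset.replicate (Multiset.card v) g := by
    rw [Multiset.eq_replicate]
    simp only [Multiset.card_map, Multiset.mem_map, forall_exists_index, and_imp, true_and]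
    rintro b x hx rfl; exact h x hx
  unfold BGood at hv
  rwa [this, Multiset.prod_replicate] at hv

theorem BGood.le_card {v : Multiset X} (hv : BGood cls v) {g : G} (h : ∀ P ∈ v, cls P = g)
    (h0 : v ≠ 0) : orderOf g ≤ Multiset.card v :=
  Nat.le_of_dvd (Multiset.card_pos.2 h0) (hv.dvd_card h)

theorem BGood.eq_nsmul {v : Multiset X} (hv : BGood cls v) {Q : X} (h : ∀ P ∈ v, P = Q) :
    ∃ j : ℕ, v = j • bsig cls Q := by
  obtain ⟨j, hj⟩ := hv.dvd_card (g := cls Q) (fun P hP => by rw [h P hP])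
  refine ⟨j, ?_⟩
  rw [bsig, ← mul_nsmul', Multiset.nsmul_singleton, Multiset.eq_replicate]
  exact ⟨by rw [hj, mul_comm], h⟩

namespace BData

theorem map_zero (D : BData X G Γ cls θ) : θ 0 = 1 := by
  have := D.add 0 0 .zero .zero
  simpa using this

theorem map_nsmul (D : BData X G Γ cls θ) {s : Multiset X} (hs : BGood cls s) (n : ℕ) : θ (n • s) = θ s ^ n := by
  induction n with
  | zero => simp [D.map_zero]
  | succ n ih => rw [succ_nsmul, D.add _ _ (hs.nsmul n) hs, ih, pow_succ]

theorem rootable (D : BData X G Γ cls θ) {s : Multiset X} (hs : BGood cls s) :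
    ∃ k : ℕ, 0 < k ∧ ∃ c, BGood cls c ∧ θ s ^ k = θ c := ⟨1, one_pos, s, hs, by simp⟩

theorem eq_zero (D : BData X G Γ cls θ) {s : Multiset X} (hs : BGood cls s) (h : θ s = 1) : s = 0 := by
  obtain ⟨N, hN, L', -, h2, h3⟩ := D.lift s hs [] (by simp) (by simpa using h)
  have : L' = [] := by simpa using h3
  subst this
  rw [← Multiset.card_eq_zero]
  have := congrArg Multiset.card h2
  simp at this
  rcases this with h | h
  · omega
  · simp [h]

theorem bsig_ne (D : BData X G Γ cls θ) (P : X) : bsig cls P ≠ 0 := by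
  have := D.tors (cls P)
  rw [← Multiset.card_pos, card_bsig]; exact this

theorem bound (D : BData X G Γ cls θ) {ι : Type*} (L : List ι) (u : ι → Γ) (t : ι → ℕ) {s : Multiset X}
    (hs : BGood cls s) (p : X → Prop) [DecidablePred p]
    (hr : ∀ i ∈ L, ∃ k : ℕ, 0 < k ∧ ∃ c, BGood cls c ∧ u i ^ k = θ c)
    (h : θ s = (L.map u).prod)
    (hb : ∀ i ∈ L, ∀ v, BGood cls v → θ v = u i → (∀ P ∈ v, P ∈ s) → t i ≤ v.countP p) :
    (L.map t).sum ≤ s.countP p := by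
  obtain ⟨N, hN, L', h1, h2, h3⟩ := D.lift s hs (L.map u) (by simpa using hr) h
  have h4 : L'.map θ = ((List.replicate N L).flatten).map u := by
    rw [h3]; simp [List.map_flatten]
  have key : ∀ (A : List ι) (B : List (Multiset X)), B.map θ = A.map u → (∀ i ∈ A, i ∈ L) →
      (∀ v ∈ B, BGood cls v ∧ ∀ P ∈ v, P ∈ s) → (A.map t).sum ≤ B.sum.countP p := by
    intro A
    induction A with
    | nil => simp
    | cons i A ih =>
      intro B hB hA hv
      cases B with
      | nil => simp at hB
      | cons v B =>
        simp only [List.map_cons, List.cons.injEq] at hB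
        simp only [List.map_cons, List.sum_cons, Multiset.countP_add]
        refine add_le_add (hb i (hA i (by simp)) v (hv v (by simp)).1 hB.1 (hv v (by simp)).2)
          (ih B hB.2 (fun i hi => hA i (by simp [hi])) (fun w hw => hv w (by simp [hw])))
  have h5 := key _ L' h4 (by simp) (fun v hv => ⟨h1 v hv, fun P hP => by
    have : v ≤ N • s := h2 ▸ List.single_le_sum (by simp) v hv
    exact Multiset.mem_of_mem_nsmul (Multiset.mem_of_le this hP)⟩)
  rw [← h2, Multiset.countP_nsmul] at h5
  have h6 : (((List.replicate N L).flatten).map t).sum = N * (L.map t).sum := by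
    simp [List.map_flatten, List.sum_flatten]
  rw [h6] at h5
  exact Nat.le_of_mul_le_mul_left h5 hN

theorem exists_left (D : BData X G Γ cls θ) {s : Multiset X} (hs : BGood cls s) {x y : Γ}
    (hx : ∃ k : ℕ, 0 < k ∧ ∃ c, BGood cls c ∧ x ^ k = θ c)
    (hy : ∃ k : ℕ, 0 < k ∧ ∃ c, BGood cls c ∧ y ^ k = θ c) (h : θ s = x * y) :
    ∃ v, BGood cls v ∧ θ v = x ∧ ∀ P ∈ v, P ∈ s := by
  classical
  by_contra! hc
  have := D.bound [0, 1] (fun i : ℕ => if i = 0 then x else y)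
    (fun i => if i = 0 then s.countP (fun _ => True) + 1 else 0) hs (fun _ => True)
    (by simp [hx, hy]) (by simp [h])
    (by
      intro i hi v hv h1 h2
      by_cases h0 : i = 0
      · simp [h0] at h1
        obtain ⟨P, hP, hP'⟩ := hc v hv h1
        exact absurd (h2 P hP) hP'
      · simp [h0])
  simp at this

theorem sig_eq (D : BData X G Γ cls θ) {a : Multiset X} (ha : BGood cls a) {Q : X} {t : ℕ}
    (h : θ a = θ (bsig cls Q) ^ t) {S : X} (hS : S ∈ a) :
    θ (bsig cls S) = θ (bsig cls Q) := by
  classical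
  obtain ⟨a', rfl⟩ := Multiset.exists_cons_of_mem hS
  have e : orderOf (cls S) • (S ::ₘ a') = bsig cls S + orderOf (cls S) • a' := by
    rw [← Multiset.singleton_add, nsmul_add, bsig]
  have g1 := ha.nsmul (orderOf (cls S))
  rw [e] at g1
  have g2 := g1.of_add (bsig_good S)
  have h1 : θ ((t * orderOf (cls S)) • bsig cls Q) =
      θ (bsig cls S) * θ (orderOf (cls S) • a') := by
    rw [← D.add _ _ (bsig_good S) g2, ← e, D.map_nsmul ha, h, D.map_nsmul (bsig_good Q), pow_mul]
  obtain ⟨v, hv, h2, h3⟩ := D.exists_left ((bsig_good Q).nsmul _) (D.rootable (bsig_good S))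
    (D.rootable g2) h1
  obtain ⟨j, rfl⟩ := hv.eq_nsmul (Q := Q) (fun P hP => mem_bsig (Multiset.mem_of_mem_nsmul (h3 P hP)))
  rw [D.map_nsmul (bsig_good Q)] at h2
  have h4 := D.bound (List.replicate j ()) (fun _ => θ (bsig cls Q)) (fun _ => orderOf (cls S))
    (bsig_good S) (fun _ => True) (fun _ _ => D.rootable (bsig_good Q)) (by simp [h2])
    (by
      intro _ _ w hw hw1 hw2
      rw [b_countP_true]
      refine hw.le_card (fun P hP => by rw [mem_bsig (hw2 P hP)]) ?_
      rintro rfl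
      rw [D.map_zero] at hw1
      exact D.bsig_ne Q (D.eq_zero (bsig_good Q) hw1.symm))
  simp only [List.map_replicate, List.sum_replicate, smul_eq_mul, b_countP_true,
    card_bsig] at h4
  have h5 := D.tors (cls S)
  have h6 : j ≤ 1 := by
    by_contra hj
    nlinarith
  interval_cases j
  · simp only [pow_zero] at h2
    exact absurd (D.eq_zero (bsig_good S) h2.symm) (D.bsig_ne S)
  · simpa using h2.symm

theorem same_order (D : BData X G Γ cls θ) {P Q : X} (h : θ (bsig cls P) = θ (bsig cls Q))
    (ho : orderOf (cls P) = orderOf (cls Q)) : cls P = cls Q := by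
  classical
  obtain ⟨S, hS⟩ := D.surj (cls Q / cls P)
  obtain ⟨Y, hY⟩ := D.surj (cls Q)⁻¹
  have hYo : orderOf (cls Y) = orderOf (cls Q) := by rw [hY, orderOf_inv]
  set m := orderOf (cls Q) with hm
  set s := orderOf (cls S) with hs
  have gu : BGood cls ({P} + {S} + {Y}) := by
    simp only [BGood, Multiset.map_add, Multiset.map_singleton, Multiset.prod_add, Multiset.prod_singleton, hS, hY]
    simp
  have gw : BGood cls ({Q} + {Y}) := by simp [BGood, hY]
  have bP : bsig cls P = m • {P} := by rw [bsig, ho]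
  have bQ : bsig cls Q = m • {Q} := rfl
  have bY : bsig cls Y = m • {Y} := by rw [bsig, hYo]
  have bS : bsig cls S = s • {S} := rfl
  have eu : (s * m) • ({P} + {S} + {Y} : Multiset X) =
      s • bsig cls P + m • bsig cls S + s • bsig cls Y := by
    rw [bP, bS, bY, nsmul_add, nsmul_add, ← mul_nsmul', ← mul_nsmul', ← mul_nsmul', mul_comm m s]
  have ew : (s * m) • ({Q} + {Y} : Multiset X) = s • bsig cls Q + s • bsig cls Y := by
    rw [bQ, bY, nsmul_add, mul_nsmul', mul_nsmul']
  have hx : (θ ({P} + {S} + {Y}) / θ ({Q} + {Y})) ^ (s * m) = θ (m • bsig cls S) := by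
    rw [div_pow, ← D.map_nsmul gu, ← D.map_nsmul gw, eu, ew,
      D.add _ _ (((bsig_good P).nsmul _).add ((bsig_good S).nsmul _)) ((bsig_good Y).nsmul _),
      D.add _ _ ((bsig_good P).nsmul _) ((bsig_good S).nsmul _),
      D.add _ _ ((bsig_good Q).nsmul _) ((bsig_good Y).nsmul _),
      D.map_nsmul (bsig_good P), D.map_nsmul (bsig_good Q), h]
    rw [div_eq_iff_eq_mul]
    rw [mul_assoc, mul_left_comm]
  have hmp : 0 < m := D.tors _
  have hsp : 0 < s := D.tors _
  have h4 := D.bound (List.replicate (s * m) ()) (fun _ => θ ({P} + {S} + {Y}) / θ ({Q} + {Y}))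
    (fun _ => s) ((bsig_good S).nsmul m) (fun _ => True)
    (fun _ _ => ⟨s * m, by positivity, _, (bsig_good S).nsmul m, hx⟩)
    (by rw [List.map_replicate, List.prod_replicate, hx])
    (by
      intro _ _ w hw hw1 hw2
      rw [b_countP_true]
      refine hw.le_card (fun P hP => by rw [mem_bsig (Multiset.mem_of_mem_nsmul (hw2 P hP))]) ?_
      rintro rfl
      rw [D.map_zero] at hw1
      rw [← hw1, one_pow] at hx
      have := D.eq_zero ((bsig_good S).nsmul m) hx.symm
      have := congrArg Multiset.card this
      rw [Multiset.card_nsmul, card_bsig, Multiset.card_zero] at this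
      have h9 : 0 < m * orderOf (cls S) := Nat.mul_pos hmp hsp
      omega)
  simp only [List.map_replicate, List.sum_replicate, smul_eq_mul, b_countP_true,
    Multiset.card_nsmul, card_bsig] at h4
  have h5 : s = 1 := by
    have : 0 < m * s := by positivity
    by_contra hne
    have : 2 ≤ s := by omega
    nlinarith
  rw [hs, orderOf_eq_one_iff, hS, div_eq_one] at h5
  exact h5.symm

theorem exists_sig (D : BData X G Γ cls θ) {P Q : X} (h : θ (bsig cls P) = θ (bsig cls Q))
    (ho : orderOf (cls P) < orderOf (cls Q)) (Y : Multiset X) (hY : BGood cls (Q ::ₘ Y)) :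
    ∃ S ∈ Y, θ (bsig cls S) = θ (bsig cls Q) := by
  classical
  by_cases hPY : P ∈ Y
  · exact ⟨P, hPY, h⟩
  set n := orderOf (cls Q) with hn
  have e : n • (Q ::ₘ Y) = bsig cls Q + n • Y := by
    rw [← Multiset.singleton_add, nsmul_add, bsig]
  have g1 := hY.nsmul n
  rw [e] at g1
  have g2 := g1.of_add (bsig_good Q)
  have hz : θ (Q ::ₘ Y) ^ n = θ (bsig cls Q) * θ (n • Y) := by
    rw [← D.map_nsmul hY, e, D.add _ _ (bsig_good Q) g2]
  have : ∃ v, BGood cls v ∧ θ v = θ (Q ::ₘ Y) ∧ (∀ S ∈ v, S ∈ bsig cls P + n • Y) ∧ P ∉ v := by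
    by_contra! hc
    have := D.bound (List.replicate n ()) (fun _ => θ (Q ::ₘ Y)) (fun _ => 1)
      ((bsig_good P).add g2) (fun S => S = P) (fun _ _ => D.rootable hY)
      (by simp [hz, D.add _ _ (bsig_good P) g2, h])
      (by
        intro _ _ w hw hw1 hw2
        exact Multiset.countP_pos.2 ⟨P, hc w hw hw1 hw2, rfl⟩)
    have hc0 : Multiset.countP (fun S => S = P) Y = 0 := by
      rw [Multiset.countP_eq_zero]
      rintro a ha rfl
      exact hPY ha
    simp [bsig, Multiset.countP_nsmul, hc0] at this
    have h7 : Multiset.countP (fun S => S = P) {P} ≤ 1 := by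
      simpa using Multiset.countP_le_card (fun S => S = P) {P}
    nlinarith
  obtain ⟨v, hv, hv1, hv2, hv3⟩ := this
  have hvY : ∀ S ∈ v, S ∈ Y := by
    intro S hS
    rcases Multiset.mem_add.1 (hv2 S hS) with h' | h'
    · exact absurd (mem_bsig h' ▸ hS) hv3
    · exact Multiset.mem_of_mem_nsmul h'
  obtain ⟨w, hw, hw1, hw2⟩ := D.exists_left (hv.nsmul n) (D.rootable (bsig_good Q))
    (D.rootable g2) (by rw [D.map_nsmul hv, hv1, hz])
  have hw0 : w ≠ 0 := by
    rintro rfl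
    rw [D.map_zero] at hw1
    exact D.bsig_ne Q (D.eq_zero (bsig_good Q) hw1.symm)
  obtain ⟨S, hS⟩ := Multiset.exists_mem_of_ne_zero hw0
  exact ⟨S, hvY S (Multiset.mem_of_mem_nsmul (hw2 S hS)), D.sig_eq hw (t := 1) (by simp [hw1]) hS⟩

theorem lt_order (D : BData X G Γ cls θ) {P Q : X} (h : θ (bsig cls P) = θ (bsig cls Q))
    (ho : orderOf (cls P) < orderOf (cls Q)) : orderOf (cls Q) = 2 := by
  obtain ⟨Y, hY⟩ := D.surj (cls Q)⁻¹
  obtain ⟨S, hS, hS'⟩ := D.exists_sig h ho {Y} (by simp [BGood, hY])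
  obtain rfl : S = Y := by simpa using hS
  have h1 := D.same_order hS' (by rw [hY, orderOf_inv])
  rw [hY] at h1
  have h2 : orderOf (cls Q) ∣ 2 := by
    apply orderOf_dvd_of_pow_eq_one
    rw [pow_two]; nth_rw 1 [← h1]; simp
  have := Nat.le_of_dvd two_pos h2
  have := D.tors (cls P)
  omega

theorem not_lt (D : BData X G Γ cls θ) {P Q : X} (h : θ (bsig cls P) = θ (bsig cls Q)) :
    ¬ orderOf (cls P) < orderOf (cls Q) := by
  intro ho
  have h2 := D.lt_order h ho
  have hP0 := D.tors (cls P)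
  have hP1 : orderOf (cls P) = 1 := by omega
  have hQ2 : cls Q * cls Q = 1 := by rw [← pow_two, ← h2, pow_orderOf_eq_one]
  have hQ1 : cls Q ≠ 1 := by intro h; rw [h, orderOf_one] at h2; omega
  have hcl : ∀ S, θ (bsig cls S) = θ (bsig cls Q) → cls S = 1 ∨ cls S = cls Q := by
    intro S hS
    by_cases h1 : orderOf (cls S) = 1
    · left; rwa [orderOf_eq_one_iff] at h1
    · right
      have := D.tors (cls S)
      apply D.same_order hS
      rw [h2]
      exact D.lt_order (h.trans hS.symm) (by omega)
  have hk : ∃ k : G, k ≠ 1 ∧ k ≠ cls Q := by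
    by_contra! hc
    apply D.card
    rw [Nat.card_eq_two_iff]
    refine ⟨1, cls Q, hQ1.symm, ?_⟩
    ext k
    simp only [Set.mem_insert_iff, Set.mem_singleton_iff, Set.mem_univ, iff_true]
    by_cases hk : k = 1
    · exact .inl hk
    · exact .inr (hc k hk)
  obtain ⟨k, hk1, hkQ⟩ := hk
  obtain ⟨S, hS⟩ := D.surj k
  obtain ⟨T, hT⟩ := D.surj (cls Q * k)⁻¹
  obtain ⟨U, hU, hU'⟩ := D.exists_sig h ho {S, T} (by simp [BGood, hS, hT])
  have hQi : (cls Q)⁻¹ = cls Q := inv_eq_of_mul_eq_one_left hQ2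
  have := hcl U hU'
  simp only [Multiset.insert_eq_cons, Multiset.mem_cons, Multiset.mem_singleton] at hU
  rcases hU with rfl | rfl
  · rw [hS] at this; tauto
  · rw [hT] at this
    rcases this with h' | h'
    · rw [inv_eq_one] at h'
      exact hkQ (by rw [← hQi]; exact eq_inv_of_mul_eq_one_right h')
    · rw [inv_eq_iff_eq_inv, hQi] at h'
      exact hk1 (by simpa using h')

theorem cls_eq (D : BData X G Γ cls θ) {P Q : X} (h : θ (bsig cls P) = θ (bsig cls Q)) : cls P = cls Q :=
  D.same_order h (le_antisymm (Nat.le_of_not_lt (D.not_lt h.symm)) (Nat.le_of_not_lt (D.not_lt h)))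

theorem map_sum (D : BData X G Γ cls θ) {s : Multiset X} (f : X → Multiset X) (hf : ∀ x, BGood cls (f x)) :
    BGood cls (s.map f).sum ∧ θ (s.map f).sum = (s.map (fun x => θ (f x))).prod := by
  induction s using Multiset.induction_on with
  | empty => simp [D.map_zero, BGood.zero]
  | cons x s ih =>
    simp only [Multiset.map_cons, Multiset.sum_cons, Multiset.prod_cons]
    exact ⟨(hf x).add ih.1, by rw [D.add _ _ (hf x) ih.1, ih.2]⟩

open Classical in
theorem count_le (D : BData X G Γ cls θ) {a b : Multiset X} (ha : BGood cls a) (hb : BGood cls b) (h : θ a = θ b) (c : G) :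
    a.countP (fun P => cls P = c) ≤ b.countP (fun P => cls P = c) := by
  set M := (a.map (fun S => orderOf (cls S))).prod with hM
  have hMp : 0 < M := by
    rw [hM, Nat.pos_iff_ne_zero]
    intro h0
    rw [Multiset.prod_eq_zero_iff] at h0
    obtain ⟨S, -, hS⟩ := Multiset.mem_map.1 h0
    have := D.tors (cls S); omega
  have hd : ∀ S ∈ a, M / orderOf (cls S) * orderOf (cls S) = M := fun S hS =>
    Nat.div_mul_cancel (Multiset.dvd_prod (Multiset.mem_map_of_mem _ hS))
  have e : M • a = (a.map (fun S => (M / orderOf (cls S)) • bsig cls S)).sum := by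
    have : a.map (fun S => (M / orderOf (cls S)) • bsig cls S) = a.map (fun S => M • {S}) := by
      apply Multiset.map_congr rfl
      intro S hS
      rw [bsig, ← mul_nsmul', hd S hS]
    rw [this, Multiset.sum_map_nsmul, Multiset.sum_map_singleton]
  have hθ : θ (M • b) = (a.toList.map (fun S => θ (bsig cls S) ^ (M / orderOf (cls S)))).prod := by
    rw [D.map_nsmul hb, ← h, ← D.map_nsmul ha, e,
      (D.map_sum _ (fun S => (bsig_good S).nsmul _)).2]
    simp_rw [D.map_nsmul (bsig_good _)]
    conv_lhs => rw [← Multiset.coe_toList a]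
    rw [Multiset.map_coe, Multiset.prod_coe]
  have key := D.bound a.toList (fun S => θ (bsig cls S) ^ (M / orderOf (cls S)))
    (fun S => if cls S = c then M else 0) (hb.nsmul M) (fun P => cls P = c)
    (fun S _ => by
      rw [← D.map_nsmul (bsig_good S)]; exact D.rootable ((bsig_good S).nsmul _)) hθ
    (by
      intro S hS v hv hv1 _
      rw [Multiset.mem_toList] at hS
      by_cases hSc : cls S = c
      swap
      · simp [hSc]
      have hvc : ∀ T ∈ v, cls T = c := fun T hT => by
        rw [D.cls_eq (D.sig_eq hv hv1 hT), hSc]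
      rw [if_pos hSc, Multiset.countP_eq_card.2 hvc]
      have := D.bound (List.replicate (M / orderOf (cls S)) ()) (fun _ => θ (bsig cls S))
        (fun _ => orderOf (cls S)) hv (fun _ => True) (fun _ _ => D.rootable (bsig_good S))
        (by simp [hv1])
        (by
          intro _ _ w hw hw1 hw2
          rw [b_countP_true, hSc]
          refine hw.le_card (fun P hP => hvc P (hw2 P hP)) ?_
          rintro rfl
          rw [D.map_zero] at hw1
          exact D.bsig_ne S (D.eq_zero (bsig_good S) hw1.symm))
      simp only [List.map_replicate, List.sum_replicate, smul_eq_mul, b_countP_true] at this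
      rwa [hd S hS] at this)
  have e2 : (a.toList.map (fun S => if cls S = c then M else 0)).sum =
      M * a.countP (fun P => cls P = c) := by
    conv_rhs => rw [← Multiset.coe_toList a]
    rw [Multiset.coe_countP]
    induction a.toList with
    | nil => simp
    | cons x l ih =>
      by_cases hx : cls x = c
      · simp [hx, ih]; ring
      · simp [hx, ih]
  rw [e2, Multiset.countP_nsmul] at key
  exact Nat.le_of_mul_le_mul_left key hMp

theorem main (D : BData X G Γ cls θ) {a b : Multiset X} (ha : BGood cls a) (hb : BGood cls b) (h : θ a = θ b) :
    a.map cls = b.map cls := by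
  classical
  ext c
  have e : ∀ s : Multiset X, (s.map cls).count c = s.countP (fun P => cls P = c) := by
    intro s
    rw [Multiset.count, Multiset.countP_map, Multiset.countP_eq_card_filter]
    simp only [eq_comm]
  rw [e, e]
  exact le_antisymm (D.count_le ha hb h c) (D.count_le hb ha h.symm c)

end BData
end Abs
section Conc

variable {R : Type*} [CommRing R] [IsDomain R] [IsDedekindDomain R]

theorem regF_iff (f : Ideal R) (a : R) : RegF f a ↔ IsCoprime (Ideal.span {a}) f := by
  rw [RegF, Ideal.isCoprime_iff_exists]
  constructor
  · intro h
    obtain ⟨b, hb⟩ := h.exists_right_inv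
    obtain ⟨b, rfl⟩ := Ideal.Quotient.mk_surjective b
    rw [← map_mul, ← map_one (Ideal.Quotient.mk f), eq_comm, Ideal.Quotient.eq] at hb
    exact ⟨a * b, Ideal.mem_span_singleton.2 ⟨b, rfl⟩, _, hb, by ring⟩
  · rintro ⟨i, hi, j, hj, hij⟩
    obtain ⟨b, rfl⟩ := Ideal.mem_span_singleton.1 hi
    refine IsUnit.of_mul_eq_one (Ideal.Quotient.mk f b) ?_
    rw [← map_mul, ← map_one (Ideal.Quotient.mk f), eq_comm, Ideal.Quotient.eq]
    rw [← hij]; simpa using hj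

theorem regF_of_dvd {f : Ideal R} {a b : R} (h : RegF f b) (hab : a ∣ b) : RegF f a :=
  isUnit_of_dvd_unit (map_dvd _ hab) h

theorem regF_pow {f : Ideal R} {a : R} (h : RegF f a) (n : ℕ) : RegF f (a ^ n) := by
  unfold RegF at *; rw [map_pow]; exact h.pow n

theorem regF_ne {O : Subring R} (hne : O ≠ ⊤) {a : R} (h : RegF O.conductor a) : a ≠ 0 := by
  rintro rfl
  rw [RegF, map_zero, isUnit_zero_iff, eq_comm, ← map_one (Ideal.Quotient.mk _),
    Ideal.Quotient.eq_zero_iff_mem] at h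
  apply hne
  rw [eq_top_iff]
  intro r _
  simpa using h r

theorem regF_pow_mem {O : Subring R} (hfin : Finite (R ⧸ O.conductor)) {a : R}
    (h : RegF O.conductor a) : ∃ N : ℕ, 0 < N ∧ a ^ N ∈ O := by
  obtain ⟨u, hu⟩ := h
  refine ⟨orderOf u, orderOf_pos u, ?_⟩
  have h1 : Ideal.Quotient.mk O.conductor (a ^ orderOf u) = Ideal.Quotient.mk O.conductor 1 := by
    rw [map_pow, ← hu, ← Units.val_pow_eq_pow_val, pow_orderOf_eq_one]; simp
  rw [Ideal.Quotient.eq] at h1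
  have h2 := O.add_mem (h1 1) O.one_mem
  simpa using h2

theorem krull_root_s12 {M : Type*} [CommMonoid M] (hM : IsKrullMonoid M) {a b : M} {k : ℕ}
    (hk : 0 < k) (h : a ^ k ∣ b ^ k) : a ∣ b := by
  obtain ⟨ι, d, hd⟩ := hM
  apply hd
  obtain ⟨c, hc⟩ := h
  have h1 := congrArg (fun x => Multiplicative.toAdd (d x)) hc
  simp only [map_pow, map_mul, toAdd_pow, toAdd_mul] at h1
  refine ⟨Multiplicative.ofAdd (Multiplicative.toAdd (d b) - Multiplicative.toAdd (d a)), ?_⟩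
  apply Multiplicative.toAdd.injective
  rw [toAdd_mul, toAdd_ofAdd]
  ext i
  have h2 := DFunLike.congr_fun h1 i
  simp only [Finsupp.smul_apply, Finsupp.add_apply, smul_eq_mul, Finsupp.tsub_apply] at h2 ⊢
  have : Multiplicative.toAdd (d a) i ≤ Multiplicative.toAdd (d b) i := by
    apply Nat.le_of_mul_le_mul_left _ hk
    omega
  omega

theorem H_root {O : Subring R} {H : Submonoid (FractionRing R)} (hH : IsTKOvermonoid O H)
    (hfrac : ∀ r : R, ∃ a b : ↥O, (b : R) ≠ 0 ∧ (b : R) * r = (a : R))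
    {x : FractionRing R} {k : ℕ} (hk : 0 < k) (h : x ^ k ∈ H) : x ∈ H := by
  have hx0 : x ≠ 0 := by
    rintro rfl
    exact hH.nonzero _ h (zero_pow hk.ne')
  obtain ⟨p, q, hq, rfl⟩ := IsFractionRing.div_surjective (A := R) x
  have inj := IsFractionRing.injective R (FractionRing R)
  have hq0 : q ≠ 0 := nonZeroDivisors.ne_zero hq
  have hp0 : p ≠ 0 := by rintro rfl; simp at hx0
  obtain ⟨a, b, hb, hab⟩ := hfrac p
  obtain ⟨a', b', hb', hab'⟩ := hfrac q
  have ha0 : (a : R) ≠ 0 := by rw [← hab]; exact mul_ne_zero hb hp0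
  have ha0' : (a' : R) ≠ 0 := by rw [← hab']; exact mul_ne_zero hb' hq0
  have hu := hH.incl (a * b') (O.mul_mem a.2 b'.2) (mul_ne_zero ha0 hb')
  have hw := hH.incl (b * a') (O.mul_mem b.2 a'.2) (mul_ne_zero hb ha0')
  have hQ : algebraMap R (FractionRing R) q ≠ 0 := by simpa using hq0
  have e : algebraMap R (FractionRing R) (a * b') = algebraMap R (FractionRing R) (b * a') *
      (algebraMap R (FractionRing R) p / algebraMap R (FractionRing R) q) := by
    rw [← hab, ← hab']
    simp only [map_mul]
    field_simp
  have hd : (⟨_, hw⟩ : H) ∣ ⟨_, hu⟩ := by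
    apply krull_root_s12 hH.krull hk
    refine ⟨⟨_, h⟩, ?_⟩
    apply Subtype.ext
    simp only [SubmonoidClass.mk_pow, Submonoid.mk_mul_mk]
    rw [← mul_pow, ← e]
  obtain ⟨y, hy⟩ := hd
  have hy' := congrArg Subtype.val hy
  simp only [Submonoid.coe_mul] at hy'
  rw [e] at hy'
  have hW : algebraMap R (FractionRing R) (b * a') ≠ 0 := by
    exact (map_ne_zero_iff _ inj).2 (mul_ne_zero hb ha0')
  rw [mul_left_cancel₀ hW hy']
  exact y.2

/-- units of the overmonoid, as a subgroup of the units of the field -/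
def HU (H : Submonoid (FractionRing R)) : Subgroup (FractionRing R)ˣ where
  carrier := {u | (u : FractionRing R) ∈ H ∧ ((u⁻¹ : (FractionRing R)ˣ) : FractionRing R) ∈ H}
  mul_mem' := by
    rintro a b ⟨h1, h2⟩ ⟨h3, h4⟩
    refine ⟨by simpa using H.mul_mem h1 h3, ?_⟩
    rw [mul_inv]
    simpa using H.mul_mem h2 h4
  one_mem' := by simp [H.one_mem]
  inv_mem' := by
    rintro a ⟨h1, h2⟩
    exact ⟨h2, by simpa using h1⟩

/-- the quotient group by the units of the overmonoid -/
def HG (H : Submonoid (FractionRing R)) : Type _ := (FractionRing R)ˣ ⧸ HU H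

noncomputable instance (H : Submonoid (FractionRing R)) : CommGroup (HG H) :=
  QuotientGroup.Quotient.commGroup (HU H)

/-- the quotient map -/
noncomputable def hmk (H : Submonoid (FractionRing R)) : (FractionRing R)ˣ →* HG H :=
  QuotientGroup.mk' (HU H)

theorem hmk_eq {H : Submonoid (FractionRing R)} {x y : (FractionRing R)ˣ} :
    hmk H x = hmk H y ↔ x⁻¹ * y ∈ HU H := QuotientGroup.eq

theorem hmk_surj (H : Submonoid (FractionRing R)) : Function.Surjective (hmk H) :=
  QuotientGroup.mk'_surjective (HU H)

open Classical in
/-- class of a nonzero element modulo units of the overmonoid -/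
noncomputable def mkR (H : Submonoid (FractionRing R)) (a : R) : HG H :=
  if h : algebraMap R (FractionRing R) a ≠ 0 then (hmk H) (Units.mk0 _ h) else 1

theorem algne {a : R} (h : a ≠ 0) : algebraMap R (FractionRing R) a ≠ 0 := by simpa using h

theorem mkR_of {H : Submonoid (FractionRing R)} {a : R} (h : a ≠ 0) :
    mkR H a = (hmk H) (Units.mk0 _ (algne h)) := by
  rw [mkR, dif_pos]

theorem mkR_mul {H : Submonoid (FractionRing R)} {a b : R} (ha : a ≠ 0) (hb : b ≠ 0) :
    mkR H (a * b) = mkR H a * mkR H b := by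
  rw [mkR_of ha, mkR_of hb, mkR_of (mul_ne_zero ha hb), ← map_mul]
  congr 1
  ext; simp

theorem mkR_pow {H : Submonoid (FractionRing R)} {a : R} (ha : a ≠ 0) (n : ℕ) :
    mkR H (a ^ n) = mkR H a ^ n := by
  rw [mkR_of ha, mkR_of (pow_ne_zero n ha), ← map_pow]
  congr 1
  ext; simp

theorem assocIn_iff {H : Submonoid (FractionRing R)} {x y : (FractionRing R)ˣ} :
    AssocIn H (x : FractionRing R) y ↔
      hmk H x = hmk H y := by
  rw [eq_comm, hmk_eq]
  constructor
  · rintro ⟨ε, h1, ⟨ε', h2, h3⟩, h4⟩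
    have e1 : ((y⁻¹ * x : (FractionRing R)ˣ) : FractionRing R) = ε := by
      simp [h4]
    refine ⟨e1 ▸ h1, ?_⟩
    have e2 : (((y⁻¹ * x)⁻¹ : (FractionRing R)ˣ) : FractionRing R) = ε' := by
      rw [Units.inv_eq_of_mul_eq_one_right]
      rw [e1, h3]
    exact e2 ▸ h2
  · rintro ⟨h1, h2⟩
    exact ⟨_, h1, ⟨_, h2, Units.mul_inv _⟩, by simp⟩

theorem assocIn_mkR {H : Submonoid (FractionRing R)} {a b : R} (ha : a ≠ 0) (hb : b ≠ 0) :
    AssocIn H (algebraMap R (FractionRing R) a) (algebraMap R (FractionRing R) b) ↔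
      mkR H a = mkR H b := by
  rw [mkR_of ha, mkR_of hb, ← assocIn_iff]; simp

theorem mem_of_mk_eq {H : Submonoid (FractionRing R)} {x y : (FractionRing R)ˣ}
    (h : hmk H x = hmk H y)
    (hy : (y : FractionRing R) ∈ H) : (x : FractionRing R) ∈ H := by
  obtain ⟨ε, h1, -, h4⟩ := assocIn_iff.2 h
  rw [h4]; exact H.mul_mem hy h1

theorem reg_mem {O : Subring R} {H : Submonoid (FractionRing R)} (hH : IsTKOvermonoid O H)
    (hfrac : ∀ r : R, ∃ a b : ↥O, (b : R) ≠ 0 ∧ (b : R) * r = (a : R))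
    (hne : O ≠ ⊤) (hfin : Finite (R ⧸ O.conductor)) {a : R}
    (h : RegF O.conductor a) : algebraMap R (FractionRing R) a ∈ H := by
  obtain ⟨N, hN, h1⟩ := regF_pow_mem hfin h
  apply H_root hH hfrac hN
  rw [← map_pow]
  exact hH.incl _ h1 (pow_ne_zero _ (regF_ne hne h))

theorem mkR_unit {O : Subring R} {H : Submonoid (FractionRing R)} (hH : IsTKOvermonoid O H)
    (hfrac : ∀ r : R, ∃ a b : ↥O, (b : R) ≠ 0 ∧ (b : R) * r = (a : R))
    (hne : O ≠ ⊤) (hfin : Finite (R ⧸ O.conductor)) (u : Rˣ) : mkR H (u : R) = 1 := by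
  have h1 : mkR H (1 : R) = 1 := by
    rw [mkR_of one_ne_zero, ← map_one (hmk H)]
    congr 1
    ext; simp
  rw [← h1, ← assocIn_mkR u.ne_zero one_ne_zero]
  have hr : ∀ v : Rˣ, RegF O.conductor (v : R) := fun v => v.isUnit.map _
  refine ⟨_, reg_mem hH hfrac hne hfin (hr u), ⟨_, reg_mem hH hfrac hne hfin (hr u⁻¹), ?_⟩, ?_⟩
  · rw [← map_mul]; simp
  · simp

theorem mkR_assoc {O : Subring R} {H : Submonoid (FractionRing R)} (hH : IsTKOvermonoid O H)
    (hfrac : ∀ r : R, ∃ a b : ↥O, (b : R) ≠ 0 ∧ (b : R) * r = (a : R))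
    (hne : O ≠ ⊤) (hfin : Finite (R ⧸ O.conductor)) {a b : R} (ha : a ≠ 0)
    (h : Associated a b) : mkR H a = mkR H b := by
  obtain ⟨u, rfl⟩ := h
  rw [mkR_mul ha u.ne_zero, mkR_unit hH hfrac hne hfin, mul_one]

theorem t2_list {O : Subring R} {H : Submonoid (FractionRing R)} (hH : IsTKOvermonoid O H)
    (L : List (FractionRing R)ˣ) : ∀ c : R, c ∈ O → c ≠ 0 →
    (∀ x ∈ L, (x : FractionRing R) ∈ H) → mkR H c = ((hmk H) L.prod) →
    ∃ L' : List R, (∀ v ∈ L', v ≠ 0) ∧ Associated c L'.prod ∧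
      L'.map (mkR H) = L.map (hmk H) := by
  induction L with
  | nil =>
    intro c hc h0 _ h
    rw [List.prod_nil, mkR_of h0, ← assocIn_iff] at h
    obtain ⟨ε, h1, ⟨ε', h2, h3⟩, h4⟩ := h
    simp only [Units.val_mk0, Units.val_one, one_mul] at h4
    obtain ⟨b, -, hb⟩ := hH.t1' c hc h0 ⟨ε', h2, by rw [h4, h3]⟩
    exact ⟨[], by simp, by simpa using associated_one_iff_isUnit.2 (IsUnit.of_mul_eq_one b hb),
      by simp⟩
  | cons x L ih =>
    intro c hc h0 hL h
    rw [mkR_of h0, ← assocIn_iff] at h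
    obtain ⟨ε, h1, ⟨ε', h2, h3⟩, h4⟩ := h
    have hLm : ∀ A : List (FractionRing R)ˣ, (∀ x ∈ A, (x : FractionRing R) ∈ H) →
        ((A.prod : (FractionRing R)ˣ) : FractionRing R) ∈ H := by
      intro A
      induction A with
      | nil => intro _; simp [H.one_mem]
      | cons y A ihA =>
        intro hA
        rw [List.prod_cons, Units.val_mul]
        exact H.mul_mem (hA y (by simp)) (ihA (fun z hz => hA z (by simp [hz])))
    have hL' : ∀ y ∈ L, (y : FractionRing R) ∈ H := fun y hy => hL y (by simp [hy])
    rw [List.prod_cons, Units.val_mul, Units.val_mk0, mul_assoc] at h4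
    obtain ⟨v, w, hv, hw, hvw, hv1, hw1⟩ := hH.t2 c hc h0 _ (hL x (by simp)) _
      (H.mul_mem (hLm L hL') h1) h4
    subst hvw
    have hv0 : v ≠ 0 := left_ne_zero_of_mul h0
    have hw0 : w ≠ 0 := right_ne_zero_of_mul h0
    have hw2 : mkR H w = (hmk H) L.prod := by
      rw [mkR_of hw0, ← assocIn_iff]
      obtain ⟨δ, g1, ⟨δ', g2, g3⟩, g4⟩ := hw1
      refine ⟨ε * δ, H.mul_mem h1 g1, ⟨ε' * δ', H.mul_mem h2 g2, ?_⟩, ?_⟩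
      · rw [mul_mul_mul_comm, h3, g3, one_mul]
      · rw [Units.val_mk0, g4, mul_assoc]
    obtain ⟨L', k1, k2, k3⟩ := ih w hw hw0 hL' hw2
    refine ⟨v :: L', by simpa using ⟨hv0, k1⟩, ?_, ?_⟩
    · rw [List.prod_cons]; exact k2.mul_left v
    · rw [List.map_cons, List.map_cons, k3, mkR_of hv0]
      congr 1
      rw [← assocIn_iff]
      simpa using hv1

/-- primes coprime to the conductor -/
abbrev PX (f : Ideal R) : Type _ := {P : Ideal R // P.IsPrime ∧ P ≠ ⊥ ∧ ¬ f ≤ P}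

/-- ideal class of such a prime -/
noncomputable def pcls (f : Ideal R) (P : PX f) : ClassGroup R :=
  ClassGroup.mk0 ⟨P.1, mem_nonZeroDivisors_of_ne_zero P.2.2.1⟩

/-- the product ideal -/
def pI {f : Ideal R} (s : Multiset (PX f)) : Ideal R := (s.map Subtype.val).prod

theorem pI_add {f : Ideal R} (s t : Multiset (PX f)) : pI (s + t) = pI s * pI t := by
  simp [pI]

theorem pI_nsmul {f : Ideal R} (n : ℕ) (s : Multiset (PX f)) : pI (n • s) = pI s ^ n := by
  simp [pI, Multiset.map_nsmul, Multiset.prod_nsmul]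

theorem pI_nf {f : Ideal R} (s : Multiset (PX f)) :
    UniqueFactorizationMonoid.normalizedFactors (pI s) = s.map Subtype.val := by
  apply UniqueFactorizationMonoid.normalizedFactors_prod_of_prime
  intro P hP
  obtain ⟨Q, -, rfl⟩ := Multiset.mem_map.1 hP
  exact Ideal.prime_of_isPrime Q.2.2.1 Q.2.1

theorem pI_inj {f : Ideal R} {s t : Multiset (PX f)} (h : pI s = pI t) : s = t := by
  have := congrArg UniqueFactorizationMonoid.normalizedFactors h
  rw [pI_nf, pI_nf] at this
  exact Multiset.map_injective Subtype.val_injective this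

theorem pI_spec {f : Ideal R} (s : Multiset (PX f)) : IsCoprime (pI s) f ∧
    ∃ h : pI s ∈ (Ideal R)⁰, ClassGroup.mk0 ⟨pI s, h⟩ = (s.map (pcls f)).prod := by
  induction s using Multiset.induction_on with
  | empty =>
    have e0 : pI (0 : Multiset (PX f)) = 1 := by rw [pI, Multiset.map_zero, Multiset.prod_zero]
    refine ⟨by rw [e0]; exact isCoprime_one_left, by rw [e0]; exact one_mem _, ?_⟩
    rw [Multiset.map_zero, Multiset.prod_zero, ← map_one ClassGroup.mk0]
    congr 1
  | cons P s ih =>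
    obtain ⟨h1, h2, h3⟩ := ih
    have e : pI (P ::ₘ s) = P.1 * pI s := by simp [pI]
    have hP := mem_nonZeroDivisors_of_ne_zero P.2.2.1
    refine ⟨?_, ?_, ?_⟩
    · rw [e]
      refine IsCoprime.mul_left ?_ h1
      have hm : P.1.IsMaximal := P.2.1.isMaximal P.2.2.1
      rw [Ideal.isCoprime_iff_sup_eq]
      exact hm.1.2 _ (lt_of_le_of_ne le_sup_left (fun h => P.2.2.2 (h ▸ le_sup_right)))
    · rw [e]; exact mul_mem hP h2
    · rw [Multiset.map_cons, Multiset.prod_cons, ← h3, pcls, ← map_mul]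
      congr 1
      exact Subtype.ext e

theorem pI_good {f : Ideal R} (s : Multiset (PX f)) :
    BGood (pcls f) s ↔ ∃ z : R, z ≠ 0 ∧ pI s = Ideal.span {z} := by
  obtain ⟨-, h, h1⟩ := pI_spec s
  rw [BGood, ← h1, ClassGroup.mk0_eq_one_iff]
  constructor
  · rintro ⟨z, hz⟩
    refine ⟨z, ?_, hz⟩
    rintro rfl
    have h0 : pI s = 0 := by simpa using hz
    exact nonZeroDivisors.ne_zero h h0
  · rintro ⟨z, -, hz⟩
    exact ⟨z, hz⟩

theorem exists_w {f : Ideal R} {a : R} (ha : a ≠ 0) (h : RegF f a) :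
    ∃ s : Multiset (PX f), pI s = Ideal.span {a} := by
  classical
  have hI : Ideal.span {a} ≠ ⊥ := by simpa using ha
  have hp : ∀ P ∈ UniqueFactorizationMonoid.normalizedFactors (Ideal.span {a}),
      P.IsPrime ∧ P ≠ ⊥ ∧ ¬ f ≤ P := by
    intro P hP
    have h1 := UniqueFactorizationMonoid.prime_of_normalized_factor P hP
    have h2 := UniqueFactorizationMonoid.dvd_of_mem_normalizedFactors hP
    have h3 := Ideal.isPrime_of_prime h1
    refine ⟨h3, h1.ne_zero, fun hf => h3.ne_top ?_⟩
    rw [regF_iff, Ideal.isCoprime_iff_sup_eq] at h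
    rw [eq_top_iff, ← h]
    exact sup_le (Ideal.dvd_iff_le.1 h2) hf
  refine ⟨(UniqueFactorizationMonoid.normalizedFactors (Ideal.span {a})).pmap Subtype.mk hp, ?_⟩
  rw [pI, Multiset.map_pmap, Multiset.pmap_eq_map, Multiset.map_id']
  exact Ideal.prod_normalizedFactors_eq_self hI

theorem exists_gen_s12 {f : Ideal R} (s : Multiset (PX f)) :
    ∃ z : R, z ≠ 0 ∧ (BGood (pcls f) s → pI s = Ideal.span {z}) := by
  by_cases h : BGood (pcls f) s
  · obtain ⟨z, h0, h1⟩ := (pI_good s).1 h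
    exact ⟨z, h0, fun _ => h1⟩
  · exact ⟨1, one_ne_zero, fun h' => absurd h' h⟩

theorem blockOf_eq {f : Ideal R} {a : R} {s : Multiset (PX f)} (h : pI s = Ideal.span {a}) :
    blockOf a = s.map (pcls f) := by
  rw [blockOf, ← h, pI_nf, Multiset.map_map]
  apply Multiset.map_congr rfl
  intro P _
  rw [Function.comp_apply, dif_pos (mem_nonZeroDivisors_of_ne_zero P.2.2.1), pcls]

theorem list_pI {f : Ideal R} (w : R → Multiset (PX f)) (L : List R)
    (h : ∀ v ∈ L, pI (w v) = Ideal.span {v}) :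
    pI (L.map w).sum = Ideal.span {L.prod} := by
  induction L with
  | nil => simp [pI]
  | cons x L ih =>
    rw [List.map_cons, List.sum_cons, pI_add, ih (fun v hv => h v (by simp [hv])),
      h x (by simp), Ideal.span_singleton_mul_span_singleton, List.prod_cons]

end Conc

theorem block_eq_of_assoc
    {R : Type*} [CommRing R] [IsDomain R] [IsDedekindDomain R]
    (O : Subring R) (hne : O ≠ ⊤) (hfg : Module.Finite ↥O R)
    (hfrac : ∀ r : R, ∃ a b : ↥O, (b : R) ≠ 0 ∧ (b : R) * r = (a : R))
    (htor : ∀ c : ClassGroup R, ∃ n : ℕ, 0 < n ∧ c ^ n = 1)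
    (hfin : Finite (R ⧸ O.conductor))
    (hcls : ∀ c : ClassGroup R, ∃ (P : Ideal R) (hP : P ∈ (Ideal R)⁰),
      P.IsPrime ∧ ¬ O.conductor ≤ P ∧ ClassGroup.mk0 ⟨P, hP⟩ = c)
    (H : Submonoid (FractionRing R)) (hH : IsTKOvermonoid O H)
    (hcard : Nat.card (ClassGroup R) ≠ 2)
    (a b : R) (hrega : RegF O.conductor a) (hregb : RegF O.conductor b)
    (hassoc : AssocIn H (algebraMap R (FractionRing R) a)
      (algebraMap R (FractionRing R) b)) :
    blockOf a = blockOf b := by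
  have ha0 := regF_ne hne hrega
  have hb0 := regF_ne hne hregb
  rw [assocIn_mkR ha0 hb0] at hassoc
  choose gen gen0 hgen using fun s : Multiset (PX O.conductor) => exists_gen_s12 s
  have hgenr : ∀ s, BGood (pcls O.conductor) s → RegF O.conductor (gen s) := by
    intro s hs
    rw [regF_iff, ← hgen s hs]
    exact (pI_spec s).1
  have hθ : ∀ s, ∀ z : R, z ≠ 0 → pI s = Ideal.span {z} → mkR H (gen s) = mkR H z := by
    intro s z h0 hz
    have hs := (pI_good s).2 ⟨z, h0, hz⟩
    apply mkR_assoc hH hfrac hne hfin (gen0 s)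
    rw [← Ideal.span_singleton_eq_span_singleton, ← hz, hgen s hs]
  have hw : ∀ v : R, ∃ s : Multiset (PX O.conductor), v ≠ 0 → RegF O.conductor v →
      pI s = Ideal.span {v} := by
    intro v
    by_cases h : v ≠ 0 ∧ RegF O.conductor v
    · obtain ⟨s, hs⟩ := exists_w h.1 h.2
      exact ⟨s, fun _ _ => hs⟩
    · exact ⟨0, fun h1 h2 => absurd ⟨h1, h2⟩ h⟩
  choose w hw using hw
  have D : BData (PX O.conductor) (ClassGroup R) (HG H) (pcls O.conductor)
      (fun s => mkR H (gen s)) := by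
    refine ⟨?_, ?_, ?_, ?_, hcard⟩
    · intro s t hs ht
      rw [← mkR_mul (gen0 s) (gen0 t)]
      apply hθ _ _ (mul_ne_zero (gen0 s) (gen0 t))
      rw [pI_add, hgen s hs, hgen t ht, Ideal.span_singleton_mul_span_singleton]
    · intro s hs L hL hsL
      obtain ⟨L0, rfl⟩ : ∃ L0 : List (FractionRing R)ˣ, L0.map (hmk H) = L :=
        List.map_surjective_iff.2 (hmk_surj H) L
      have hL0 : ∀ x ∈ L0, (x : FractionRing R) ∈ H := by
        intro x hx
        obtain ⟨k, hk, c, hc, hxc⟩ := hL _ (List.mem_map_of_mem hx)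
        apply H_root hH hfrac hk
        rw [mkR_of (gen0 c), ← map_pow] at hxc
        rw [← Units.val_pow_eq_pow_val]
        refine mem_of_mk_eq hxc ?_
        exact reg_mem hH hfrac hne hfin (hgenr c hc)
      obtain ⟨N, hN, hNO⟩ := regF_pow_mem hfin (hgenr s hs)
      obtain ⟨L', h1, h2, h3⟩ := t2_list hH (List.replicate N L0).flatten (gen s ^ N) hNO
        (pow_ne_zero _ (gen0 s))
        (by
          intro x hx
          obtain ⟨l, hl, hxl⟩ := List.mem_flatten.1 hx
          rw [List.eq_of_mem_replicate hl] at hxl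
          exact hL0 x hxl)
        (by
          have e : hmk H L0.prod =
              (L0.map (hmk H)).prod := map_list_prod (hmk H) L0
          rw [mkR_pow (gen0 s), hsL, ← e, ← map_pow]
          simp [List.prod_flatten])
      have hreg : ∀ v ∈ L', RegF O.conductor v := fun v hv =>
        regF_of_dvd (regF_pow (hgenr s hs) N) ((List.dvd_prod hv).trans h2.symm.dvd)
      have hwv : ∀ v ∈ L', pI (w v) = Ideal.span {v} := fun v hv => hw v (h1 v hv) (hreg v hv)
      refine ⟨N, hN, L'.map w, ?_, ?_, ?_⟩
      · intro t ht
        obtain ⟨v, hv, rfl⟩ := List.mem_map.1 ht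
        exact (pI_good _).2 ⟨v, h1 v hv, hwv v hv⟩
      · apply pI_inj
        rw [list_pI w L' hwv, pI_nsmul, hgen s hs, Ideal.span_singleton_pow,
          Ideal.span_singleton_eq_span_singleton]
        exact h2
      · rw [List.map_map]
        have e2 : L'.map ((fun s => mkR H (gen s)) ∘ w) = L'.map (mkR H) := by
          apply List.map_congr_left
          intro v hv
          exact hθ _ _ (h1 v hv) (hwv v hv)
        rw [e2, h3, List.map_flatten, List.map_replicate]
    · intro c
      obtain ⟨P, hP, h1, h2, h3⟩ := hcls c
      exact ⟨⟨P, h1, nonZeroDivisors.ne_zero hP, h2⟩, h3⟩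
    · intro g
      obtain ⟨n, hn, h⟩ := htor g
      exact orderOf_pos_iff.2 (isOfFinOrder_iff_pow_eq_one.2 ⟨n, hn, h⟩)
  have ga := hw a ha0 hrega
  have gb := hw b hb0 hregb
  rw [blockOf_eq ga, blockOf_eq gb]
  apply D.main ((pI_good _).2 ⟨a, ha0, ga⟩) ((pI_good _).2 ⟨b, hb0, gb⟩)
  rw [hθ _ _ ha0 ga, hθ _ _ hb0 gb, hassoc]
end
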